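/- arXiv:2401.06555 — 2 statements merged into one kernel-verified Lean document; each statement's English description precedes it below -/
import Mathlib

section
/- Let c be a negative integer. The equation L_n − 2^x · 3^y = c has at least three pairwise distinct solutions (n, x, y) in nonnegative integers if and only if c ∈ {−133, −97, −61, −52, −25, −21, −20, −17, −14, −9, −7, −6, −5, −3, −2, −1}. -/
/-- The Lucas sequence: L 0 = 2, L 1 = 1, L (n+2) = L (n+1) + L n. -/
def lucas : ℕ → ℤ
  | 0 => 2
  | 1 => 1
  | n + 2 => lucas (n + 1) + lucas n

/-!
Write `c = -C`, so that a solution is an index `n` with `L_n + C = 2 ^ x * 3 ^ y`. If two indices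
`m < n` have the same parity, then `L_n - L_m` divides a product of two Fibonacci numbers and `5`;
as the powers of `2` and `3` dividing `F_k` are at most `4 k` and `3 k`, the smaller of the two
powers of `2` is at most `16 n ^ 2`, and likewise for `3` with `9 n ^ 2`. Three solutions of one
parity thus force `C ≤ 144 n ^ 4`, where `n` is the largest index. Two solutions of different
parities force `C ≤ 15552`, because a search modulo suitable integers finds no larger common
residue of `C`.

Hence `2 ^ x * 3 ^ y` is so close to `L_n` that `|x log 2 + y log 3 - n log φ| ≤ exp (-n / 4)`.
Baker's method shows that this is impossible for large `n`: an auxiliary polynomial in `2 ^ z`,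
`3 ^ z`, `φ ^ z` built by Siegel's lemma would, by the Schwarz lemma and Liouville's inequality,
have more and more zeros until a Vandermonde determinant forces it to vanish identically. The bound
obtained in this way, about `10 ^ 216`, is lowered to `n < 112` by simultaneous approximations to
`log φ / log 2` and `log 3 / log 2`, and the remaining indices are checked.
-/

namespace LucasPillai

theorem lucas_eq_fib (n : ℕ) : lucas n = 2 * Nat.fib (n + 1) - Nat.fib n := by
  induction n using Nat.twoStepInduction with
  | zero => decide
  | one => decide
  | more n ih₀ ih₁ =>
    rw [lucas, ih₀, ih₁, Nat.fib_add_two (n := n + 1), Nat.fib_add_two (n := n)]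
    push_cast
    ring

section Fibonacci

theorem fib_add_eq (m n : ℕ) :
    (Nat.fib (m + n) : ℤ) =
      Nat.fib m * (Nat.fib (n + 1) - Nat.fib n) + Nat.fib (m + 1) * Nat.fib n := by
  cases m with
  | zero => simp
  | succ m =>
    rw [Nat.add_right_comm, Nat.fib_add, Nat.fib_add_two]
    push_cast
    ring

theorem cassini (n : ℕ) :
    (Nat.fib (n + 1) : ℤ) ^ 2 - Nat.fib (n + 1) * Nat.fib n - (Nat.fib n : ℤ) ^ 2 = (-1) ^ n := by
  induction n with
  | zero => norm_num
  | succ n ih =>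
    rw [Nat.fib_add_two, pow_succ (-1), ← ih]
    push_cast
    ring

theorem lucas_add_two (n : ℕ) : lucas (n + 2) = lucas (n + 1) + lucas n :=
  rfl

theorem lucas_sq (n : ℕ) : lucas n ^ 2 = 5 * Nat.fib n ^ 2 + 4 * (-1) ^ n := by
  rw [lucas_eq_fib, ← cassini]
  ring

theorem fib_two_mul_eq_mul_lucas (n : ℕ) : (Nat.fib (2 * n) : ℤ) = Nat.fib n * lucas n := by
  rw [lucas_eq_fib, two_mul, fib_add_eq]
  ring

theorem fib_three_mul (n : ℕ) :
    (Nat.fib (3 * n) : ℤ) = Nat.fib n * (5 * Nat.fib n ^ 2 + 3 * (-1) ^ n) := by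
  rw [show 3 * n = 2 * n + n by ring, fib_add_eq, fib_two_mul_eq_mul_lucas,
    Nat.fib_two_mul_add_one, lucas_eq_fib, ← cassini]
  push_cast
  ring

theorem lucas_add (m n : ℕ) :
    lucas (m + n) = lucas m * (Nat.fib (n + 1) - Nat.fib n) + lucas (m + 1) * Nat.fib n := by
  induction m using Nat.twoStepInduction with
  | zero => simp only [lucas_eq_fib]; norm_num; ring
  | one => simp only [lucas_eq_fib, Nat.add_comm 1, Nat.fib_add_two]; norm_num; ring
  | more m ih₀ ih₁ =>
    rw [Nat.add_right_comm, lucas_add_two, Nat.add_right_comm, ih₀, ih₁, lucas_add_two (m + 1),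
      lucas_add_two m]
    ring

theorem lucas_add_two_mul_sub (m n : ℕ) :
    lucas (m + 2 * n) - (-1) ^ n * lucas m = 5 * Nat.fib (m + n) * Nat.fib n := by
  rw [show m + 2 * n = m + n + n by ring, lucas_add (m + n), lucas_add m,
    Nat.add_right_comm m n 1, lucas_add (m + 1), lucas_add_two, fib_add_eq m, ← cassini]
  simp only [lucas_eq_fib, Nat.fib_add_two]
  push_cast
  ring

theorem lucas_add_two_mul_add (m n : ℕ) :
    lucas (m + 2 * n) + (-1) ^ n * lucas m = lucas (m + n) * lucas n := by
  rw [show m + 2 * n = m + n + n by ring, lucas_add (m + n), lucas_add m,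
    Nat.add_right_comm m n 1, lucas_add (m + 1), lucas_add_two, lucas_eq_fib n, ← cassini]
  ring

theorem lucas_add_two_mul_sub_dvd (m n : ℕ) :
    lucas (m + 2 * n) - lucas m ∣ 5 * (Nat.fib (2 * (m + n)) * Nat.fib (2 * n)) := by
  rw [fib_two_mul_eq_mul_lucas, fib_two_mul_eq_mul_lucas]
  rcases Nat.even_or_odd n with hn | hn
  · have h := lucas_add_two_mul_sub m n
    rw [hn.neg_one_pow, one_mul] at h
    exact h ▸ ⟨lucas (m + n) * lucas n, by ring⟩
  · have h := lucas_add_two_mul_add m n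
    rw [hn.neg_one_pow, neg_one_mul, ← sub_eq_add_neg] at h
    exact h ▸ ⟨5 * Nat.fib (m + n) * Nat.fib n, by ring⟩

theorem not_four_dvd_lucas {n : ℕ} (hn : Even n) : ¬ 4 ∣ lucas n := by
  rintro ⟨l, hl⟩
  have h := lucas_sq n
  rw [hl, hn.neg_one_pow] at h
  rcases Int.even_or_odd' (Nat.fib n) with ⟨f, hf | hf⟩
  · rcases Int.even_or_odd' f with ⟨g, rfl | rfl⟩ <;> rw [hf] at h <;> ring_nf at h <;> omega
  · rw [hf] at h
    ring_nf at h
    omega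

theorem lucas_pos (n : ℕ) : 0 < lucas n := by
  have h₀ : 0 < Nat.fib (n + 1) := Nat.fib_pos.2 n.succ_pos
  have h₁ := Nat.fib_le_fib_succ (n := n)
  rw [lucas_eq_fib]
  omega

theorem lucas_lt_lucas {m n : ℕ} (hn : 2 ≤ n) (hmn : m < n) : lucas m < lucas n := by
  induction n, hn using Nat.le_induction with
  | base => interval_cases m <;> decide
  | succ n hn ih =>
    obtain ⟨n, rfl⟩ := Nat.exists_eq_add_of_le' hn
    have := lucas_pos (n + 1)
    rw [show n + 2 + 1 = n + 1 + 2 from rfl, lucas_add_two]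
    rcases Nat.lt_succ_iff_lt_or_eq.1 hmn with h | rfl
    · exact (ih h).trans (lt_add_of_pos_right _ this)
    · exact lt_add_of_pos_right _ this

theorem lucas_injective : Function.Injective lucas := by
  refine Function.Injective.of_lt_imp_ne fun m n hmn ↦ ?_
  rcases Nat.lt_or_ge n 2 with hn | hn
  · interval_cases n
    · omega
    · obtain rfl : m = 0 := by omega
      decide
  · exact (lucas_lt_lucas hn hmn).ne

end Fibonacci

section Divisibility

theorem two_pow_mul_three_pow_inj {x y u v : ℕ} (h : 2 ^ x * 3 ^ y = 2 ^ u * 3 ^ v) :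
    x = u ∧ y = v := by
  have hx : x = u := by
    simpa [Nat.factorization_mul, Nat.prime_two.factorization, Nat.prime_three.factorization]
      using congrArg (·.factorization 2) h
  subst hx
  exact ⟨rfl, Nat.pow_right_injective (by decide : 2 ≤ 3)
    (Nat.eq_of_mul_eq_mul_left (by positivity) h)⟩

theorem dvd_of_dvd_fib {M T m : ℕ} (hT : T ≠ 0) (hMT : M ∣ Nat.fib T)
    (hmin : ∀ d ∈ T.divisors, M ∣ Nat.fib d → d = T) (hm : M ∣ Nat.fib m) : T ∣ m := by
  have h := Nat.dvd_gcd hm hMT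
  rw [← Nat.fib_gcd] at h
  rw [← hmin _ (Nat.mem_divisors.2 ⟨Nat.gcd_dvd_right m T, hT⟩) h]
  exact Nat.gcd_dvd_left m T

theorem exists_pow_dvd_of_pow_dvd_mul {p a m n : ℕ} (hp : p.Prime) (h : p ^ a ∣ m * n) :
    ∃ s t, s + t = a ∧ p ^ s ∣ m ∧ p ^ t ∣ n := by
  obtain ⟨k, l, hk, hl, hkl⟩ := Nat.dvd_mul.1 h
  obtain ⟨s, -, rfl⟩ := (Nat.dvd_prime_pow hp).1 (Dvd.intro _ hkl)
  obtain ⟨t, -, rfl⟩ := (Nat.dvd_prime_pow hp).1 (Dvd.intro_left _ hkl)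
  exact ⟨s, t, Nat.pow_right_injective hp.two_le ((pow_add p s t).trans hkl), hk, hl⟩

theorem two_pow_dvd_four_mul_of_dvd_fib {a m : ℕ} (h : 2 ^ a ∣ Nat.fib m) : 2 ^ a ∣ 4 * m := by
  induction a generalizing m with
  | zero => simp
  | succ a ih =>
    rcases Nat.lt_or_ge a 3 with ha | ha
    · interval_cases a
      · omega
      · omega
      · have : 6 ∣ m := dvd_of_dvd_fib (by decide) (by decide) (by decide) h
        omega
    have h16 : 16 ∣ Nat.fib m := (pow_dvd_pow 2 (by omega : 4 ≤ a + 1)).trans h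
    obtain ⟨k, rfl⟩ : 12 ∣ m := dvd_of_dvd_fib (by decide) (by decide) (by decide) h16
    have hfib : Nat.fib (12 * k) = Nat.fib (6 * k) * (lucas (6 * k)).natAbs := by
      have := fib_two_mul_eq_mul_lucas (6 * k)
      rw [← Nat.mul_assoc] at this
      simpa only [Int.natAbs_natCast, Int.natAbs_mul] using congrArg Int.natAbs this
    rw [hfib] at h
    obtain ⟨s, t, hst, hs, ht⟩ := exists_pow_dvd_of_pow_dvd_mul Nat.prime_two h
    have ht2 : t < 2 := by
      by_contra! h2
      exact not_four_dvd_lucas (n := 6 * k) ⟨3 * k, by ring⟩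
        (Int.natCast_dvd.2 ((pow_dvd_pow 2 h2).trans ht))
    have := ih ((pow_dvd_pow 2 (by omega : a ≤ s)).trans hs)
    rw [pow_succ, show 4 * (12 * k) = 4 * (6 * k) * 2 by ring]
    exact mul_dvd_mul_right this 2

theorem three_pow_dvd_three_mul_of_dvd_fib {a m : ℕ} (h : 3 ^ a ∣ Nat.fib m) :
    3 ^ a ∣ 3 * m := by
  induction a generalizing m with
  | zero => simp
  | succ a ih =>
    rcases Nat.eq_zero_or_pos a with rfl | ha
    · exact Dvd.intro m rfl
    have h9 : 9 ∣ Nat.fib m := (pow_dvd_pow 3 (by omega : 2 ≤ a + 1)).trans h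
    obtain ⟨k, rfl⟩ : 12 ∣ m := dvd_of_dvd_fib (by decide) (by decide) (by decide) h9
    obtain ⟨g, hg⟩ : 3 ∣ Nat.fib (4 * k) := Nat.fib_dvd 4 _ (Nat.dvd_mul_right 4 k)
    have hfib : Nat.fib (12 * k) = 3 * (Nat.fib (4 * k) * (15 * g ^ 2 + 1)) := by
      have := fib_three_mul (4 * k)
      rw [← Nat.mul_assoc, Even.neg_one_pow ⟨2 * k, by ring⟩, hg] at this
      rw [hg]
      zify
      rw [this]
      push_cast
      ring
    rw [hfib, pow_succ', Nat.mul_dvd_mul_iff_left three_pos] at h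
    have hco : Nat.Coprime (3 ^ a) (15 * g ^ 2 + 1) :=
      Nat.Coprime.pow_left _ ((Nat.Prime.coprime_iff_not_dvd Nat.prime_three).2 (by omega))
    rw [pow_succ', show 3 * (12 * k) = 3 * (3 * (4 * k)) by ring]
    exact mul_dvd_mul_left 3 (ih (hco.dvd_of_dvd_mul_right h))

theorem prime_pow_le_of_dvd_lucas_sub {p a c m n : ℕ} (hp : p.Prime) (hp5 : p ≠ 5)
    (hfib : ∀ {a m : ℕ}, p ^ a ∣ Nat.fib m → p ^ a ∣ c * m) (hc : 0 < c) (hmn : m < n)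
    (hpar : m % 2 = n % 2) (h : (p : ℤ) ^ a ∣ lucas n - lucas m) : p ^ a ≤ c ^ 2 * n ^ 2 := by
  obtain ⟨k, rfl⟩ : ∃ k, n = m + 2 * k := ⟨(n - m) / 2, by omega⟩
  have hco : Nat.Coprime (p ^ a) 5 :=
    Nat.Coprime.pow_left _ ((Nat.coprime_primes hp Nat.prime_five).2 hp5)
  have hdvd : p ^ a ∣ Nat.fib (2 * (m + k)) * Nat.fib (2 * k) :=
    hco.dvd_of_dvd_mul_left (by exact_mod_cast h.trans (lucas_add_two_mul_sub_dvd m k))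
  obtain ⟨s, t, rfl, hs, ht⟩ := exists_pow_dvd_of_pow_dvd_mul hp hdvd
  calc p ^ (s + t) = p ^ s * p ^ t := pow_add p s t
    _ ≤ c * (2 * (m + k)) * (c * (2 * k)) :=
        Nat.mul_le_mul (Nat.le_of_dvd (Nat.mul_pos hc (by omega)) (hfib hs))
          (Nat.le_of_dvd (Nat.mul_pos hc (by omega)) (hfib ht))
    _ = c ^ 2 * ((2 * m + 2 * k) * (2 * k)) := by ring
    _ ≤ c ^ 2 * (m + 2 * k) ^ 2 := Nat.mul_le_mul_left _ (by nlinarith)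

theorem prime_pow_le_or_prime_pow_le {p c C m n x u : ℕ} {y v : ℤ} (hp : p.Prime) (hp5 : p ≠ 5)
    (hfib : ∀ {a m : ℕ}, p ^ a ∣ Nat.fib m → p ^ a ∣ c * m) (hc : 0 < c) (hmn : m < n)
    (hpar : m % 2 = n % 2) (hm : lucas m + C = p ^ x * y) (hn : lucas n + C = p ^ u * v) :
    p ^ x ≤ c ^ 2 * n ^ 2 ∨ p ^ u ≤ c ^ 2 * n ^ 2 := by
  have hle (a : ℕ) (hx : a ≤ x) (hu : a ≤ u) : p ^ a ≤ c ^ 2 * n ^ 2 := by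
    refine prime_pow_le_of_dvd_lucas_sub hp hp5 hfib hc hmn hpar ?_
    rw [show lucas n - lucas m = p ^ u * v - p ^ x * y by rw [← hn, ← hm]; ring]
    exact dvd_sub ((pow_dvd_pow _ hu).mul_right _) ((pow_dvd_pow _ hx).mul_right _)
  rcases le_total x u with hxu | hux
  · exact .inl (hle x le_rfl hxu)
  · exact .inr (hle u hux le_rfl)

theorem small_of_same_parity {C m n N x y u v : ℕ} (hmn : m < n) (hnN : n ≤ N)
    (hpar : m % 2 = n % 2) (hm : lucas m + C = 2 ^ x * 3 ^ y) (hn : lucas n + C = 2 ^ u * 3 ^ v) :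
    (2 ^ x ≤ 16 * N ^ 2 ∨ 2 ^ u ≤ 16 * N ^ 2) ∧ (3 ^ y ≤ 9 * N ^ 2 ∨ 3 ^ v ≤ 9 * N ^ 2) := by
  have hsq : n ^ 2 ≤ N ^ 2 := Nat.pow_le_pow_left hnN 2
  have h2 := prime_pow_le_or_prime_pow_le Nat.prime_two (by decide)
    two_pow_dvd_four_mul_of_dvd_fib (by decide) hmn hpar hm hn
  have h3 := prime_pow_le_or_prime_pow_le Nat.prime_three (by decide)
    three_pow_dvd_three_mul_of_dvd_fib (by decide) hmn hpar (hm.trans (mul_comm _ _))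
    (hn.trans (mul_comm _ _))
  omega

end Divisibility

section Schwarz

theorem differentiable_dslope {f : ℂ → ℂ} (hf : Differentiable ℂ f) (a : ℂ) :
    Differentiable ℂ (dslope f a) :=
  differentiableOn_univ.1
    ((Complex.differentiableOn_dslope Filter.univ_mem).2 hf.differentiableOn)

theorem eq_add_sub_mul_dslope (f : ℂ → ℂ) (a z : ℂ) : f z = f a + (z - a) * dslope f a z := by
  rw [← smul_eq_mul, sub_smul_dslope, add_sub_cancel]

theorem iteratedDeriv_succ_eq_dslope {f : ℂ → ℂ} (hf : Differentiable ℂ f) (a : ℂ) (t : ℕ) :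
    iteratedDeriv (t + 1) f = fun z ↦
      (z - a) * iteratedDeriv (t + 1) (dslope f a) z +
        (t + 1) * iteratedDeriv t (dslope f a) z := by
  have hderiv (t : ℕ) (z : ℂ) :
      HasDerivAt (iteratedDeriv t (dslope f a)) (iteratedDeriv (t + 1) (dslope f a) z) z := by
    rw [iteratedDeriv_succ]
    exact (((differentiable_dslope hf a).contDiff (n := t + 1)).differentiable_iteratedDeriv t
      (by exact_mod_cast Nat.lt_succ_self t) z).hasDerivAt
  have hmul (t : ℕ) (z : ℂ) : HasDerivAt (fun z ↦ (z - a) * iteratedDeriv t (dslope f a) z)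
      (1 * iteratedDeriv t (dslope f a) z + (z - a) * iteratedDeriv (t + 1) (dslope f a) z) z :=
    ((hasDerivAt_id z).sub_const a).mul (hderiv t z)
  induction t with
  | zero =>
    funext z
    have hf' : f = fun z ↦ f a + (z - a) * iteratedDeriv 0 (dslope f a) z := by
      simpa only [iteratedDeriv_zero] using funext (eq_add_sub_mul_dslope f a)
    rw [iteratedDeriv_one]
    conv_lhs => rw [hf']
    rw [((hmul 0 z).const_add (f a)).deriv]
    push_cast
    ring
  | succ t ih =>
    funext z
    rw [iteratedDeriv_succ, ih, ((hmul (t + 1) z).fun_add ((hderiv t z).const_mul _)).deriv]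
    push_cast
    ring

theorem norm_iteratedDeriv_dslope_self_le {f : ℂ → ℂ} (hf : Differentiable ℂ f) (a : ℂ) (t : ℕ) :
    ‖iteratedDeriv t (dslope f a) a‖ ≤ ‖iteratedDeriv (t + 1) f a‖ := by
  rw [iteratedDeriv_succ_eq_dslope hf a]
  beta_reduce
  rw [sub_self, zero_mul, zero_add, ← Nat.cast_add_one, norm_mul, Complex.norm_natCast]
  exact le_mul_of_one_le_left (norm_nonneg _) (by simp)

theorem norm_iteratedDeriv_dslope_le {f : ℂ → ℂ} (hf : Differentiable ℂ f) {a z : ℂ} {δ : ℝ}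
    (hz : 1 ≤ ‖z - a‖) (ha : ‖f a‖ ≤ δ) {t : ℕ} (h : ∀ i ≤ t, ‖iteratedDeriv i f z‖ ≤ δ) :
    ‖iteratedDeriv t (dslope f a) z‖ ≤ 2 * (t + 1).factorial * δ := by
  have hle (w : ℂ) : ‖w‖ ≤ ‖(z - a) * w‖ := by
    rw [norm_mul]
    exact le_mul_of_one_le_left (norm_nonneg _) hz
  induction t with
  | zero =>
    calc ‖iteratedDeriv 0 (dslope f a) z‖ ≤ ‖(z - a) * dslope f a z‖ := by
          rw [iteratedDeriv_zero]
          exact hle _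
      _ = ‖f z - f a‖ := by rw [← smul_eq_mul, sub_smul_dslope]
      _ ≤ ‖f z‖ + ‖f a‖ := norm_sub_le _ _
      _ ≤ δ + δ := add_le_add (by simpa using h 0 le_rfl) ha
      _ = _ := by simp [two_mul]
  | succ t ih =>
    have hprev := ih fun i hi ↦ h i (hi.trans t.le_succ)
    have hδ : 0 ≤ δ := (norm_nonneg _).trans ha
    have hfac : (1 : ℝ) ≤ (t + 1).factorial := by exact_mod_cast (t + 1).factorial_pos
    calc ‖iteratedDeriv (t + 1) (dslope f a) z‖
        ≤ ‖(z - a) * iteratedDeriv (t + 1) (dslope f a) z‖ := hle _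
      _ = ‖iteratedDeriv (t + 1) f z - (t + 1 : ℕ) * iteratedDeriv t (dslope f a) z‖ := by
          rw [iteratedDeriv_succ_eq_dslope hf a]
          push_cast
          ring_nf
      _ ≤ δ + (t + 1 : ℕ) * (2 * (t + 1).factorial * δ) := by
          refine (norm_sub_le _ _).trans ?_
          rw [norm_mul, Complex.norm_natCast]
          gcongr
          exact h _ le_rfl
      _ ≤ 2 * (t + 1 + 1).factorial * δ := by
          rw [Nat.factorial_succ (t + 1)]
          push_cast
          nlinarith [mul_le_mul_of_nonneg_right hfac hδ]

theorem norm_dslope_le {f : ℂ → ℂ} (hf : Differentiable ℂ f) {a : ℂ} {r B δ : ℝ} (hr : 0 < r)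
    (ha : ‖a‖ ≤ r) (hfa : ‖f a‖ ≤ δ) (hB : ∀ z : ℂ, ‖z‖ ≤ 7 * r → ‖f z‖ ≤ B) {z : ℂ}
    (hz : ‖z‖ ≤ 7 * r) : ‖dslope f a z‖ ≤ (B + δ) / (6 * r) := by
  refine Complex.norm_le_of_forall_mem_frontier_norm_le (U := Metric.ball 0 (7 * r))
    Metric.isBounded_ball (differentiable_dslope hf a).diffContOnCl (fun w hw ↦ ?_) ?_
  · rw [frontier_ball _ (by positivity), mem_sphere_zero_iff_norm] at hw
    have hwa : 6 * r ≤ ‖w - a‖ := by linarith [norm_sub_norm_le w a]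
    rw [le_div_iff₀ (by positivity)]
    calc ‖dslope f a w‖ * (6 * r) ≤ ‖dslope f a w‖ * ‖w - a‖ := by gcongr
      _ = ‖f w - f a‖ := by rw [mul_comm, ← norm_mul, ← smul_eq_mul, sub_smul_dslope]
      _ ≤ B + δ := (norm_sub_le _ _).trans (add_le_add (hB w hw.le) hfa)
  · rw [closure_ball _ (by positivity)]
    simpa using hz

theorem one_le_norm_natCast_sub {m n : ℕ} (h : m ≠ n) : 1 ≤ ‖(m : ℂ) - n‖ := by
  have hne : (m : ℤ) - n ≠ 0 := sub_ne_zero.2 (Nat.cast_injective.ne h)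
  have hcast : (m : ℂ) - n = ((m - n : ℤ) : ℂ) := by push_cast; rfl
  rw [hcast, Complex.norm_intCast]
  exact_mod_cast Int.one_le_abs hne

theorem norm_iteratedDeriv_dslope_natCast_le {S T a : ℕ} {f : ℂ → ℂ} (hf : Differentiable ℂ f)
    {δ : ℝ} {τ : ℕ → ℕ} (hτ : ∀ s < S, τ s ≤ T) (ha : a < S) (hτa : τ a ≠ 0)
    (h : ∀ s < S, ∀ t < τ s, ‖iteratedDeriv t f s‖ ≤ δ) {s t : ℕ} (hs : s < S)
    (ht : t < Function.update τ a (τ a - 1) s) :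
    ‖iteratedDeriv t (dslope f a) s‖ ≤ 2 * T.factorial * δ := by
  have hfa : ‖f a‖ ≤ δ := by simpa using h a ha 0 (Nat.pos_of_ne_zero hτa)
  have hδ : 0 ≤ δ := (norm_nonneg _).trans hfa
  rcases eq_or_ne s a with rfl | hsa
  · rw [Function.update_self] at ht
    have hT : (1 : ℝ) ≤ T.factorial := by exact_mod_cast T.factorial_pos
    exact (norm_iteratedDeriv_dslope_self_le hf s t).trans
      ((h s hs (t + 1) (by omega)).trans (le_mul_of_one_le_left hδ (by linarith)))
  · rw [Function.update_of_ne hsa] at ht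
    refine (norm_iteratedDeriv_dslope_le hf (one_le_norm_natCast_sub hsa) hfa
      fun i hi ↦ h s hs i (hi.trans_lt ht)).trans ?_
    gcongr
    exact (Nat.succ_le_of_lt ht).trans (hτ s hs)

-- Each prescribed zero is divided out by a `dslope`, gaining a factor `1 / 3` on the disc of radius
-- `7 * r`.
theorem norm_le_of_small_iteratedDeriv {S T : ℕ} {r : ℝ} (hr : 0 < r) (hS : S ≤ r) (N : ℕ)
    {f : ℂ → ℂ} (hf : Differentiable ℂ f) {B δ : ℝ} (hδ : 0 ≤ δ) {τ : ℕ → ℕ}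
    (hτ : ∀ s < S, τ s ≤ T) (hN : ∑ s ∈ Finset.range S, τ s = N)
    (hB : ∀ z : ℂ, ‖z‖ ≤ 7 * r → ‖f z‖ ≤ B)
    (h : ∀ s < S, ∀ t < τ s, ‖iteratedDeriv t f s‖ ≤ δ) {z : ℂ} (hz : ‖z‖ ≤ r) :
    ‖f z‖ ≤ (1 / 3) ^ N * B + (2 + 2 * r * (2 * T.factorial)) ^ N * δ := by
  induction N generalizing f B δ τ z with
  | zero => simpa using (hB z (by linarith)).trans (le_add_of_nonneg_right hδ)
  | succ N ih =>
    obtain ⟨a, ha, hτa⟩ := Finset.exists_ne_zero_of_sum_ne_zero (hN.trans_ne N.succ_ne_zero)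
    have haS := Finset.mem_range.1 ha
    set K : ℝ := 2 * T.factorial
    set M : ℝ := 2 + 2 * r * K
    have hfa : ‖f a‖ ≤ δ := by simpa using h a haS 0 (Nat.pos_of_ne_zero hτa)
    have har : ‖(a : ℂ)‖ ≤ r := by
      rw [Complex.norm_natCast]
      exact le_trans (by exact_mod_cast haS.le) hS
    have hsum : ∑ s ∈ Finset.range S, Function.update τ a (τ a - 1) s = N := by
      rw [Finset.sum_update_of_mem ha, Finset.sdiff_singleton_eq_erase]
      rw [← Finset.add_sum_erase _ _ ha] at hN
      omega
    have hτ' : ∀ s < S, Function.update τ a (τ a - 1) s ≤ T := fun s hs ↦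
      (update_le_self_iff.2 (Nat.sub_le _ _) s).trans (hτ s hs)
    have hslope : ‖dslope f a z‖ ≤ (1 / 3) ^ N * ((B + δ) / (6 * r)) + M ^ N * (K * δ) :=
      ih (differentiable_dslope hf a) (by positivity) hτ' hsum
        (fun w hw ↦ norm_dslope_le hf hr har hfa hB hw)
        (fun s hs t ht ↦ norm_iteratedDeriv_dslope_natCast_le hf hτ haS hτa h hs ht) hz
    have hza : ‖z - a‖ ≤ 2 * r := (norm_sub_le _ _).trans (by linarith)
    have hrK : 0 ≤ 2 * r * K := by positivity
    have hM : 1 ≤ M ^ N := one_le_pow₀ (by linarith)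
    have h3 : (1 / 3 : ℝ) ^ N ≤ 1 := pow_le_one₀ (by norm_num) (by norm_num)
    calc ‖f z‖ ≤ ‖f a‖ + ‖z - a‖ * ‖dslope f a z‖ := by
          rw [eq_add_sub_mul_dslope f a z, ← norm_mul]
          exact norm_add_le _ _
      _ ≤ δ + 2 * r * ((1 / 3) ^ N * ((B + δ) / (6 * r)) + M ^ N * (K * δ)) := by gcongr
      _ = (1 / 3) ^ (N + 1) * B + (δ + (1 / 3) ^ N * (δ / 3) + 2 * r * K * M ^ N * δ) := by
          field_simp
          ring
      _ ≤ (1 / 3) ^ (N + 1) * B + (M ^ N * δ + M ^ N * δ + 2 * r * K * M ^ N * δ) := by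
          have hδM : δ ≤ M ^ N * δ := le_mul_of_one_le_left hδ hM
          have h3δ : (1 / 3) ^ N * (δ / 3) ≤ 1 * δ := by
            gcongr
            linarith
          linarith
      _ = (1 / 3) ^ (N + 1) * B + M ^ (N + 1) * δ := by ring

end Schwarz

section GoldenRatio

theorem pow_eq_fib_mul_add {R : Type*} [CommRing R] {x : R} (hx : x ^ 2 = x + 1) (k : ℕ) :
    x ^ k = Nat.fib k * x + (Nat.fib (k + 1) - Nat.fib k) := by
  induction k with
  | zero => simp
  | succ k ih =>
    rw [pow_succ, ih, Nat.fib_add_two]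
    push_cast
    linear_combination (Nat.fib k : R) * hx

theorem sum_mul_pow_eq {ι R : Type*} [Fintype ι] [CommRing R] {x : R} (hx : x ^ 2 = x + 1)
    (q : ι → ℤ) (k : ι → ℕ) :
    ∑ i, (q i : R) * x ^ k i = (∑ i, q i * Nat.fib (k i) : ℤ) * x +
      (∑ i, q i * (Nat.fib (k i + 1) - Nat.fib (k i)) : ℤ) := by
  push_cast
  rw [Finset.sum_mul, ← Finset.sum_add_distrib]
  refine Finset.sum_congr rfl fun i _ ↦ ?_
  rw [pow_eq_fib_mul_add hx]
  ring

theorem eq_zero_of_mul_add_eq_zero {u w : ℤ} {x : ℝ} (hx : Irrational x) (h : u * x + w = 0) :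
    u = 0 := by
  by_contra hu
  refine (hx.intCast_mul hu).ne_int (-w) ?_
  push_cast
  linarith

theorem mul_goldenRatio_add_eq_zero {u w : ℤ}
    (h : |(u * Real.goldenRatio + w) * (u * Real.goldenConj + w)| < 1) :
    u * Real.goldenRatio + w = 0 := by
  have hnorm : (u * Real.goldenRatio + w) * (u * Real.goldenConj + w) =
      ((-u ^ 2 + u * w + w ^ 2 : ℤ) : ℝ) := by
    push_cast
    linear_combination (u : ℝ) ^ 2 * Real.goldenRatio_mul_goldenConj
      + (u : ℝ) * w * Real.goldenRatio_add_goldenConj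
  rw [hnorm, ← Int.cast_abs] at h
  have hint : -u ^ 2 + u * w + w ^ 2 = 0 := Int.abs_lt_one_iff.1 (by exact_mod_cast h)
  rw [hint, Int.cast_zero] at hnorm
  rcases mul_eq_zero.1 hnorm with hzero | hzero
  · exact hzero
  · have hu := eq_zero_of_mul_add_eq_zero Real.goldenConj_irrational hzero
    subst hu
    simpa using hzero

theorem abs_goldenConj_pow_le_one (n : ℕ) : |Real.goldenConj ^ n| ≤ 1 := by
  rw [abs_pow]
  refine pow_le_one₀ (abs_nonneg _) (abs_le.2 ⟨?_, ?_⟩) <;>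
    linarith [Real.neg_one_lt_goldenConj, Real.goldenConj_neg]

-- Liouville's inequality in `ℤ[φ]`: the conjugate of the sum is at most `D`.
theorem sum_mul_goldenRatio_pow_eq_zero {ι : Type*} [Fintype ι] {q : ι → ℤ} {k : ι → ℕ} {A D : ℝ}
    (hA : |∑ i, (q i : ℝ) * Real.goldenRatio ^ k i| ≤ A) (hD : ∑ i, |(q i : ℝ)| ≤ D)
    (hAD : A * D < 1) : ∑ i, (q i : ℝ) * Real.goldenRatio ^ k i = 0 := by
  have hconj : |∑ i, (q i : ℝ) * Real.goldenConj ^ k i| ≤ D := by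
    refine (Finset.abs_sum_le_sum_abs _ _).trans ((Finset.sum_le_sum fun i _ ↦ ?_).trans hD)
    rw [abs_mul]
    exact mul_le_of_le_one_right (abs_nonneg _) (abs_goldenConj_pow_le_one _)
  have hprod := mul_le_mul hA hconj (abs_nonneg _) ((abs_nonneg _).trans hA)
  rw [sum_mul_pow_eq Real.goldenRatio_sq] at hprod ⊢
  rw [sum_mul_pow_eq Real.goldenConj_sq, ← abs_mul] at hprod
  exact mul_goldenRatio_add_eq_zero (hprod.trans_lt hAD)

theorem lucas_eq_goldenRatio_pow_add (n : ℕ) :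
    (lucas n : ℝ) = Real.goldenRatio ^ n + Real.goldenConj ^ n := by
  rw [lucas_eq_fib, pow_eq_fib_mul_add Real.goldenRatio_sq, pow_eq_fib_mul_add Real.goldenConj_sq]
  push_cast
  linear_combination -(n.fib : ℝ) * Real.goldenRatio_add_goldenConj

end GoldenRatio

section ExponentialSums

variable {ι : Type*} [Fintype ι]

theorem abs_sum_mul_le {c v : ι → ℝ} {C ε : ℝ} (hC : ∑ i, |c i| ≤ C) (hε : 0 ≤ ε)
    (hv : ∀ i, |v i| ≤ ε) : |∑ i, c i * v i| ≤ C * ε :=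
  calc |∑ i, c i * v i| ≤ ∑ i, |c i * v i| := Finset.abs_sum_le_sum_abs _ _
    _ ≤ ∑ i, |c i| * ε := Finset.sum_le_sum fun i _ ↦ by
      rw [abs_mul]
      exact mul_le_mul_of_nonneg_left (hv i) (abs_nonneg _)
    _ ≤ C * ε := by
      rw [← Finset.sum_mul]
      exact mul_le_mul_of_nonneg_right hC hε

/-- The exponential sum with real coefficients `c` and real frequencies `w`, as an entire
function. -/
noncomputable def expSum (c w : ι → ℝ) (z : ℂ) : ℂ := ∑ i, (c i : ℂ) * Complex.exp (w i * z)

theorem hasDerivAt_expSum (c w : ι → ℝ) (z : ℂ) :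
    HasDerivAt (expSum c w) (expSum (fun i ↦ c i * w i) w z) z := by
  refine HasDerivAt.fun_sum fun i _ ↦ ?_
  have hlin : HasDerivAt (fun z : ℂ ↦ (w i : ℂ) * z) (w i) z := by
    simpa using (hasDerivAt_id z).const_mul (w i : ℂ)
  exact (hlin.cexp.const_mul (c i : ℂ)).congr_deriv (by push_cast; ring)

theorem iteratedDeriv_expSum (c w : ι → ℝ) (t : ℕ) :
    iteratedDeriv t (expSum c w) = expSum (fun i ↦ c i * w i ^ t) w := by
  induction t generalizing c with
  | zero => simp
  | succ t ih =>
    rw [iteratedDeriv_succ', show deriv (expSum c w) = expSum (fun i ↦ c i * w i) w from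
      funext fun z ↦ (hasDerivAt_expSum c w z).deriv, ih]
    simp only [pow_succ', mul_assoc]

theorem norm_expSum_natCast (c w : ι → ℝ) (r : ℕ) :
    ‖expSum c w r‖ = |∑ i, c i * Real.exp (r * w i)| := by
  rw [← Real.norm_eq_abs, ← Complex.norm_real, expSum]
  push_cast
  simp only [mul_comm (r : ℂ)]

theorem norm_expSum_le {c w : ι → ℝ} {C W R : ℝ} (hC : ∑ i, |c i| ≤ C) (hw : ∀ i, 0 ≤ w i)
    (hwW : ∀ i, w i ≤ W) {z : ℂ} (hR : 0 ≤ R) (hz : ‖z‖ ≤ R) :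
    ‖expSum c w z‖ ≤ C * Real.exp (W * R) := by
  have hterm (i : ι) : ‖(c i : ℂ) * Complex.exp (w i * z)‖ ≤ |c i| * Real.exp (W * R) := by
    rw [norm_mul, Complex.norm_real, Real.norm_eq_abs, Complex.norm_exp, Complex.re_ofReal_mul]
    refine mul_le_mul_of_nonneg_left (Real.exp_le_exp.2 ?_) (abs_nonneg _)
    exact (mul_le_mul_of_nonneg_left ((Complex.re_le_norm z).trans hz) (hw i)).trans
      (mul_le_mul_of_nonneg_right (hwW i) hR)
  calc ‖expSum c w z‖ ≤ ∑ i, |c i| * Real.exp (W * R) :=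
        (norm_sum_le _ _).trans (Finset.sum_le_sum fun i _ ↦ hterm i)
    _ ≤ C * Real.exp (W * R) := by
      rw [← Finset.sum_mul]
      gcongr

-- The frequencies `w` are close to the logarithms of the `b i`: the exponential sum inherits almost
-- zeros from the vanishing hypothesis, is small by the Schwarz lemma, and its smallness carries
-- over to `∑ i, c i * b i ^ s`.
theorem abs_sum_mul_pow_le {c w b : ι → ℝ} {S T R : ℕ} {C W ε : ℝ} (hR : 0 < R) (hSR : S ≤ R)
    (hC : ∑ i, |c i| ≤ C) (hw : ∀ i, 0 ≤ w i) (hwW : ∀ i, w i ≤ W) (hW : 1 ≤ W) (hε : 0 ≤ ε)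
    (hb : ∀ r ≤ R, ∀ i, |Real.exp (r * w i) - b i ^ r| ≤ ε)
    (h : ∀ t < T, ∀ r < S, ∑ i, c i * w i ^ t * b i ^ r = 0) {s : ℕ} (hs : s ≤ R) :
    |∑ i, c i * b i ^ s| ≤ (1 / 3) ^ (S * T) * (C * Real.exp (W * (7 * R)))
      + ((2 + 2 * R * (2 * T.factorial)) ^ (S * T) + 1) * (C * W ^ T * ε) := by
  have hC₀ : 0 ≤ C := (Finset.sum_nonneg fun i _ ↦ abs_nonneg (c i)).trans hC
  have hdiff {t r : ℕ} (ht : t ≤ T) (hr : r ≤ R) :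
      |∑ i, c i * w i ^ t * Real.exp (r * w i) - ∑ i, c i * w i ^ t * b i ^ r|
        ≤ C * W ^ T * ε := by
    rw [← Finset.sum_sub_distrib, mul_assoc]
    simp only [← mul_sub, mul_assoc (c _)]
    refine abs_sum_mul_le hC (by positivity) fun i ↦ ?_
    rw [abs_mul, abs_pow, abs_of_nonneg (hw i)]
    gcongr
    · exact (pow_le_pow_left₀ (hw i) (hwW i) t).trans (pow_le_pow_right₀ hW ht)
    · exact hb r hr i
  have hsmall : ∀ r < S, ∀ t < T, ‖iteratedDeriv t (expSum c w) r‖ ≤ C * W ^ T * ε := by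
    intro r hr t ht
    rw [iteratedDeriv_expSum, norm_expSum_natCast]
    simpa only [h t ht r hr, sub_zero] using hdiff ht.le (hr.le.trans hSR)
  have hschwarz := norm_le_of_small_iteratedDeriv (r := R) (T := T) (z := s) (by positivity)
    (by exact_mod_cast hSR) (S * T) (fun z ↦ (hasDerivAt_expSum c w z).differentiableAt)
    (by positivity) (τ := fun _ ↦ T) (fun _ _ ↦ le_rfl) (by simp)
    (fun z hz ↦ norm_expSum_le hC hw hwW (by positivity) hz) hsmall
    (by rw [Complex.norm_natCast]; exact_mod_cast hs)
  rw [norm_expSum_natCast] at hschwarz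
  have hclose := hdiff (Nat.zero_le T) hs
  simp only [pow_zero, mul_one] at hclose
  rw [abs_sub_comm] at hclose
  linarith [abs_sub_abs_le_abs_sub (∑ i, c i * b i ^ s) (∑ i, c i * Real.exp (s * w i))]

end ExponentialSums

section AuxiliaryFunction

/-- The exponents `(a, b, c)` of the monomials `2 ^ a * 3 ^ b * φ ^ c` of degree less than `L` in
each variable. -/
abbrev Exponent (L : ℕ) := Fin L × Fin L × Fin L

/-- The value `2 ^ a * 3 ^ b * φ ^ c` of a monomial at the three bases of the linear form. -/
noncomputable def monomialValue {L : ℕ} (i : Exponent L) : ℝ :=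
  2 ^ (i.1 : ℕ) * 3 ^ (i.2.1 : ℕ) * Real.goldenRatio ^ (i.2.2 : ℕ)

/-- The linear form `x log 2 + y log 3 - n log φ` in logarithms. -/
noncomputable def logForm (n x y : ℕ) : ℝ :=
  x * Real.log 2 + y * Real.log 3 - n * Real.log Real.goldenRatio

/-- The coefficient of `log 2` in `n (a log 2 + b log 3 + c log φ)` once `n log φ` has been replaced
by `x log 2 + y log 3`. -/
def twoWeight (n x : ℕ) {L : ℕ} (i : Exponent L) : ℕ := n * i.1 + x * i.2.2

/-- The coefficient of `log 3` in `n (a log 2 + b log 3 + c log φ)` once `n log φ` has been replaced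
by `x log 2 + y log 3`. -/
def threeWeight (n y : ℕ) {L : ℕ} (i : Exponent L) : ℕ := n * i.2.1 + y * i.2.2

/-- The approximation to `log (monomialValue i)` obtained by neglecting the linear form. -/
noncomputable def frequency (n x y : ℕ) {L : ℕ} (i : Exponent L) : ℝ :=
  (twoWeight n x i * Real.log 2 + threeWeight n y i * Real.log 3) / n

/-- The coefficients of the mixed partial derivative of order `(m, k)` of the auxiliary function
with coefficients `p`, up to the scaling by powers of `n`, `log 2` and `log 3`. -/
def auxCoeff (n x y : ℕ) {L : ℕ} (p : Exponent L → ℤ) (m k : ℕ) (i : Exponent L) : ℤ :=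
  p i * twoWeight n x i ^ m * threeWeight n y i ^ k

/-- The value at the integer `s` of the mixed partial derivative of order `(m, k)` of the auxiliary
function with coefficients `p`. -/
noncomputable def auxSum (n x y : ℕ) {L : ℕ} (p : Exponent L → ℤ) (m k s : ℕ) : ℝ :=
  ∑ i, (auxCoeff n x y p m k i : ℝ) * monomialValue i ^ s

/-- The auxiliary function with coefficients `p` vanishes to order `M` at the integers below `S`. -/
def AuxVanishes (n x y : ℕ) {L : ℕ} (p : Exponent L → ℤ) (M S : ℕ) : Prop :=
  ∀ m k s, m + k < M → s < S → auxSum n x y p m k s = 0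

variable {n x y L : ℕ}

theorem monomialValue_pos (i : Exponent L) : 0 < monomialValue i := by
  have := Real.goldenRatio_pos
  unfold monomialValue
  positivity

theorem log_monomialValue (i : Exponent L) : Real.log (monomialValue i) =
    (i.1 : ℕ) * Real.log 2 + (i.2.1 : ℕ) * Real.log 3
      + (i.2.2 : ℕ) * Real.log Real.goldenRatio := by
  have := Real.goldenRatio_pos
  rw [monomialValue, Real.log_mul (by positivity) (by positivity),
    Real.log_mul (by positivity) (by positivity), Real.log_pow, Real.log_pow, Real.log_pow]

theorem monomialValue_pow (i : Exponent L) (s : ℕ) :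
    monomialValue i ^ s = Real.exp (s * Real.log (monomialValue i)) := by
  rw [Real.exp_nat_mul, Real.exp_log (monomialValue_pos i)]

theorem log_monomialValue_le (i : Exponent L) : Real.log (monomialValue i) ≤ 3 * L := by
  have hlog2 : Real.log 2 ≤ 0.7 := by linarith [Real.log_two_lt_d9]
  have hlog3 : Real.log 3 ≤ 1.4 := by
    have hlog4 : Real.log 3 ≤ Real.log (2 ^ 2) := Real.log_le_log (by norm_num) (by norm_num)
    rw [Real.log_pow] at hlog4
    push_cast at hlog4
    linarith
  have hlogφ : Real.log Real.goldenRatio ≤ 0.7 :=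
    (Real.log_le_log Real.goldenRatio_pos Real.goldenRatio_lt_two.le).trans hlog2
  calc Real.log (monomialValue i) ≤ L * 0.7 + L * 1.4 + L * 0.7 := by
        rw [log_monomialValue]
        gcongr
        exacts [i.1.2.le, i.2.1.2.le, Real.log_nonneg Real.one_lt_goldenRatio.le, i.2.2.2.le]
    _ ≤ 3 * L := by linarith [(Nat.cast_nonneg L : (0 : ℝ) ≤ L)]

theorem frequency_nonneg (i : Exponent L) : 0 ≤ frequency n x y i := by
  have := Real.log_nonneg (x := 2) (by norm_num)
  have := Real.log_nonneg (x := 3) (by norm_num)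
  unfold frequency
  positivity

theorem frequency_sub_log_monomialValue (hn : 0 < n) (i : Exponent L) :
    frequency n x y i - Real.log (monomialValue i) = (i.2.2 : ℕ) * logForm n x y / n := by
  have : (n : ℝ) ≠ 0 := by positivity
  rw [log_monomialValue]
  unfold frequency logForm twoWeight threeWeight
  push_cast
  field_simp
  ring

theorem abs_frequency_sub_log_monomialValue_le (hn : 0 < n) (i : Exponent L) :
    |frequency n x y i - Real.log (monomialValue i)| ≤ L * |logForm n x y| := by
  rw [frequency_sub_log_monomialValue hn, abs_div, abs_mul, Nat.abs_cast, Nat.abs_cast]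
  refine (div_le_self (by positivity) (by exact_mod_cast hn)).trans ?_
  gcongr
  exact i.2.2.2.le

theorem frequency_le (hn : 0 < n) (hform : |logForm n x y| ≤ 1) (i : Exponent L) :
    frequency n x y i ≤ 4 * L := by
  have hclose := (abs_le.1 (abs_frequency_sub_log_monomialValue_le (x := x) (y := y) hn i)).2
  have := log_monomialValue_le i
  have : (L : ℝ) * |logForm n x y| ≤ L * 1 := by gcongr
  linarith

theorem abs_exp_frequency_sub_le (hn : 0 < n) {s S : ℕ} (hs : s ≤ S)
    (hform : L * S * |logForm n x y| ≤ 1) (i : Exponent L) :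
    |Real.exp (s * frequency n x y i) - monomialValue i ^ s|
      ≤ Real.exp (4 * L * S) * (2 * L * S * |logForm n x y|) := by
  have hfactor : Real.exp (s * frequency n x y i) - monomialValue i ^ s = monomialValue i ^ s *
      (Real.exp (s * (frequency n x y i - Real.log (monomialValue i))) - 1) := by
    rw [monomialValue_pow, mul_sub, ← Real.exp_add]
    ring_nf
  have harg : |s * (frequency n x y i - Real.log (monomialValue i))|
      ≤ L * S * |logForm n x y| := by
    rw [abs_mul, Nat.abs_cast]
    calc s * |frequency n x y i - Real.log (monomialValue i)| ≤ S * (L * |logForm n x y|) := by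
          gcongr
          exact abs_frequency_sub_log_monomialValue_le hn i
      _ = L * S * |logForm n x y| := by ring
  have hvalue : monomialValue i ^ s ≤ Real.exp (4 * L * S) := by
    rw [monomialValue_pow, Real.exp_le_exp]
    calc s * Real.log (monomialValue i) ≤ s * (3 * L) := by
          gcongr
          exact log_monomialValue_le i
      _ ≤ S * (4 * L) := by gcongr; norm_num
      _ = 4 * L * S := by ring
  rw [hfactor, abs_mul, abs_of_pos (pow_pos (monomialValue_pos i) s)]
  gcongr
  exact (Real.abs_exp_sub_one_le (harg.trans hform)).trans (by linarith)

theorem AuxVanishes.sum_frequency_pow_eq_zero {p : Exponent L → ℤ} {M S t m k s : ℕ}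
    (h : AuxVanishes n x y p M S) (hM : m + k + t < M) (hs : s < S) :
    ∑ i, (auxCoeff n x y p m k i : ℝ) * frequency n x y i ^ t * monomialValue i ^ s = 0 := by
  induction t generalizing m k with
  | zero => simpa [auxSum] using h m k s hM hs
  | succ t ih =>
    calc ∑ i, (auxCoeff n x y p m k i : ℝ) * frequency n x y i ^ (t + 1) * monomialValue i ^ s
        = Real.log 2 / n * ∑ i,
            (auxCoeff n x y p (m + 1) k i : ℝ) * frequency n x y i ^ t * monomialValue i ^ s
          + Real.log 3 / n * ∑ i,
            (auxCoeff n x y p m (k + 1) i : ℝ) * frequency n x y i ^ t * monomialValue i ^ s := by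
          rw [Finset.mul_sum, Finset.mul_sum, ← Finset.sum_add_distrib]
          refine Finset.sum_congr rfl fun i _ ↦ ?_
          have hfreq : frequency n x y i =
              Real.log 2 / n * twoWeight n x i + Real.log 3 / n * threeWeight n y i := by
            rw [frequency]
            ring
          rw [pow_succ]
          nth_rewrite 2 [hfreq]
          unfold auxCoeff
          push_cast
          ring
      _ = 0 := by rw [ih (by omega), ih (by omega), mul_zero, mul_zero, add_zero]

theorem pow_mul_pow_le {a b H : ℝ} (ha : 0 ≤ a) (hb : 0 ≤ b) (haH : a ≤ H) (hbH : b ≤ H)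
    (hH : 1 ≤ H) {m k M : ℕ} (h : m + k ≤ M) : a ^ m * b ^ k ≤ H ^ M :=
  calc a ^ m * b ^ k ≤ H ^ m * H ^ k := by gcongr
    _ = H ^ (m + k) := (pow_add _ _ _).symm
    _ ≤ H ^ M := pow_le_pow_right₀ hH h

theorem sum_abs_auxCoeff_le {p : Exponent L → ℤ} {P H : ℝ} (hP : ∑ i, |(p i : ℝ)| ≤ P)
    (hH : 1 ≤ H) (htwo : ∀ i : Exponent L, (twoWeight n x i : ℝ) ≤ H)
    (hthree : ∀ i : Exponent L, (threeWeight n y i : ℝ) ≤ H) {m k M : ℕ} (h : m + k ≤ M) :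
    ∑ i, |(auxCoeff n x y p m k i : ℝ)| ≤ P * H ^ M := by
  calc ∑ i, |(auxCoeff n x y p m k i : ℝ)| ≤ ∑ i, |(p i : ℝ)| * H ^ M := by
        refine Finset.sum_le_sum fun i _ ↦ ?_
        unfold auxCoeff
        push_cast
        rw [abs_mul, abs_mul, abs_pow, abs_pow, Nat.abs_cast, Nat.abs_cast, mul_assoc]
        gcongr
        exact pow_mul_pow_le (by positivity) (by positivity) (htwo i) (hthree i) hH h
    _ ≤ P * H ^ M := by
      rw [← Finset.sum_mul]
      gcongr

theorem auxSum_eq_zero_of_abs_le {p : Exponent L → ℤ} {m k s S : ℕ} (hs : s ≤ S) {A C : ℝ}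
    (hC : ∑ i, |(auxCoeff n x y p m k i : ℝ)| ≤ C) (hA : |auxSum n x y p m k s| ≤ A)
    (h : A * (C * 6 ^ (L * S)) < 1) : auxSum n x y p m k s = 0 := by
  have hsum : auxSum n x y p m k s = ∑ i : Exponent L,
      ((auxCoeff n x y p m k i * (2 ^ (i.1 * s : ℕ) * 3 ^ (i.2.1 * s : ℕ)) : ℤ) : ℝ)
        * Real.goldenRatio ^ (i.2.2 * s : ℕ) := by
    unfold auxSum monomialValue
    push_cast
    simp only [mul_pow, pow_mul, mul_assoc]
  rw [hsum] at hA ⊢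
  refine sum_mul_goldenRatio_pow_eq_zero hA ?_ h
  calc _ ≤ ∑ i, |(auxCoeff n x y p m k i : ℝ)| * 6 ^ (L * S) := by
        refine Finset.sum_le_sum fun i _ ↦ ?_
        push_cast
        rw [abs_mul, abs_of_pos (a := 2 ^ _ * 3 ^ _) (by positivity)]
        gcongr
        calc (2 : ℝ) ^ (i.1 * s : ℕ) * 3 ^ (i.2.1 * s : ℕ) ≤ 2 ^ (L * S) * 3 ^ (L * S) := by
              gcongr
              exacts [one_le_two, i.1.2.le, by norm_num, i.2.1.2.le]
          _ = 6 ^ (L * S) := by rw [← mul_pow]; norm_num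
    _ ≤ C * 6 ^ (L * S) := by
      rw [← Finset.sum_mul]
      gcongr

theorem AuxVanishes.extrapolate {p : Exponent L → ℤ} {M S T R : ℕ}
    (h : AuxVanishes n x y p (M + T) S) (hn : 0 < n) (hL : 0 < L) (hSR : S ≤ R) (hR : 0 < R)
    {P H : ℝ} (hform : L * R * |logForm n x y| ≤ 1) (hP : ∑ i, |(p i : ℝ)| ≤ P) (hH : 1 ≤ H)
    (htwo : ∀ i : Exponent L, (twoWeight n x i : ℝ) ≤ H)
    (hthree : ∀ i : Exponent L, (threeWeight n y i : ℝ) ≤ H)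
    (hlt : ((1 / 3) ^ (S * T) * (P * H ^ M * Real.exp (4 * L * (7 * R)))
      + ((2 + 2 * R * (2 * T.factorial)) ^ (S * T) + 1)
        * (P * H ^ M * (4 * L) ^ T * (Real.exp (4 * L * R) * (2 * L * R * |logForm n x y|))))
      * (P * H ^ M * 6 ^ (L * R)) < 1) :
    AuxVanishes n x y p M R := by
  intro m k s hm hs
  have hL' : (1 : ℝ) ≤ L := by exact_mod_cast hL
  have hR' : (1 : ℝ) ≤ R := by exact_mod_cast hR
  have hform' : |logForm n x y| ≤ 1 :=
    (le_mul_of_one_le_left (abs_nonneg _) (one_le_mul_of_one_le_of_one_le hL' hR')).trans hform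
  have hC := sum_abs_auxCoeff_le hP hH htwo hthree hm.le
  exact auxSum_eq_zero_of_abs_le hs.le hC
    (abs_sum_mul_pow_le hR hSR hC frequency_nonneg (frequency_le hn hform') (by linarith)
      (by positivity) (fun r hr ↦ abs_exp_frequency_sub_le hn hr hform)
      (fun t ht r hr ↦ h.sum_frequency_pow_eq_zero (by omega) hr) hs.le) hlt

end AuxiliaryFunction

section SiegelLemma

attribute [local instance] Matrix.seminormedAddCommGroup

theorem exists_small_solution {α β : Type*} [Fintype α] [Fintype β] [Nonempty α]
    (A : Matrix α β ℤ) (h : 2 * Fintype.card α ≤ Fintype.card β) {R : ℝ} (hR : 1 ≤ R)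
    (hA : ∀ i j, |(A i j : ℝ)| ≤ R) :
    ∃ t : β → ℤ, t ≠ 0 ∧ A.mulVec t = 0 ∧ ∀ j, |(t j : ℝ)| ≤ Fintype.card β * R := by
  have hα : 0 < Fintype.card α := Fintype.card_pos
  obtain ⟨t, ht, hzero, hbound⟩ := Int.Matrix.exists_ne_zero_int_vec_norm_le A (by omega) hα
  refine ⟨t, ht, hzero, fun j ↦ ?_⟩
  have hα' : (1 : ℝ) ≤ Fintype.card α := by exact_mod_cast hα
  have h' : (2 : ℝ) * Fintype.card α ≤ Fintype.card β := by exact_mod_cast h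
  have hA' : ‖A‖ ≤ R := by
    simpa only [Matrix.norm_le_iff (zero_le_one.trans hR), Int.norm_eq_abs] using hA
  have hbase : (1 : ℝ) ≤ Fintype.card β * max 1 ‖A‖ :=
    one_le_mul_of_one_le_of_one_le (by linarith) (le_max_left _ _)
  have hexponent : (Fintype.card α : ℝ) / (Fintype.card β - Fintype.card α) ≤ 1 := by
    rw [div_le_one (by linarith)]
    linarith
  calc |(t j : ℝ)| ≤ ‖t‖ := by
        rw [← Int.norm_eq_abs]
        exact norm_le_pi_norm t j
    _ ≤ _ := hbound
    _ ≤ (Fintype.card β * max 1 ‖A‖) ^ (1 : ℝ) := Real.rpow_le_rpow_of_exponent_le hbase hexponent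
    _ = Fintype.card β * max 1 ‖A‖ := Real.rpow_one _
    _ ≤ Fintype.card β * R := by gcongr; exact max_le hR hA'

end SiegelLemma

section Existence

variable {n x y L : ℕ}

theorem fib_le_two_pow (k : ℕ) : Nat.fib k ≤ 2 ^ k := by
  induction k using Nat.twoStepInduction with
  | zero => simp
  | one => simp
  | more k ih₀ ih₁ =>
    rw [Nat.fib_add_two, pow_succ, pow_succ]
    rw [pow_succ] at ih₁
    omega

/-- The coordinates of `φ ^ k` in the basis `(φ, 1)` of `ℤ[φ]`. -/
def goldenCoord (k : ℕ) : Fin 2 → ℤ := ![Nat.fib k, Nat.fib (k + 1) - Nat.fib k]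

theorem abs_goldenCoord_le (k : ℕ) (e : Fin 2) : |goldenCoord k e| ≤ 2 ^ k := by
  have hfib (k : ℕ) : (Nat.fib k : ℤ) ≤ 2 ^ k := by exact_mod_cast fib_le_two_pow k
  have hsnd : |(Nat.fib (k + 1) - Nat.fib k : ℤ)| ≤ 2 ^ k := by
    cases k with
    | zero => simp
    | succ k =>
      rw [Nat.fib_add_two, Nat.cast_add, add_sub_cancel_right, Nat.abs_cast]
      exact (hfib k).trans (pow_le_pow_right₀ one_le_two k.le_succ)
  match e with
  | 0 => simpa [goldenCoord] using hfib k
  | 1 => exact hsnd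

/-- The matrix of the linear system, in the coefficients of the auxiliary function, expressing that
its derivatives of order less than `M` in each variable vanish at the integers below `S`. -/
def auxMatrix (n x y L M S : ℕ) : Matrix (Fin M × Fin M × Fin S × Fin 2) (Exponent L) ℤ :=
  fun (m, k, s, e) i ↦ twoWeight n x i ^ (m : ℕ) * threeWeight n y i ^ (k : ℕ)
    * (2 ^ (i.1 * s : ℕ) * 3 ^ (i.2.1 * s : ℕ)) * goldenCoord (i.2.2 * s) e

theorem abs_auxMatrix_le {H : ℝ} (hH : 1 ≤ H)
    (htwo : ∀ i : Exponent L, (twoWeight n x i : ℝ) ≤ H)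
    (hthree : ∀ i : Exponent L, (threeWeight n y i : ℝ) ≤ H) {M S : ℕ}
    (r : Fin M × Fin M × Fin S × Fin 2) (i : Exponent L) :
    |(auxMatrix n x y L M S r i : ℝ)| ≤ H ^ (2 * M) * 12 ^ (L * S) := by
  obtain ⟨m, k, s, e⟩ := r
  have hweights : (twoWeight n x i : ℝ) ^ (m : ℕ) * (threeWeight n y i : ℝ) ^ (k : ℕ)
      ≤ H ^ (2 * M) :=
    pow_mul_pow_le (by positivity) (by positivity) (htwo i) (hthree i) hH (by omega)
  have hcoord : |(goldenCoord (i.2.2 * s) e : ℝ)| ≤ 2 ^ (L * S) :=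
    le_trans (by exact_mod_cast abs_goldenCoord_le (i.2.2 * s) e)
      (pow_le_pow_right₀ one_le_two (Nat.mul_le_mul i.2.2.2.le s.2.le))
  unfold auxMatrix
  push_cast
  rw [abs_mul, abs_of_nonneg (by positivity)]
  calc _ ≤ H ^ (2 * M) * (2 ^ (L * S) * 3 ^ (L * S)) * 2 ^ (L * S) := by
        gcongr
        exacts [one_le_two, i.1.2.le, s.2.le, by norm_num, i.2.1.2.le, s.2.le]
    _ = H ^ (2 * M) * 12 ^ (L * S) := by
      rw [mul_assoc, ← mul_pow, ← mul_pow]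
      norm_num

theorem auxSum_eq_mulVec {M S : ℕ} (p : Exponent L → ℤ) (m k : Fin M) (s : Fin S) :
    auxSum n x y p m k s =
      (auxMatrix n x y L M S).mulVec p (m, k, s, 0) * Real.goldenRatio
        + (auxMatrix n x y L M S).mulVec p (m, k, s, 1) := by
  simp only [Matrix.mulVec, dotProduct, Int.cast_sum, Finset.sum_mul]
  rw [auxSum, ← Finset.sum_add_distrib]
  refine Finset.sum_congr rfl fun i _ ↦ ?_
  simp only [auxMatrix, goldenCoord, auxCoeff, monomialValue, Matrix.cons_val_zero,
    Matrix.cons_val_one]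
  rw [mul_pow, mul_pow, ← pow_mul, ← pow_mul, ← pow_mul,
    pow_eq_fib_mul_add Real.goldenRatio_sq (i.2.2 * s)]
  push_cast
  ring

theorem card_exponent : Fintype.card (Exponent L) = L ^ 3 := by
  simp only [Fintype.card_prod, Fintype.card_fin]
  ring

theorem exists_auxVanishes {M S : ℕ} (hM : 0 < M) (hS : 0 < S)
    (hcard : 4 * (M * M * S) ≤ L ^ 3) {H : ℝ} (hH : 1 ≤ H)
    (htwo : ∀ i : Exponent L, (twoWeight n x i : ℝ) ≤ H)
    (hthree : ∀ i : Exponent L, (threeWeight n y i : ℝ) ≤ H) :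
    ∃ p : Exponent L → ℤ, p ≠ 0 ∧ AuxVanishes n x y p M S ∧
      ∑ i, |(p i : ℝ)| ≤ L ^ 6 * (H ^ (2 * M) * 12 ^ (L * S)) := by
  have : Nonempty (Fin M × Fin M × Fin S × Fin 2) := ⟨⟨0, hM⟩, ⟨0, hM⟩, ⟨0, hS⟩, 0⟩
  obtain ⟨p, hp, hzero, hbound⟩ := exists_small_solution (auxMatrix n x y L M S)
    (by
      rw [card_exponent]
      refine le_of_eq_of_le ?_ hcard
      simp only [Fintype.card_prod, Fintype.card_fin]
      ring)
    (one_le_mul_of_one_le_of_one_le (one_le_pow₀ hH) (one_le_pow₀ (by norm_num)))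
    (abs_auxMatrix_le hH htwo hthree)
  refine ⟨p, hp, fun m k s hm hs ↦ ?_, ?_⟩
  · have hsum := auxSum_eq_mulVec (n := n) (x := x) (y := y) p (⟨m, by omega⟩ : Fin M)
      ⟨k, by omega⟩ ⟨s, hs⟩
    simpa only [hzero, Pi.zero_apply, Int.cast_zero, zero_mul, add_zero] using hsum
  · calc ∑ i, |(p i : ℝ)| ≤ Fintype.card (Exponent L) •
          (Fintype.card (Exponent L) * (H ^ (2 * M) * 12 ^ (L * S))) :=
          Finset.sum_le_card_nsmul _ _ _ fun i _ ↦ hbound i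
      _ = L ^ 6 * (H ^ (2 * M) * 12 ^ (L * S)) := by
        rw [card_exponent, nsmul_eq_mul]
        push_cast
        ring

end Existence

section Nonvanishing

variable {n x y L : ℕ}

theorem eq_of_two_pow_mul_three_pow_mul_goldenRatio_pow_eq {a b c a' b' c' : ℕ}
    (h : (2 : ℝ) ^ a * 3 ^ b * Real.goldenRatio ^ c = 2 ^ a' * 3 ^ b' * Real.goldenRatio ^ c') :
    c = c' := by
  wlog hcc : c ≤ c' generalizing a b c a' b' c'
  · exact (this h.symm (by omega)).symm
  obtain ⟨d, rfl⟩ := Nat.exists_eq_add_of_le hcc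
  have hcancel : (2 : ℝ) ^ a * 3 ^ b = 2 ^ a' * 3 ^ b' * Real.goldenRatio ^ d := by
    rw [pow_add, mul_left_comm, mul_comm (_ * _)] at h
    exact mul_left_cancel₀ (pow_pos Real.goldenRatio_pos c).ne' h
  rw [pow_eq_fib_mul_add Real.goldenRatio_sq] at hcancel
  have hfib : (2 ^ a' * 3 ^ b' * Nat.fib d : ℤ) = 0 := by
    refine eq_zero_of_mul_add_eq_zero (x := Real.goldenRatio)
      (w := 2 ^ a' * 3 ^ b' * (Nat.fib (d + 1) - Nat.fib d) - 2 ^ a * 3 ^ b)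
      Real.goldenRatio_irrational ?_
    push_cast
    linear_combination -hcancel
  have hd : d = 0 := by simpa using hfib
  rw [hd, add_zero]

theorem monomialValue_injective : Function.Injective (monomialValue : Exponent L → ℝ) := by
  rintro ⟨a, b, c⟩ ⟨a', b', c'⟩ h
  simp only [monomialValue] at h
  have hc := eq_of_two_pow_mul_three_pow_mul_goldenRatio_pow_eq h
  rw [hc] at h
  have hab : 2 ^ (a : ℕ) * 3 ^ (b : ℕ) = 2 ^ (a' : ℕ) * 3 ^ (b' : ℕ) := by
    exact_mod_cast mul_right_cancel₀ (pow_pos Real.goldenRatio_pos _).ne' h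
  obtain ⟨ha, hb⟩ := two_pow_mul_three_pow_inj hab
  ext <;> assumption

-- The values of the auxiliary function at the integers below `L ^ 3` determine its coefficients by
-- a Vandermonde system.
theorem AuxVanishes.eq_zero {p : Exponent L → ℤ} {M : ℕ} (hM : 0 < M)
    (h : AuxVanishes n x y p M (L ^ 3)) : p = 0 := by
  let e : Fin (L ^ 3) ≃ Exponent L := (Fintype.equivFinOfCardEq card_exponent).symm
  have hvandermonde : (fun j ↦ (p (e j) : ℝ)) = 0 :=
    Matrix.eq_zero_of_forall_pow_sum_mul_pow_eq_zero
      (monomialValue_injective.comp e.injective) fun s ↦ by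
        simpa [auxSum, auxCoeff, ← e.sum_comp] using h 0 0 s (by simpa using hM) s.2
  funext i
  simpa using congrFun hvandermonde (e.symm i)

end Nonvanishing

section Growth

theorem exp_two_gt : (7 : ℝ) < Real.exp 2 := by
  have h : Real.exp 2 = Real.exp 1 ^ 2 := by rw [← Real.exp_nat_mul]; norm_num
  rw [h]
  nlinarith [Real.exp_one_gt_d9]

theorem exp_three_gt : (12 : ℝ) < Real.exp 3 := by
  have h : Real.exp 3 = Real.exp 1 ^ 3 := by rw [← Real.exp_nat_mul]; norm_num
  rw [h]
  exact lt_of_lt_of_le (by norm_num) (pow_le_pow_left₀ (by norm_num) Real.exp_one_gt_d9.le 3)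

theorem pow_le_exp_mul {b c : ℝ} (hb : 0 ≤ b) (hbc : b ≤ Real.exp c) (m : ℕ) :
    b ^ m ≤ Real.exp (m * c) := by
  rw [Real.exp_nat_mul]
  exact pow_le_pow_left₀ hb hbc m

theorem le_exp_div {q : ℝ} (hq : 10 ^ 6 ≤ q) : q ≤ Real.exp (q / 60000) := by
  have hpow : (10 : ℝ) ^ 6 ≤ Real.exp (14 : ℕ) := by
    rw [← mul_one ((14 : ℕ) : ℝ)]
    refine le_trans ?_ (pow_le_exp_mul (b := 2.7) (by norm_num)
      (by linarith [Real.exp_one_gt_d9]) 14)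
    norm_num
  calc q = 10 ^ 6 * (q / 10 ^ 6 - 1 + 1) := by ring
    _ ≤ Real.exp (14 : ℕ) * Real.exp (q / 10 ^ 6 - 1) := by
      gcongr
      · linarith
      · exact Real.add_one_le_exp _
    _ = Real.exp ((14 : ℕ) + (q / 10 ^ 6 - 1)) := (Real.exp_add _ _).symm
    _ ≤ Real.exp (q / 60000) := by
      rw [Real.exp_le_exp]
      push_cast
      linarith

theorem mul_pow_le_pow {q : ℝ} (hq : 10 ^ 6 ≤ q) {i j : ℕ} (hij : i < j) :
    10 ^ 6 * q ^ i ≤ q ^ j :=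
  calc 10 ^ 6 * q ^ i ≤ q * q ^ i := by gcongr
    _ = q ^ (i + 1) := (pow_succ' q i).symm
    _ ≤ q ^ j := pow_le_pow_right₀ (by linarith) hij

theorem pow_mul_pow_eight_le_exp {q : ℕ} (hq : 10 ^ 6 ≤ (q : ℝ)) (m : ℕ) :
    (q : ℝ) ^ (m * q ^ 8) ≤ Real.exp (m / 60000 * q ^ 9) := by
  refine (pow_le_exp_mul (by positivity) (le_exp_div hq) _).trans_eq ?_
  push_cast
  ring_nf

theorem auxCoeff_bound_le_exp {q M : ℕ} (hq : 10 ^ 6 ≤ (q : ℝ)) (hM : M ≤ 17 * q ^ 8) :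
    ((q ^ 6 : ℕ) : ℝ) ^ 6 * (((q : ℝ) ^ 44) ^ (2 * (18 * q ^ 8)) * 12 ^ (q ^ 6 * q))
      * ((q : ℝ) ^ 44) ^ M ≤ Real.exp (q ^ 9 / 20) := by
  have hq1 : (1 : ℝ) ≤ q := by linarith
  have hsize : ((q ^ 6 : ℕ) : ℝ) ^ 6 ≤ Real.exp ((36 : ℕ) * (q / 60000)) := by
    rw [Nat.cast_pow, ← pow_mul]
    exact pow_le_exp_mul (by linarith) (le_exp_div hq) 36
  have hvalues : (12 : ℝ) ^ (q ^ 6 * q) ≤ Real.exp (q ^ 7 * 3) := by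
    refine (pow_le_exp_mul (by norm_num) exp_three_gt.le _).trans_eq ?_
    push_cast
    ring_nf
  have hweights : ((q : ℝ) ^ 44) ^ (2 * (18 * q ^ 8)) * ((q : ℝ) ^ 44) ^ M
      ≤ Real.exp ((2332 : ℕ) / 60000 * q ^ 9) :=
    calc ((q : ℝ) ^ 44) ^ (2 * (18 * q ^ 8)) * ((q : ℝ) ^ 44) ^ M
        ≤ ((q : ℝ) ^ 44) ^ (53 * q ^ 8) := by
          rw [← pow_add]
          exact pow_le_pow_right₀ (one_le_pow₀ hq1) (by omega)
      _ = (q : ℝ) ^ (2332 * q ^ 8) := by rw [← pow_mul]; ring_nf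
      _ ≤ _ := pow_mul_pow_eight_le_exp hq 2332
  calc _ = ((q ^ 6 : ℕ) : ℝ) ^ 6 *
        (((q : ℝ) ^ 44) ^ (2 * (18 * q ^ 8)) * ((q : ℝ) ^ 44) ^ M) * 12 ^ (q ^ 6 * q) := by ring
    _ ≤ Real.exp ((36 : ℕ) * (q / 60000)) * Real.exp ((2332 : ℕ) / 60000 * q ^ 9)
        * Real.exp (q ^ 7 * 3) := by gcongr
    _ = Real.exp ((36 : ℕ) * (q / 60000) + (2332 : ℕ) / 60000 * q ^ 9 + q ^ 7 * 3) := by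
      simp only [Real.exp_add]
    _ ≤ Real.exp (q ^ 9 / 20) := by
      rw [Real.exp_le_exp]
      push_cast
      have h17 : (10 : ℝ) ^ 6 * q ^ 1 ≤ q ^ 7 := mul_pow_le_pow hq (by norm_num)
      have h79 : (10 : ℝ) ^ 6 * q ^ 7 ≤ q ^ 9 := mul_pow_le_pow hq (by norm_num)
      linarith

theorem schwarz_constant_le_exp {q R : ℕ} (hq : 10 ^ 6 ≤ (q : ℝ)) (hR : R ≤ q ^ 18) :
    2 + 2 * (R : ℝ) * (2 * (q ^ 8).factorial) ≤ Real.exp (q ^ 9) := by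
  have hq1 : (1 : ℝ) ≤ q := by linarith
  have hfac : ((q ^ 8).factorial : ℝ) ≤ (q : ℝ) ^ (8 * q ^ 8) := by
    rw [pow_mul]
    exact_mod_cast Nat.factorial_le_pow (q ^ 8)
  have hR' : (R : ℝ) ≤ (q : ℝ) ^ 18 := by exact_mod_cast hR
  have hone : (1 : ℝ) ≤ (q : ℝ) ^ 18 * (q : ℝ) ^ (8 * q ^ 8) :=
    one_le_mul_of_one_le_of_one_le (one_le_pow₀ hq1) (one_le_pow₀ hq1)
  calc 2 + 2 * (R : ℝ) * (2 * (q ^ 8).factorial)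
      ≤ 2 + 2 * (q : ℝ) ^ 18 * (2 * (q : ℝ) ^ (8 * q ^ 8)) := by gcongr
    _ ≤ 6 * ((q : ℝ) ^ 18 * (q : ℝ) ^ (8 * q ^ 8)) := by linarith
    _ ≤ q * ((q : ℝ) ^ 18 * (q : ℝ) ^ (8 * q ^ 8)) := by gcongr; linarith
    _ = (q : ℝ) ^ 19 * (q : ℝ) ^ (8 * q ^ 8) := by ring
    _ ≤ Real.exp ((19 : ℕ) * (q / 60000)) * Real.exp ((8 : ℕ) / 60000 * q ^ 9) := by
      gcongr
      · exact pow_le_exp_mul (by linarith) (le_exp_div hq) 19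
      · exact pow_mul_pow_eight_le_exp hq 8
    _ ≤ Real.exp (q ^ 9) := by
      rw [← Real.exp_add, Real.exp_le_exp]
      push_cast
      have h19 : (10 : ℝ) ^ 6 * q ^ 1 ≤ q ^ 9 := mul_pow_le_pow hq (by norm_num)
      linarith

theorem add_mul_lt_one_of_le_exp {X Y a C f g c d k u δ : ℝ} (hX : 10 ≤ X) (hY : 10 ≤ Y)
    (hXY : X / 20 ≤ Y) (ha : a ≤ Real.exp (-X))
    (hC : C ≤ Real.exp (X / 20)) (hC₀ : 0 ≤ C) (hf : f ≤ Real.exp (X / 20)) (hf₀ : 0 ≤ f)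
    (hg : g ≤ Real.exp (X / 20)) (hg₀ : 0 ≤ g) (hc : c ≤ Real.exp Y)
    (hd : d ≤ Real.exp Y) (hd₀ : 0 ≤ d) (hk : k ≤ Real.exp Y) (hk₀ : 0 ≤ k)
    (hu : u ≤ Real.exp Y) (hu₀ : 0 ≤ u) (hδ : δ ≤ Real.exp (-(10 * Y))) (hδ₀ : 0 ≤ δ) :
    (a * (C * f) + (c + 1) * (C * d * (k * (u * δ)))) * (C * g) < 1 := by
  have hexp : Real.exp (-8) ≤ 1 / 8 := by
    rw [Real.exp_neg, inv_eq_one_div]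
    exact one_div_le_one_div_of_le (by norm_num) (by linarith [Real.add_one_le_exp (8 : ℝ)])
  have hc' : c + 1 ≤ 2 * Real.exp Y := by linarith [Real.one_le_exp (x := Y) (by linarith)]
  have hXY' := Real.exp_le_exp.2 hXY
  have hleft : a * (C * f) * (C * g) ≤ Real.exp (-8) :=
    calc a * (C * f) * (C * g)
        ≤ Real.exp (-X) * (Real.exp (X / 20) * Real.exp (X / 20))
          * (Real.exp (X / 20) * Real.exp (X / 20)) := by gcongr
      _ = Real.exp (-X + (X / 20 + X / 20) + (X / 20 + X / 20)) := by simp only [Real.exp_add]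
      _ ≤ Real.exp (-8) := Real.exp_le_exp.2 (by linarith)
  have hright : (c + 1) * (C * d * (k * (u * δ))) * (C * g) ≤ 2 * Real.exp (-8) :=
    calc (c + 1) * (C * d * (k * (u * δ))) * (C * g)
        ≤ 2 * Real.exp Y * (Real.exp Y * Real.exp Y * (Real.exp Y
          * (Real.exp Y * Real.exp (-(10 * Y))))) * (Real.exp Y * Real.exp Y) := by
          gcongr <;> linarith
      _ = 2 * Real.exp (Y + (Y + Y + (Y + (Y + -(10 * Y)))) + (Y + Y)) := by
        simp only [Real.exp_add]
        ring
      _ ≤ 2 * Real.exp (-8) := by gcongr; linarith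
  linarith [add_mul (a * (C * f)) ((c + 1) * (C * d * (k * (u * δ)))) (C * g)]

theorem one_third_pow_le_exp_neg (m : ℕ) : (1 / 3 : ℝ) ^ m ≤ Real.exp (-m) := by
  rw [one_div, inv_pow, Real.exp_neg]
  refine inv_anti₀ (Real.exp_pos _) ?_
  rw [← mul_one (m : ℝ), Real.exp_nat_mul]
  exact pow_le_pow_left₀ (Real.exp_pos 1).le (by linarith [Real.exp_one_lt_d9]) m

theorem extrapolation_bound_lt_one {q j : ℕ} (hq : 10 ^ 6 ≤ (q : ℝ)) (hj : j < 17) {C δ : ℝ}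
    (hC₀ : 0 ≤ C) (hC : C ≤ Real.exp (q ^ 9 / 20)) (hδ₀ : 0 ≤ δ)
    (hδ : δ ≤ Real.exp (-(10 * q ^ 34))) :
    ((1 / 3) ^ (q ^ (j + 1) * q ^ 8)
        * (C * Real.exp (4 * (q ^ 6 : ℕ) * (7 * (q ^ (j + 2) : ℕ))))
      + ((2 + 2 * (q ^ (j + 2) : ℕ) * (2 * (q ^ 8).factorial)) ^ (q ^ (j + 1) * q ^ 8) + 1)
        * (C * (4 * (q ^ 6 : ℕ)) ^ q ^ 8
          * (Real.exp (4 * (q ^ 6 : ℕ) * (q ^ (j + 2) : ℕ))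
            * (2 * (q ^ 6 : ℕ) * (q ^ (j + 2) : ℕ) * δ))))
      * (C * 6 ^ (q ^ 6 * q ^ (j + 2))) < 1 := by
  have hq1 : (1 : ℝ) ≤ q := by linarith
  have hnat : 1 ≤ q := by exact_mod_cast hq1
  have hLR : ((q ^ 6 : ℕ) : ℝ) * (q ^ (j + 2) : ℕ) = q ^ (j + 8) := by push_cast; ring
  have hLRX : 10 ^ 6 * (q : ℝ) ^ (j + 8) ≤ q ^ (j + 9) := mul_pow_le_pow hq (by omega)
  have hXY : 10 ^ 6 * (q : ℝ) ^ (j + 9) ≤ q ^ 34 := mul_pow_le_pow hq (by omega)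
  have h9X : (q : ℝ) ^ 9 ≤ q ^ (j + 9) := pow_le_pow_right₀ hq1 (by omega)
  have h8 : (1 : ℝ) ≤ q ^ (j + 8) := one_le_pow₀ hq1
  have hST : ((q ^ (j + 1) * q ^ 8 : ℕ) : ℝ) = q ^ (j + 9) := by push_cast; ring
  refine add_mul_lt_one_of_le_exp (X := q ^ (j + 9)) (Y := q ^ 34) (by linarith) (by linarith)
    (by linarith) ((one_third_pow_le_exp_neg _).trans_eq (by rw [hST]))
    (hC.trans (Real.exp_le_exp.2 (by linarith))) hC₀ (Real.exp_le_exp.2 ?_) (Real.exp_pos _).le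
    ?_ (by positivity) ?_ ?_ (by positivity) (Real.exp_le_exp.2 ?_) (Real.exp_pos _).le ?_
    (by positivity) hδ hδ₀
  · linarith
  · refine (pow_le_exp_mul (by norm_num) (le_trans (by norm_num) exp_two_gt.le) _).trans
      (Real.exp_le_exp.2 ?_)
    rw [Nat.cast_mul, hLR]
    linarith
  · refine (pow_le_exp_mul (by positivity)
      (schwarz_constant_le_exp hq (Nat.pow_le_pow_right hnat (by omega))) _).trans
      (Real.exp_le_exp.2 ?_)
    rw [hST, ← pow_add]
    exact pow_le_pow_right₀ hq1 (by omega)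
  · have hL : 4 * ((q ^ 6 : ℕ) : ℝ) ≤ q ^ 7 := by
      have h67 : 10 ^ 6 * (q : ℝ) ^ 6 ≤ q ^ 7 := mul_pow_le_pow hq (by norm_num)
      push_cast
      linarith [one_le_pow₀ hq1 (n := 6)]
    calc (4 * ((q ^ 6 : ℕ) : ℝ)) ^ q ^ 8 ≤ ((q : ℝ) ^ 7) ^ q ^ 8 := by gcongr
      _ = (q : ℝ) ^ (7 * q ^ 8) := (pow_mul _ _ _).symm
      _ ≤ _ := pow_mul_pow_eight_le_exp hq 7
      _ ≤ Real.exp (q ^ 34) := Real.exp_le_exp.2 (by push_cast; linarith)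
  · linarith
  · linarith [Real.add_one_le_exp ((q : ℝ) ^ 34)]

end Growth

section LowerBound

variable {n x y q : ℕ}

theorem weight_le {z a c : ℕ} (hz : z ≤ n) (hnq : n ≤ q ^ 37) (hq : 2 ≤ q) (ha : a ≤ q ^ 6)
    (hc : c ≤ q ^ 6) : n * a + z * c ≤ q ^ 44 :=
  calc n * a + z * c ≤ q ^ 37 * q ^ 6 + q ^ 37 * q ^ 6 := by
        gcongr
        exact hz.trans hnq
    _ = 2 * q ^ 43 := by ring
    _ ≤ q * q ^ 43 := by gcongr
    _ = q ^ 44 := by ring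

theorem twoWeight_le (hx : x ≤ n) (hnq : n ≤ q ^ 37) (hq : 2 ≤ q) (i : Exponent (q ^ 6)) :
    (twoWeight n x i : ℝ) ≤ (q : ℝ) ^ 44 := by
  exact_mod_cast weight_le hx hnq hq i.1.2.le i.2.2.2.le

theorem threeWeight_le (hy : y ≤ n) (hnq : n ≤ q ^ 37) (hq : 2 ≤ q) (i : Exponent (q ^ 6)) :
    (threeWeight n y i : ℝ) ≤ (q : ℝ) ^ 44 := by
  exact_mod_cast weight_le hy hnq hq i.2.1.2.le i.2.2.2.le

theorem AuxVanishes.succ {p : Exponent (q ^ 6) → ℤ} {j : ℕ} (hj : j < 17)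
    (h : AuxVanishes n x y p ((18 - j) * q ^ 8) (q ^ (j + 1))) (hq : 10 ^ 6 ≤ q) (hn : 0 < n)
    (hnq : n ≤ q ^ 37) (hx : x ≤ n) (hy : y ≤ n)
    (hform : |logForm n x y| ≤ Real.exp (-(10 * q ^ 34)))
    (hp : ∑ i, |(p i : ℝ)| ≤
      (q ^ 6 : ℕ) ^ 6 * (((q : ℝ) ^ 44) ^ (2 * (18 * q ^ 8)) * 12 ^ (q ^ 6 * q))) :
    AuxVanishes n x y p ((18 - (j + 1)) * q ^ 8) (q ^ (j + 2)) := by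
  have hq' : (10 : ℝ) ^ 6 ≤ q := by exact_mod_cast hq
  have hq1 : (1 : ℝ) ≤ q := by linarith
  have horder : (18 - j) * q ^ 8 = (18 - (j + 1)) * q ^ 8 + q ^ 8 := by
    rw [show 18 - j = 18 - (j + 1) + 1 by omega, add_mul, one_mul]
  rw [horder] at h
  have hform' : ((q ^ 6 : ℕ) : ℝ) * (q ^ (j + 2) : ℕ) * |logForm n x y| ≤ 1 :=
    calc ((q ^ 6 : ℕ) : ℝ) * (q ^ (j + 2) : ℕ) * |logForm n x y|
        = q ^ (j + 8) * |logForm n x y| := by push_cast; ring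
      _ ≤ Real.exp (10 * q ^ 34) * Real.exp (-(10 * q ^ 34)) := by
        gcongr
        have hpow : (q : ℝ) ^ (j + 8) ≤ q ^ 34 := pow_le_pow_right₀ hq1 (by omega)
        have hpos : (0 : ℝ) ≤ q ^ 34 := by positivity
        linarith [Real.add_one_le_exp (10 * (q : ℝ) ^ 34)]
      _ = 1 := by rw [← Real.exp_add, add_neg_cancel, Real.exp_zero]
  exact h.extrapolate hn (by positivity) (Nat.pow_le_pow_right (by omega) (by omega))
    (by positivity) hform' hp (one_le_pow₀ hq1) (twoWeight_le hx hnq (by omega))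
    (threeWeight_le hy hnq (by omega))
    (extrapolation_bound_lt_one hq' hj (by positivity)
      (auxCoeff_bound_le_exp hq' (Nat.mul_le_mul_right _ (by omega))) (abs_nonneg _) hform)

-- If the form were smaller, Siegel's lemma and repeated extrapolation would produce a nonzero
-- auxiliary function with `q ^ 18 = L ^ 3` zeros, where `L = q ^ 6`.
theorem exp_neg_lt_abs_logForm (hq : 10 ^ 6 ≤ q) (hqn : q ^ 36 ≤ n) (hnq : n ≤ q ^ 37)
    (hx : x ≤ n) (hy : y ≤ n) : Real.exp (-(n / 4)) < |logForm n x y| := by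
  by_contra! hform
  have hq' : (10 : ℝ) ^ 6 ≤ q := by exact_mod_cast hq
  have hform' : |logForm n x y| ≤ Real.exp (-(10 * q ^ 34)) := by
    refine hform.trans (Real.exp_le_exp.2 ?_)
    have hn' : (q : ℝ) ^ 36 ≤ n := by exact_mod_cast hqn
    have hpow : (10 : ℝ) ^ 6 * q ^ 34 ≤ q ^ 36 := mul_pow_le_pow hq' (by norm_num)
    linarith [show (0 : ℝ) ≤ q ^ 34 by positivity]
  obtain ⟨p, hp, hvanishes, hbound⟩ := exists_auxVanishes (n := n) (x := x) (y := y) (L := q ^ 6)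
    (M := 18 * q ^ 8) (S := q) (by positivity) (by omega)
    (by
      calc 4 * (18 * q ^ 8 * (18 * q ^ 8) * q) = 1296 * q ^ 17 := by ring
        _ ≤ q * q ^ 17 := by gcongr; omega
        _ = (q ^ 6) ^ 3 := by ring)
    (one_le_pow₀ (by linarith)) (twoWeight_le hx hnq (by omega)) (threeWeight_le hy hnq (by omega))
  have hq0 : 0 < q := by omega
  have hn0 : 0 < n := (pow_pos hq0 36).trans_le hqn
  have hall (j : ℕ) (hj : j ≤ 17) :
      AuxVanishes n x y p ((18 - j) * q ^ 8) (q ^ (j + 1)) := by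
    induction j with
    | zero => simpa using hvanishes
    | succ j ih =>
      exact (ih (by omega)).succ hj hq hn0 hnq hx hy hform' hbound
  have hfinal := hall 17 le_rfl
  rw [show q ^ (17 + 1) = (q ^ 6) ^ 3 by ring] at hfinal
  exact hp (hfinal.eq_zero (by positivity))

end LowerBound

section FixedPointLogarithms

variable {m t D : ℕ} {T : ℝ}

/-- The first `t` terms of `∑ 1 / ((2 k + 1) m ^ k) = √m * artanh (1 / √m)` in fixed-point
arithmetic: each term is scaled by `D` and rounded down. -/
def artanhSum (m t D : ℕ) : ℕ :=
  ∑ k ∈ Finset.range t, D / ((2 * k + 1) * m ^ k)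

theorem hasSum_artanh (hm : 1 < m) {x : ℝ} (hx : 0 < x) (hxm : x ^ 2 * m = 1) :
    HasSum (fun k : ℕ => 1 / ((2 * k + 1 : ℝ) * m ^ k))
      ((Real.log (1 + x) - Real.log (1 - x)) / (2 * x)) := by
  have hx1 : |x| < 1 := by
    have hm' : (1 : ℝ) < m := by exact_mod_cast hm
    rw [abs_of_pos hx]
    by_contra! h
    nlinarith [one_le_pow₀ (n := 2) h]
  refine ((Real.hasSum_log_sub_log_of_abs_lt_one hx1).div_const (2 * x)).congr_fun fun k => ?_
  have hmk : (m : ℝ) ^ k ≠ 0 := by positivity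
  have hodd : x ^ (2 * k + 1) * (m : ℝ) ^ k = x := by
    rw [pow_succ, pow_mul, mul_right_comm, ← mul_pow, hxm, one_pow, one_mul]
  field_simp
  linarith

theorem artanhSum_le (hT : HasSum (fun k : ℕ => 1 / ((2 * k + 1 : ℝ) * m ^ k)) T) :
    (artanhSum m t D : ℝ) ≤ D * T := by
  calc (artanhSum m t D : ℝ)
      ≤ ∑ k ∈ Finset.range t, D * (1 / ((2 * k + 1 : ℝ) * m ^ k)) := by
        rw [artanhSum, Nat.cast_sum]
        refine Finset.sum_le_sum fun k _ => Nat.cast_div_le.trans_eq ?_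
        push_cast
        rw [mul_one_div]
    _ = D * ∑ k ∈ Finset.range t, 1 / ((2 * k + 1 : ℝ) * m ^ k) := by rw [Finset.mul_sum]
    _ ≤ D * T := by
        gcongr
        exact sum_le_hasSum _ (fun k _ => by positivity) hT

theorem sub_sum_range_le_of_le_pow {f : ℕ → ℝ} {r : ℝ} (hf : HasSum f T) (hr : 0 ≤ r)
    (hr1 : r < 1) (hle : ∀ k, f k ≤ r ^ k) (t : ℕ) :
    T - ∑ k ∈ Finset.range t, f k ≤ r ^ t * (1 - r)⁻¹ :=
  hasSum_le (fun k => (hle (k + t)).trans_eq (by rw [pow_add, mul_comm]))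
    ((hasSum_nat_add_iff' t).mpr hf) ((hasSum_geometric_of_lt_one hr hr1).mul_left (r ^ t))

theorem mul_sum_range_le_artanhSum_add :
    D * ∑ k ∈ Finset.range t, 1 / ((2 * k + 1 : ℝ) * m ^ k) ≤ artanhSum m t D + t := by
  calc D * ∑ k ∈ Finset.range t, 1 / ((2 * k + 1 : ℝ) * m ^ k)
      ≤ ∑ k ∈ Finset.range t, (((D / ((2 * k + 1) * m ^ k) : ℕ) : ℝ) + 1) := by
        rw [Finset.mul_sum]
        refine Finset.sum_le_sum fun k _ => ?_
        have hfloor := (Nat.lt_floor_add_one ((D : ℝ) / ((2 * k + 1) * m ^ k : ℕ))).le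
        rw [Nat.floor_div_eq_div] at hfloor
        refine Eq.trans_le ?_ hfloor
        push_cast
        rw [mul_one_div]
    _ = artanhSum m t D + t := by
        rw [Finset.sum_add_distrib, artanhSum, Nat.cast_sum]
        simp only [Finset.sum_const, Finset.card_range, nsmul_eq_mul, mul_one]

theorem mul_le_artanhSum_add (hm : 2 ≤ m) (hD : D ≤ m ^ t)
    (hT : HasSum (fun k : ℕ => 1 / ((2 * k + 1 : ℝ) * m ^ k)) T) :
    D * T ≤ artanhSum m t D + t + 2 := by
  have hm2 : (2 : ℝ) ≤ m := by exact_mod_cast hm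
  have hr : (m : ℝ)⁻¹ ≤ 2⁻¹ := by gcongr
  have hterm (k : ℕ) : 1 / ((2 * k + 1 : ℝ) * m ^ k) ≤ (m : ℝ)⁻¹ ^ k := by
    rw [inv_pow, ← one_div]
    gcongr
    exact le_mul_of_one_le_left (by positivity) (by linarith [(Nat.cast_nonneg k : (0 : ℝ) ≤ k)])
  have htail : D * (T - ∑ k ∈ Finset.range t, 1 / ((2 * k + 1 : ℝ) * m ^ k)) ≤ 2 := by
    calc D * (T - ∑ k ∈ Finset.range t, 1 / ((2 * k + 1 : ℝ) * m ^ k))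
        ≤ (m : ℝ) ^ t * ((m : ℝ)⁻¹ ^ t * (1 - (m : ℝ)⁻¹)⁻¹) := by
          gcongr
          · exact sub_nonneg.mpr (sum_le_hasSum _ (fun k _ => by positivity) hT)
          · exact_mod_cast hD
          · exact sub_sum_range_le_of_le_pow hT (by positivity) (by linarith) hterm t
      _ = (1 - (m : ℝ)⁻¹)⁻¹ := by
          rw [← mul_assoc, ← mul_pow, mul_inv_cancel₀ (by positivity), one_pow, one_mul]
      _ ≤ 2 := inv_le_of_inv_le₀ (by norm_num) (by linarith)
  linarith [mul_sum_range_le_artanhSum_add (m := m) (t := t) (D := D)]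

theorem hasSum_log_two :
    HasSum (fun k : ℕ => 1 / ((2 * k + 1 : ℝ) * (9 : ℕ) ^ k)) (3 / 2 * Real.log 2) := by
  convert hasSum_artanh (m := 9) (by norm_num) (x := 1 / 3) (by norm_num) (by norm_num) using 1
  rw [← Real.log_div (by norm_num) (by norm_num)]
  norm_num
  ring

theorem hasSum_log_three :
    HasSum (fun k : ℕ => 1 / ((2 * k + 1 : ℝ) * (25 : ℕ) ^ k))
      (5 / 2 * (Real.log 3 - Real.log 2)) := by
  convert hasSum_artanh (m := 25) (by norm_num) (x := 1 / 5) (by norm_num) (by norm_num) using 1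
  rw [← Real.log_div (by norm_num) (by norm_num), ← Real.log_div (by norm_num) (by norm_num)]
  norm_num
  ring

theorem hasSum_log_goldenRatio :
    HasSum (fun k : ℕ => 1 / ((2 * k + 1 : ℝ) * (5 : ℕ) ^ k))
      (√5 * Real.log Real.goldenRatio) := by
  have hpos : (0 : ℝ) < √5 := by positivity
  have hsq : (√5 : ℝ) ^ 2 = 5 := Real.sq_sqrt (by norm_num)
  have hinv : 1 / √5 < 1 := (div_lt_one hpos).mpr (by nlinarith)
  have hne : (1 : ℝ) - 1 / √5 ≠ 0 := by linarith
  have hquot : (1 + 1 / √5) / (1 - 1 / √5) = Real.goldenRatio ^ 2 := by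
    rw [div_eq_iff hne, Real.goldenRatio]
    field_simp
    nlinarith
  convert hasSum_artanh (m := 5) (by norm_num) (x := 1 / √5) (by positivity) (by
    rw [div_pow, hsq]; norm_num) using 1
  rw [← Real.log_div (by positivity) hne, hquot, Real.log_pow]
  push_cast
  field_simp

/-- The scaling factor of the fixed-point computations; the approximations of logarithms below
carry a further factor `15`, which clears the denominators of the series. -/
def fixScale : ℕ := 2 ^ 2240

/-- A fixed-point approximation of `log 2` with scaling factor `15 * fixScale`. -/
def fixLogTwo : ℕ := 10 * artanhSum 9 1000 fixScale

/-- A fixed-point approximation of `log 3` with scaling factor `15 * fixScale`. -/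
def fixLogThree : ℕ := fixLogTwo + 6 * artanhSum 25 1000 fixScale

/-- A fixed-point approximation of `log φ` with scaling factor `15 * fixScale`; the series computes
`√5 * log φ`, so it has to be multiplied by `3 * √5`. -/
def fixLogPhi : ℕ := Nat.sqrt (45 * artanhSum 5 1000 fixScale ^ 2)

theorem abs_log_two_sub_le : |15 * fixScale * Real.log 2 - fixLogTwo| ≤ 20000 := by
  have hlower := artanhSum_le (t := 1000) (D := fixScale) hasSum_log_two
  have hupper := mul_le_artanhSum_add (by norm_num)
    (by decide +kernel : fixScale ≤ 9 ^ 1000) hasSum_log_two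
  rw [fixLogTwo, abs_le]
  push_cast at hupper ⊢
  constructor <;> linarith

theorem abs_log_three_sub_le : |15 * fixScale * Real.log 3 - fixLogThree| ≤ 20000 := by
  have hlower₂ := artanhSum_le (t := 1000) (D := fixScale) hasSum_log_two
  have hupper₂ := mul_le_artanhSum_add (by norm_num)
    (by decide +kernel : fixScale ≤ 9 ^ 1000) hasSum_log_two
  have hlower₃ := artanhSum_le (t := 1000) (D := fixScale) hasSum_log_three
  have hupper₃ := mul_le_artanhSum_add (by norm_num)
    (by decide +kernel : fixScale ≤ 25 ^ 1000) hasSum_log_three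
  rw [fixLogThree, fixLogTwo, abs_le]
  push_cast at hupper₂ hupper₃ ⊢
  constructor <;> linarith

theorem sqrt_fortyFive_mul_sq (s : ℕ) : √((45 * s ^ 2 : ℕ) : ℝ) = 3 * √5 * s := by
  have hsquare : ((45 * s ^ 2 : ℕ) : ℝ) = (3 * √5 * s) ^ 2 := by
    rw [mul_pow, mul_pow, Real.sq_sqrt (by norm_num)]
    push_cast
    ring
  rw [hsquare, Real.sqrt_sq (by positivity)]

theorem abs_log_goldenRatio_sub_le :
    |15 * fixScale * Real.log Real.goldenRatio - fixLogPhi| ≤ 20000 := by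
  have hsq : (√5 : ℝ) ^ 2 = 5 := Real.sq_sqrt (by norm_num)
  have h3 : √5 ≤ 3 := Real.sqrt_le_iff.mpr (by norm_num)
  have hroot_le := Real.nat_sqrt_le_real_sqrt (a := 45 * artanhSum 5 1000 fixScale ^ 2)
  have hroot_lt := Real.real_sqrt_lt_nat_sqrt_succ (a := 45 * artanhSum 5 1000 fixScale ^ 2)
  rw [sqrt_fortyFive_mul_sq, ← fixLogPhi] at hroot_le hroot_lt
  have hlower := mul_le_mul_of_nonneg_left (artanhSum_le (t := 1000) (D := fixScale)
    hasSum_log_goldenRatio) (show 0 ≤ 3 * √5 by positivity)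
  have hupper := mul_le_mul_of_nonneg_left (mul_le_artanhSum_add (by norm_num)
    (by decide +kernel : fixScale ≤ 5 ^ 1000) hasSum_log_goldenRatio)
    (show 0 ≤ 3 * √5 by positivity)
  have hscale : 3 * √5 * (fixScale * (√5 * Real.log Real.goldenRatio))
      = 15 * fixScale * Real.log Real.goldenRatio := by
    linear_combination 3 * fixScale * Real.log Real.goldenRatio * hsq
  rw [hscale] at hlower hupper
  push_cast at hupper
  rw [abs_le]
  constructor <;> linarith

end FixedPointLogarithms

section Reduction

theorem abs_mul_sub_mul_le {a₁ a A B l e δ : ℝ} (happrox : |l - a| ≤ e)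
    (hδ : |A * a₁ - B * a| ≤ δ) : |A * a₁ - B * l| ≤ |B| * e + δ := by
  calc |A * a₁ - B * l| = |B * (a - l) + (A * a₁ - B * a)| := by ring_nf
    _ ≤ |B * (a - l)| + |A * a₁ - B * a| := abs_add_le _ _
    _ ≤ |B| * e + δ := by
        rw [abs_mul, abs_sub_comm a l]
        gcongr

-- Multiplied by `a₁`, the integer on the left is `B * (x l₁ + y l₂ - n l₀)` up to errors which are
-- small because `(A, B, C)` is nearly proportional to `(a₀, a₁, a₂)`.
theorem mul_abs_relation_le {l₀ l₁ l₂ a₀ a₁ a₂ A B C e δ X n x y : ℝ} (h₀ : |l₀ - a₀| ≤ e)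
    (h₁ : |l₁ - a₁| ≤ e) (h₂ : |l₂ - a₂| ≤ e) (hδ₀ : |A * a₁ - B * a₀| ≤ δ)
    (hδ₂ : |C * a₁ - B * a₂| ≤ δ) (hn : |n| ≤ X) (hx : |x| ≤ X) (hy : |y| ≤ X) :
    |a₁ * (x * B + y * C - n * A)|
      ≤ |B| * |x * l₁ + y * l₂ - n * l₀| + 3 * X * (|B| * e + δ) := by
  have hX : 0 ≤ X := (abs_nonneg _).trans hn
  have hδ₁ : |B * a₁ - B * a₁| ≤ δ := by simpa using (abs_nonneg _).trans hδ₀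
  have hB : |x * (B * a₁ - B * l₁)| ≤ X * (|B| * e + δ) := by
    rw [abs_mul]
    exact mul_le_mul hx (abs_mul_sub_mul_le h₁ hδ₁) (abs_nonneg _) hX
  have hC : |y * (C * a₁ - B * l₂)| ≤ X * (|B| * e + δ) := by
    rw [abs_mul]
    exact mul_le_mul hy (abs_mul_sub_mul_le h₂ hδ₂) (abs_nonneg _) hX
  have hA : |n * (A * a₁ - B * l₀)| ≤ X * (|B| * e + δ) := by
    rw [abs_mul]
    exact mul_le_mul hn (abs_mul_sub_mul_le h₀ hδ₀) (abs_nonneg _) hX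
  calc |a₁ * (x * B + y * C - n * A)|
      = |B * (x * l₁ + y * l₂ - n * l₀) + x * (B * a₁ - B * l₁) + y * (C * a₁ - B * l₂)
          - n * (A * a₁ - B * l₀)| := by ring_nf
    _ ≤ |B * (x * l₁ + y * l₂ - n * l₀)| + |x * (B * a₁ - B * l₁)| + |y * (C * a₁ - B * l₂)|
          + |n * (A * a₁ - B * l₀)| :=
        (abs_sub _ _).trans (by gcongr; exact abs_add_three _ _ _)
    _ ≤ _ := by
        rw [abs_mul B]
        linarith

theorem relation_eq_zero_of_lt {S a₀ a₁ a₂ e A B C G X n x y : ℕ} {δ : ℤ}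
    (h₀ : |S * Real.log Real.goldenRatio - a₀| ≤ e) (h₁ : |S * Real.log 2 - a₁| ≤ e)
    (h₂ : |S * Real.log 3 - a₂| ≤ e) (hδ₀ : |(A * a₁ - B * a₀ : ℤ)| ≤ δ)
    (hδ₂ : |(C * a₁ - B * a₂ : ℤ)| ≤ δ) (hn : n ≤ X) (hx : x ≤ X) (hy : y ≤ X)
    (hform : |logForm n x y| * G ≤ 1) (hlt : S * B + 3 * X * (B * e + δ) * G < G * a₁) :
    (x * B + y * C - n * A : ℤ) = 0 := by
  have hδ₀' : |(A * a₁ - B * a₀ : ℝ)| ≤ δ := by exact_mod_cast hδ₀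
  have hδ₂' : |(C * a₁ - B * a₂ : ℝ)| ≤ δ := by exact_mod_cast hδ₂
  have hrelation := mul_abs_relation_le h₀ h₁ h₂ hδ₀' hδ₂' (X := X) (n := n) (x := x) (y := y)
    (by simpa using hn) (by simpa using hx) (by simpa using hy)
  have hscale : (x * (S * Real.log 2) + y * (S * Real.log 3) - n * (S * Real.log Real.goldenRatio))
      = S * logForm n x y := by
    rw [logForm]
    ring
  rw [hscale, abs_mul, abs_mul (S : ℝ), Nat.abs_cast, Nat.abs_cast, Nat.abs_cast] at hrelation
  have hlt' : (S * B + 3 * X * (B * e + δ) * G : ℝ) < G * a₁ := by exact_mod_cast hlt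
  have hmul : a₁ * G * |(x * B + y * C - n * A : ℝ)| < a₁ * G * 1 := by
    calc a₁ * G * |(x * B + y * C - n * A : ℝ)|
        = a₁ * |(x * B + y * C - n * A : ℝ)| * G := by ring
      _ ≤ (B * (S * |logForm n x y|) + 3 * X * (B * e + δ)) * G := by gcongr
      _ = S * B * (|logForm n x y| * G) + 3 * X * (B * e + δ) * G := by ring
      _ ≤ S * B * 1 + 3 * X * (B * e + δ) * G := by gcongr
      _ < a₁ * G * 1 := by linarith
  exact Int.abs_lt_one_iff.mp (by exact_mod_cast lt_of_mul_lt_mul_left hmul (by positivity))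

theorem eq_zero_of_relations {A B C : Fin 3 → ℤ} (hdet : (Matrix.of ![A, B, C]).det ≠ 0)
    {n x y : ℤ} (hrel : ∀ i, x * B i + y * C i - n * A i = 0) : n = 0 := by
  have hker : Matrix.vecMul ![-n, x, y] (Matrix.of ![A, B, C]) = 0 := by
    ext i
    simp only [Matrix.vecMul, dotProduct, Fin.sum_univ_three, Matrix.of_apply, Matrix.cons_val,
      Pi.zero_apply]
    linarith [hrel i]
  simpa using congrFun (Matrix.eq_zero_of_vecMul_eq_zero hdet hker) 0

/-- The integer nearest to `B * a / b`. -/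
def nearestMulDiv (B a b : ℕ) : ℕ := (2 * B * a + b) / (2 * b)

/-- The common denominators of three independent simultaneous approximations of `log φ / log 2` and
`log 3 / log 2`, found by lattice reduction, for exponents up to `10 ^ 216`. -/
def coarseDenominators : Fin 3 → ℕ := ![
  Nat.ofDigits (10 ^ 64) [
    2286879468978286771025356834560117353141709081990762373731514777,
    738545908240447480242903860923171808985990960153697558582177038,
    6867160672646584049307706082343192748518177459501177132268275991,
    6826898263706511919821926059751196397815011143313249293720138638,
    5257457360683485457909489483586184665551955978417835405959187693,
    3758738795638286179997191659363930266894391886254851417101653420,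
    6785509780376648044772643436666257751431422585245129507900474],
  Nat.ofDigits (10 ^ 64) [
    7395342599574758328162623293365562009630392075000394062301848850,
    2865636280944704020568567876677754583043085209763922106741646257,
    7192476957659426413106435277552993489901068291080646205292671617,
    7516330341942979939577937474804353417616149246606314185797061269,
    2757999325428863407089621715728829749484361445449623335550767314,
    4629314844425417407094066089118316147952705036009876224218610945,
    13717714304744875138426095019766818460024090853397505130919579],
  Nat.ofDigits (10 ^ 64) [
    3728164679994543515468558545591828385782627820003290923545526604,
    7365011048196007485660065184653337100909901185810104424831703848,
    8603981432069024860116142190575831327387837740563091681421711252,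
    4577194855305396246973310180411261961888803564521292606901478661,
    7757642649445364162720502371941472672496555303059476403959552805,
    673939075067071676335923160056126127812727763773659029835926534,
    15195256392412075805444878845528352357187499916320765505545617]]

/-- The analogue of `coarseDenominators` for exponents up to `4200`. -/
def fineDenominators : Fin 3 → ℕ := ![20261650315, 16661244543, 22791820039]

/-- The simultaneous approximation with denominator `B` is so good that `logForm n x y` can only be
as small as `1 / G`, with exponents at most `X`, if `(n, x, y)` satisfies the integer relation
given by the approximation. -/
def ForcesRelation (G X B : ℕ) : Prop :=
  ((15 * fixScale : ℕ) : ℤ) * B + 3 * X * (B * 20000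
    + max |(nearestMulDiv B fixLogPhi fixLogTwo * fixLogTwo - B * fixLogPhi : ℤ)|
        |(nearestMulDiv B fixLogThree fixLogTwo * fixLogTwo - B * fixLogThree : ℤ)|) * G
    < G * fixLogTwo

instance (G X B : ℕ) : Decidable (ForcesRelation G X B) :=
  inferInstanceAs (Decidable (_ < _))

theorem eq_zero_of_denominators {G X : ℕ} {B : Fin 3 → ℕ} (hforces : ∀ i, ForcesRelation G X (B i))
    (hdet : (Matrix.of ![fun i => (nearestMulDiv (B i) fixLogPhi fixLogTwo : ℤ), fun i => (B i : ℤ),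
      fun i => (nearestMulDiv (B i) fixLogThree fixLogTwo : ℤ)]).det ≠ 0)
    {n x y : ℕ} (hn : n ≤ X) (hx : x ≤ n) (hy : y ≤ n) (hform : |logForm n x y| * G ≤ 1) :
    n = 0 := by
  have hrel (i : Fin 3) := relation_eq_zero_of_lt
    (e := 20000) (S := 15 * fixScale)
    (by rw [Nat.cast_mul]; exact abs_log_goldenRatio_sub_le)
    (by rw [Nat.cast_mul]; exact abs_log_two_sub_le)
    (by rw [Nat.cast_mul]; exact abs_log_three_sub_le)
    (le_max_left _ _) (le_max_right _ _) hn (hx.trans hn) (hy.trans hn) hform (hforces i)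
  exact_mod_cast eq_zero_of_relations hdet hrel

theorem eq_zero_of_le_ten_pow {n x y : ℕ} (hn : n ≤ 10 ^ 216) (hx : x ≤ n) (hy : y ≤ n)
    (hform : |logForm n x y| * 2 ^ 1500 ≤ 1) : n = 0 :=
  eq_zero_of_denominators (G := 2 ^ 1500) (B := coarseDenominators) (by decide +kernel)
    (by decide +kernel) hn hx hy (by exact_mod_cast hform)

theorem eq_zero_of_le_4200 {n x y : ℕ} (hn : n ≤ 4200) (hx : x ≤ n) (hy : y ≤ n)
    (hform : |logForm n x y| * 2 ^ 40 ≤ 1) : n = 0 :=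
  eq_zero_of_denominators (G := 2 ^ 40) (B := fineDenominators) (by decide +kernel)
    (by decide +kernel) hn hx hy (by exact_mod_cast hform)

end Reduction

section UpperBound

variable {n x y : ℕ}

theorem abs_log_le_of_abs_sub_one_le {r ε : ℝ} (hε : ε ≤ 1 / 2) (hr : |r - 1| ≤ ε) :
    |Real.log r| ≤ 2 * ε := by
  obtain ⟨hlower, hupper⟩ := abs_le.mp hr
  have hpos : 0 < r := by linarith
  have hinv : r⁻¹ - 1 ≤ 2 * ε := by
    rw [show r⁻¹ - 1 = (1 - r) / r by field_simp, div_le_iff₀ hpos]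
    nlinarith
  rw [abs_le]
  constructor <;> linarith [Real.log_le_sub_one_of_pos hpos, Real.one_sub_inv_le_log_of_pos hpos]

theorem mul_pow_four_le_pow (hn : 112 ≤ n) : (290 * n ^ 4 : ℝ) ≤ 1.25 ^ n := by
  induction n, hn using Nat.le_induction with
  | base => norm_num
  | succ n hn ih =>
    have hn' : (112 : ℝ) ≤ n := by exact_mod_cast hn
    push_cast
    calc 290 * ((n : ℝ) + 1) ^ 4 ≤ 290 * (1.01 * n) ^ 4 := by gcongr; linarith
      _ = 1.01 ^ 4 * (290 * (n : ℝ) ^ 4) := by ring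
      _ ≤ 1.25 * 1.25 ^ n := by gcongr; norm_num
      _ = 1.25 ^ (n + 1) := by ring

theorem exp_quarter_mul_pow_le (hn : 112 ≤ n) :
    Real.exp (n / 4) * (290 * n ^ 4) ≤ Real.goldenRatio ^ n := by
  have hexp : Real.exp (1 / 4) ≤ 1.29 := by
    refine (pow_le_pow_iff_left₀ (Real.exp_pos _).le (by norm_num) (n := 4) (by norm_num)).mp ?_
    rw [← Real.exp_nat_mul]
    norm_num
    linarith [Real.exp_one_lt_d9]
  have hphi : (1.29 : ℝ) * 1.25 ≤ Real.goldenRatio := by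
    have hsqrt : (2.23 : ℝ) ≤ √5 := Real.le_sqrt_of_sq_le (by norm_num)
    rw [Real.goldenRatio]
    linarith
  calc Real.exp (n / 4) * (290 * n ^ 4) = Real.exp (1 / 4) ^ n * (290 * n ^ 4) := by
        rw [← Real.exp_nat_mul, mul_one_div]
    _ ≤ 1.29 ^ n * 1.25 ^ n := by
        gcongr
        exact mul_pow_four_le_pow hn
    _ = (1.29 * 1.25) ^ n := (mul_pow _ _ _).symm
    _ ≤ Real.goldenRatio ^ n := by gcongr

theorem abs_div_goldenRatio_pow_sub_one_le (hn : 112 ≤ n) (hlower : lucas n < 2 ^ x * 3 ^ y)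
    (hupper : 2 ^ x * 3 ^ y ≤ lucas n + 144 * (n : ℤ) ^ 4 + 15552) :
    |(2 ^ x * 3 ^ y / Real.goldenRatio ^ n : ℝ) - 1| ≤ Real.exp (-(n / 4)) / 2 := by
  have hpos : 0 < Real.goldenRatio ^ n := pow_pos Real.goldenRatio_pos n
  have hlower' : (lucas n : ℝ) < 2 ^ x * 3 ^ y := by exact_mod_cast hlower
  have hupper' : (2 ^ x * 3 ^ y : ℝ) ≤ lucas n + 144 * (n : ℝ) ^ 4 + 15552 := by
    exact_mod_cast hupper
  rw [lucas_eq_goldenRatio_pow_add] at hlower' hupper'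
  have hconj := abs_le.mp (abs_goldenConj_pow_le_one n)
  have hpow : (112 : ℝ) ^ 4 ≤ (n : ℝ) ^ 4 := by gcongr; exact_mod_cast hn
  calc |(2 ^ x * 3 ^ y / Real.goldenRatio ^ n : ℝ) - 1|
      = |(2 ^ x * 3 ^ y - Real.goldenRatio ^ n : ℝ)| / Real.goldenRatio ^ n := by
        rw [div_sub_one hpos.ne', abs_div, abs_of_pos hpos]
    _ ≤ 145 * (n : ℝ) ^ 4 / Real.goldenRatio ^ n := by
        gcongr
        rw [abs_le]
        constructor <;> linarith
    _ ≤ Real.exp (-(n / 4)) / 2 := by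
        rw [Real.exp_neg, div_le_div_iff₀ hpos (by norm_num), ← div_eq_inv_mul,
          le_div_iff₀ (Real.exp_pos _)]
        linarith [exp_quarter_mul_pow_le hn]

theorem abs_logForm_le (hn : 112 ≤ n) (hlower : lucas n < 2 ^ x * 3 ^ y)
    (hupper : 2 ^ x * 3 ^ y ≤ lucas n + 144 * (n : ℤ) ^ 4 + 15552) :
    |logForm n x y| ≤ Real.exp (-(n / 4)) := by
  have hpos : 0 < Real.goldenRatio ^ n := pow_pos Real.goldenRatio_pos n
  have hlog : logForm n x y = Real.log (2 ^ x * 3 ^ y / Real.goldenRatio ^ n) := by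
    rw [Real.log_div (by positivity) hpos.ne', Real.log_mul (by positivity) (by positivity),
      Real.log_pow, Real.log_pow, Real.log_pow, logForm]
  have hexp : Real.exp (-((n : ℝ) / 4)) ≤ 1 :=
    Real.exp_le_one_iff.mpr (by rw [Left.neg_nonpos_iff]; positivity)
  rw [hlog, ← mul_div_cancel₀ (Real.exp (-(n / 4 : ℝ))) two_ne_zero]
  exact abs_log_le_of_abs_sub_one_le (by linarith)
    (abs_div_goldenRatio_pow_sub_one_le hn hlower hupper)

theorem log_goldenRatio_le : Real.log Real.goldenRatio ≤ 3 / 4 * Real.log 2 := by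
  have hpow : Real.goldenRatio ^ 4 ≤ 2 ^ 3 := by
    calc Real.goldenRatio ^ 4 = 3 * Real.goldenRatio + 2 := by
          linear_combination (Real.goldenRatio ^ 2 + Real.goldenRatio + 2) * Real.goldenRatio_sq
      _ ≤ 2 ^ 3 := by linarith [Real.goldenRatio_lt_two]
  have hlog := Real.log_le_log (pow_pos Real.goldenRatio_pos 4) hpow
  rw [Real.log_pow, Real.log_pow] at hlog
  push_cast at hlog
  linarith

theorem add_le_of_abs_logForm_le (hn : 8 ≤ n) (hform : |logForm n x y| ≤ 1) : x + y ≤ n := by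
  have hlog : Real.log 2 ≤ Real.log 3 := Real.log_le_log (by norm_num) (by norm_num)
  have hn' : (8 : ℝ) ≤ n := by exact_mod_cast hn
  have hphi : (n : ℝ) * Real.log Real.goldenRatio ≤ n * (3 / 4 * Real.log 2) := by
    gcongr
    exact log_goldenRatio_le
  have hthree : (y : ℝ) * Real.log 2 ≤ y * Real.log 3 := by gcongr
  have hupper := (abs_le.mp hform).2
  rw [logForm] at hupper
  have hmul : (x + y : ℝ) * Real.log 2 ≤ n * Real.log 2 := by
    nlinarith [Real.log_two_gt_d9]
  exact_mod_cast le_of_mul_le_mul_right hmul (Real.log_pos one_lt_two)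

theorem mul_two_pow_le_one_of_le_exp {r : ℝ} {k : ℕ} (hk : 28 * k ≤ n)
    (hr : r ≤ Real.exp (-(n / 4))) : r * 2 ^ (10 * k) ≤ 1 := by
  have hk' : (28 * k : ℝ) ≤ n := by exact_mod_cast hk
  have hseven : (2 : ℝ) ^ 10 ≤ Real.exp 7 := by
    calc (2 : ℝ) ^ 10 ≤ 2.7182 ^ 7 := by norm_num
      _ ≤ Real.exp 1 ^ 7 := by gcongr; linarith [Real.exp_one_gt_d9]
      _ = Real.exp 7 := by rw [← Real.exp_nat_mul]; norm_num
  have hpow : (2 : ℝ) ^ (10 * k) ≤ Real.exp (n / 4) := by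
    calc (2 : ℝ) ^ (10 * k) = ((2 : ℝ) ^ 10) ^ k := pow_mul _ _ _
      _ ≤ Real.exp 7 ^ k := by gcongr
      _ = Real.exp (k * 7) := by rw [Real.exp_nat_mul]
      _ ≤ Real.exp (n / 4) := Real.exp_le_exp.mpr (by linarith)
  calc r * 2 ^ (10 * k) ≤ Real.exp (-(n / 4)) * Real.exp (n / 4) := by gcongr
    _ = 1 := by rw [← Real.exp_add, neg_add_cancel, Real.exp_zero]

theorem succ_pow_mul_le {q : ℕ} (k d : ℕ) (h : k + d ≤ q) : (q + 1) ^ k * d ≤ q ^ (k + 1) := by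
  induction k generalizing d with
  | zero => simpa using h
  | succ k ih =>
    calc (q + 1) ^ (k + 1) * d = (q + 1) ^ k * ((q + 1) * d) := by ring
      _ ≤ (q + 1) ^ k * ((d + 1) * q) := Nat.mul_le_mul_left _ (by linarith)
      _ = (q + 1) ^ k * (d + 1) * q := by ring
      _ ≤ q ^ (k + 1) * q := Nat.mul_le_mul_right _ (ih (d + 1) (by omega))
      _ = q ^ (k + 1 + 1) := (pow_succ _ _).symm

theorem succ_pow_le_pow_succ {k q : ℕ} (h : k < q) : (q + 1) ^ k ≤ q ^ (k + 1) := by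
  simpa using succ_pow_mul_le k 1 h

theorem exists_pow_le_le_pow (hn : 10 ^ 216 ≤ n) :
    ∃ q : ℕ, 10 ^ 6 ≤ q ∧ q ^ 36 ≤ n ∧ n ≤ q ^ 37 := by
  have hq : 10 ^ 6 ≤ Nat.nthRoot 36 n := by
    rw [Nat.le_nthRoot_iff (by norm_num), ← pow_mul]
    exact hn
  exact ⟨Nat.nthRoot 36 n, hq, Nat.pow_nthRoot_le (.inl (by norm_num)),
    (Nat.lt_pow_nthRoot_add_one (by norm_num) n).le.trans (succ_pow_le_pow_succ (by omega))⟩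

theorem lt_of_lucas_window (hlower : lucas n < 2 ^ x * 3 ^ y)
    (hupper : 2 ^ x * 3 ^ y ≤ lucas n + 144 * (n : ℤ) ^ 4 + 15552) : n < 112 := by
  by_contra! hn
  have hform := abs_logForm_le hn hlower hupper
  have hsum : x + y ≤ n := add_le_of_abs_logForm_le (by omega)
    (hform.trans (Real.exp_le_one_iff.mpr (by rw [Left.neg_nonpos_iff]; positivity)))
  have hx : x ≤ n := by omega
  have hy : y ≤ n := by omega
  have hn_fine : 4200 < n := by
    by_contra! hle
    have := eq_zero_of_le_4200 hle hx hy (mul_two_pow_le_one_of_le_exp (k := 4) (by omega) hform)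
    omega
  have hn_coarse : 10 ^ 216 < n := by
    by_contra! hle
    have := eq_zero_of_le_ten_pow hle hx hy
      (mul_two_pow_le_one_of_le_exp (k := 150) (by omega) hform)
    omega
  obtain ⟨q, hq, hqn, hnq⟩ := exists_pow_le_le_pow hn_coarse.le
  exact hform.not_gt (exp_neg_lt_abs_logForm hq hqn hnq hx hy)

end UpperBound

section Evaluation

variable {α β : Type*}

/-- `force n f = f n`, but the recursor makes the kernel evaluate `n` to a numeral first. -/
def force (n : ℕ) (f : ℕ → α) : α :=
  n.rec (f 0) fun k _ ↦ f (k + 1)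

@[simp] theorem force_eq (n : ℕ) (f : ℕ → α) : force n f = f n := by
  cases n <;> rfl

/-- `List.foldr`, written with the recursor, which the kernel unfolds several times faster than
the compiled structural recursion. -/
def foldRight (f : α → β → β) (b : β) (l : List α) : β :=
  l.rec b fun a _ ih ↦ f a ih

theorem foldRight_eq_foldr (f : α → β → β) (b : β) (l : List α) :
    foldRight f b l = l.foldr f b := by
  induction l with
  | nil => rfl
  | cons a l ih => exact congrArg (f a) ih

theorem subset_foldRight {f : α → List β → List β} (hf : ∀ a acc, acc ⊆ f a acc)
    (acc : List β) (l : List α) : acc ⊆ foldRight f acc l := by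
  rw [foldRight_eq_foldr]
  induction l with
  | nil => exact fun _ h ↦ h
  | cons a l ih => exact fun _ h ↦ hf a _ (ih h)

theorem mem_foldRight {f : α → List β → List β} (hf : ∀ a acc, acc ⊆ f a acc)
    {acc : List β} {l : List α} {a : α} (ha : a ∈ l) {b : β} (hb : ∀ acc, b ∈ f a acc) :
    b ∈ foldRight f acc l := by
  rw [foldRight_eq_foldr]
  induction l with
  | nil => simp at ha
  | cons a' l ih =>
    rcases List.mem_cons.1 ha with rfl | ha
    · exact hb _
    · exact hf a' _ (ih ha)

/-- `List.all`, by `foldRight`. -/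
def all (l : List α) (f : α → Bool) : Bool :=
  foldRight (fun a b ↦ bif f a then b else false) true l

theorem apply_of_all {l : List α} {f : α → Bool} (h : all l f = true) {a : α} (ha : a ∈ l) :
    f a = true := by
  rw [all, foldRight_eq_foldr] at h
  induction l with
  | nil => simp at ha
  | cons a' l ih =>
    rw [List.foldr_cons, Bool.cond_false_right, Bool.and_eq_true] at h
    rcases List.mem_cons.1 ha with rfl | ha
    exacts [h.1, ih h.2 ha]

/-- The pair `(fib n, fib (n + 1))` by fast doubling, for `n ≤ fuel`. -/
def fibPair (fuel : ℕ) : ℕ → ℕ × ℕ :=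
  fuel.rec (fun _ ↦ (0, 1)) fun _ ih n ↦
    bif n.beq 0 then (0, 1) else
    (ih (n / 2)).rec fun a b ↦
      force (a * (2 * b - a)) fun c ↦ force (b * b + a * a) fun d ↦
        bif (n % 2).beq 0 then (c, d) else (d, c + d)

theorem fibPair_succ (fuel : ℕ) {n : ℕ} (hn : n ≠ 0) :
    fibPair (fuel + 1) n =
      let p := fibPair fuel (n / 2)
      let q := (p.1 * (2 * p.2 - p.1), p.2 * p.2 + p.1 * p.1)
      bif (n % 2).beq 0 then q else (q.2, q.1 + q.2) := by
  obtain ⟨n, rfl⟩ := Nat.exists_eq_succ_of_ne_zero hn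
  simp only [fibPair, force_eq]
  rfl

theorem fibPair_eq {fuel n : ℕ} (h : n ≤ fuel) :
    fibPair fuel n = (Nat.fib n, Nat.fib (n + 1)) := by
  induction fuel generalizing n with
  | zero =>
    obtain rfl : n = 0 := Nat.le_zero.1 h
    rfl
  | succ fuel ih =>
    rcases eq_or_ne n 0 with rfl | hn
    · rfl
    rw [fibPair_succ fuel hn, ih (by omega)]
    simp only [← sq, ← Nat.fib_two_mul, ← Nat.fib_two_mul_add_one, ← Nat.fib_add_two]
    rcases Nat.mod_two_eq_zero_or_one n with hmod | hmod
    · rw [hmod, show 2 * (n / 2) = n by omega]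
      rfl
    · rw [hmod, show n = 2 * (n / 2) + 1 by omega, show (2 * (n / 2) + 1) / 2 = n / 2 by omega]
      rfl

/-- The Lucas numbers as natural numbers, in a form suited to evaluation. -/
def lucasNat (n : ℕ) : ℕ := (fibPair n n).rec fun a b ↦ 2 * b - a

theorem lucas_eq_lucasNat (n : ℕ) : lucas n = lucasNat n := by
  have hle : Nat.fib n ≤ 2 * Nat.fib (n + 1) := by
    have := Nat.fib_le_fib_succ (n := n)
    omega
  rw [lucas_eq_fib, lucasNat, fibPair_eq le_rfl]
  push_cast [hle]
  rfl

end Evaluation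

section Periodicity

/-- `f` has period `o` from `k` onwards. -/
def EventuallyPeriodic {α : Type*} (f : ℕ → α) (k o : ℕ) : Prop :=
  ∀ n ≥ k, f (n + o) = f n

theorem EventuallyPeriodic.add_mul {α : Type*} {f : ℕ → α} {k o : ℕ}
    (hf : EventuallyPeriodic f k o) {n : ℕ} (hn : k ≤ n) (i : ℕ) : f (n + i * o) = f n := by
  induction i with
  | zero => simp
  | succ i ih => rw [Nat.succ_mul, ← Nat.add_assoc, hf _ (by omega), ih]

theorem eventuallyPeriodic_pow_mod {a m k o : ℕ} (h : a ^ (k + o) % m = a ^ k % m) :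
    EventuallyPeriodic (a ^ · % m) k o := by
  intro n hn
  obtain ⟨i, rfl⟩ := Nat.exists_eq_add_of_le hn
  change a ^ (k + o) ≡ a ^ k [MOD m] at h
  change a ^ (k + i + o) ≡ a ^ (k + i) [MOD m]
  rw [add_right_comm, pow_add _ (k + o), pow_add _ k i]
  exact h.mul_right _

theorem eventuallyPeriodic_lucasNat_mod {m T : ℕ} (h₀ : lucasNat T % m = 2 % m)
    (h₁ : lucasNat (T + 1) % m = 1 % m) : EventuallyPeriodic (lucasNat · % m) 0 T := by
  have add_two (n : ℕ) : lucasNat (n + 2) = lucasNat (n + 1) + lucasNat n := by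
    have := lucas.eq_3 n
    simp only [lucas_eq_lucasNat] at this
    exact_mod_cast this
  suffices ∀ n, lucasNat (n + T) ≡ lucasNat n [MOD m] from fun n _ ↦ this n
  intro n
  induction n using Nat.twoStepInduction with
  | zero => rw [Nat.zero_add]; exact h₀
  | one => rw [Nat.add_comm]; exact h₁
  | more n ih₀ ih₁ =>
    rw [add_two, Nat.add_right_comm, add_two, Nat.add_right_comm]
    exact ih₁.add ih₀

/-- The representative of `n` below `k + o` at which a function of period `o` from `k` onwards
takes the same value. -/
def reduce (k o n : ℕ) : ℕ :=
  bif n.ble k then n else k + (n - k) % o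

theorem EventuallyPeriodic.apply_reduce {α : Type*} {f : ℕ → α} {k o : ℕ}
    (hf : EventuallyPeriodic f k o) (n : ℕ) : f (reduce k o n) = f n := by
  rcases hb : n.ble k
  · have hk : k < n := by simpa using Nat.not_le_of_not_ble_eq_true (by simp [hb])
    rw [reduce, hb, cond_false, ← hf.add_mul (Nat.le_add_right _ _) ((n - k) / o)]
    congr 1
    have := Nat.mod_add_div' (n - k) o
    omega
  · rw [reduce, hb, cond_true]

end Periodicity

section Progressions

/-- The arithmetic progression `start, start + step, start + 2 * step, …`, which is a single point
if `step = 0`. -/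
structure Progression where
  start : ℕ
  step : ℕ

instance : Membership ℕ Progression :=
  ⟨fun p n ↦ ∃ i, n = p.start + i * p.step⟩

theorem Progression.start_mem (start step : ℕ) : start ∈ Progression.mk start step :=
  ⟨0, by simp⟩

/-- Prepends to `acc` the progressions of step `newStep` starting at the first `count` members of
the progression `⟨start, step⟩`, each with the value of `f` at its start. -/
def segment (f : ℕ → ℕ) (start step newStep count : ℕ) (acc : List (Progression × ℕ)) :
    List (Progression × ℕ) :=
  count.rec (fun _ ↦ acc)
    (fun _ ih r ↦ force (f r) fun v ↦ (⟨r, newStep⟩, v) :: force (r + step) ih) start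

theorem segment_succ (f : ℕ → ℕ) (start step newStep count : ℕ) (acc : List (Progression × ℕ)) :
    segment f start step newStep (count + 1) acc =
      (⟨start, newStep⟩, f start) :: segment f (start + step) step newStep count acc := by
  simp only [segment, force_eq]

theorem subset_segment (f : ℕ → ℕ) (start step newStep count : ℕ)
    (acc : List (Progression × ℕ)) : acc ⊆ segment f start step newStep count acc := by
  induction count generalizing start with
  | zero => exact fun _ h ↦ h
  | succ count ih =>
    rw [segment_succ]
    exact List.subset_cons_of_subset _ (ih _)

theorem mem_segment (f : ℕ → ℕ) (start step newStep : ℕ) {i count : ℕ} (hi : i < count)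
    (acc : List (Progression × ℕ)) :
    (⟨start + i * step, newStep⟩, f (start + i * step)) ∈
      segment f start step newStep count acc := by
  induction count generalizing start i with
  | zero => omega
  | succ count ih =>
    rw [segment_succ]
    cases i with
    | zero => simp
    | succ i =>
      rw [show start + (i + 1) * step = start + step + i * step by ring]
      exact List.mem_cons_of_mem _ (ih _ (Nat.lt_of_succ_lt_succ hi))

/-- For `f` of period `o` from `k` onwards: a decomposition of `p` into progressions on which `f`
is constant, each with the value of `f` there. The members of `p` below `k` are listed as points. -/
def pieces (f : ℕ → ℕ) (k o : ℕ) (p : Progression) : List (Progression × ℕ) :=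
  force ((k - p.start + (p.step - 1)) / p.step) fun e ↦
  force (o / Nat.gcd o p.step) fun q ↦
  force (q * p.step) fun s ↦
  segment (fun n ↦ force (reduce k o n) f) p.start p.step 0 e <|
  segment (fun n ↦ force (reduce k o n) f) (p.start + e * p.step) p.step s q []

theorem exists_mem_pieces {f : ℕ → ℕ} {k o n : ℕ} {p : Progression}
    (hf : EventuallyPeriodic f k o) (ho : 0 < o) (hn : n ∈ p) :
    ∃ piece, (piece, f n) ∈ pieces f k o p ∧ n ∈ piece := by
  obtain ⟨i, rfl⟩ := hn
  simp only [pieces, force_eq, hf.apply_reduce]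
  set e := (k - p.start + (p.step - 1)) / p.step with he
  set q := o / Nat.gcd o p.step
  rcases lt_or_ge i e with hi | hi
  · exact ⟨_, mem_segment f p.start p.step 0 hi _, Progression.start_mem ..⟩
  have hq : 0 < q := Nat.div_pos (Nat.gcd_le_left _ ho) (Nat.gcd_pos_of_pos_left _ ho)
  obtain ⟨c, hc⟩ : o ∣ q * p.step := by
    rw [Nat.div_mul_right_comm (Nat.gcd_dvd_left ..)]
    exact Dvd.intro _ (Nat.mul_div_assoc _ (Nat.gcd_dvd_right ..)).symm
  have split : p.start + i * p.step
      = p.start + e * p.step + (i - e) % q * p.step + (i - e) / q * (q * p.step) := by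
    conv_lhs => rw [← Nat.add_sub_cancel' hi, ← Nat.mod_add_div' (i - e) q]
    ring
  have constant : f (p.start + i * p.step) = f (p.start + e * p.step + (i - e) % q * p.step) := by
    rw [split, hc]
    rcases Nat.eq_zero_or_pos p.step with hstep | hstep
    · have : c = 0 := by simpa [hstep, ho.ne'] using hc.symm
      simp [this]
    · rw [Nat.mul_comm o, ← Nat.mul_assoc]
      refine hf.add_mul ?_ _
      have := Nat.lt_div_mul_add hstep (a := k - p.start + (p.step - 1))
      rw [← he] at this
      omega
  rw [constant]
  exact ⟨_, subset_segment _ _ _ _ _ _ (mem_segment f _ p.step (q * p.step) (Nat.mod_lt _ hq) _),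
    (i - e) / q, split⟩

/-- Runs through the pieces of `p` with a step `g` that prepends elements to an accumulator. -/
def forPieces {β : Type*} (f : ℕ → ℕ) (k o : ℕ) (p : Progression)
    (g : Progression → ℕ → List β → List β) (acc : List β) : List β :=
  foldRight (fun t acc ↦ t.rec fun piece v ↦ g piece v acc) acc (pieces f k o p)

theorem subset_forPieces {β : Type*} {g : Progression → ℕ → List β → List β}
    (hg : ∀ piece v acc, acc ⊆ g piece v acc) (f : ℕ → ℕ) (k o : ℕ) (p : Progression)
    (acc : List β) : acc ⊆ forPieces f k o p g acc :=
  subset_foldRight (fun ⟨piece, v⟩ ↦ hg piece v) acc _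

theorem exists_mem_forPieces {β : Type*} {f : ℕ → ℕ} {k o n : ℕ} {p : Progression}
    (hf : EventuallyPeriodic f k o) (ho : 0 < o) (hn : n ∈ p)
    {g : Progression → ℕ → List β → List β} (hg : ∀ piece v acc, acc ⊆ g piece v acc)
    {P : β → Prop} (h : ∀ piece, n ∈ piece → ∃ b, P b ∧ ∀ acc, b ∈ g piece (f n) acc) :
    ∃ b, P b ∧ ∀ acc, b ∈ forPieces f k o p g acc := by
  obtain ⟨piece, hpiece, hn⟩ := exists_mem_pieces hf ho hn
  obtain ⟨b, hb, hmem⟩ := h piece hn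
  exact ⟨b, hb, fun acc ↦ mem_foldRight (fun ⟨piece, v⟩ ↦ hg piece v) hpiece hmem⟩

end Progressions

section Boxes

/-- A product of progressions, as a set of triples `(n, x, y)`. -/
structure Box where
  n : Progression
  x : Progression
  y : Progression

/-- `L_n + C = 2 ^ x * 3 ^ y` has a solution with `(n, x, y)` in the box. -/
def Box.HasSolution (C : ℕ) (c : Box) : Prop :=
  ∃ n ∈ c.n, ∃ x ∈ c.x, ∃ y ∈ c.y, lucasNat n + C = 2 ^ x * 3 ^ y

/-- A modulus `m` with a period `T` of the Lucas numbers modulo `m`, and with periods `o` from `k`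
onwards and `q` from `j` onwards of the powers of `2` and of `3` modulo `m`. -/
structure Modulus where
  m : ℕ
  T : ℕ
  k : ℕ
  o : ℕ
  j : ℕ
  q : ℕ

/-- The correctness of the data of a `Modulus`. -/
def Modulus.IsValid (M : Modulus) : Prop :=
  (0 < M.m ∧ 0 < M.T ∧ 0 < M.o ∧ 0 < M.q) ∧
    (lucasNat M.T % M.m = 2 % M.m ∧ lucasNat (M.T + 1) % M.m = 1 % M.m) ∧
    2 ^ (M.k + M.o) % M.m = 2 ^ M.k % M.m ∧ 3 ^ (M.j + M.q) % M.m = 3 ^ M.j % M.m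

instance (M : Modulus) : Decidable M.IsValid :=
  inferInstanceAs (Decidable (_ ∧ _))

/-- The product of two progressions is a single point `(x, y)` with `2 ^ x * 3 ^ y` small. -/
def isSmall (x y : Progression) : Bool :=
  bif (x.step + y.step).beq 0 then (2 ^ x.start * 3 ^ y.start).ble 15552 else false

theorem le_of_isSmall {x y : Progression} (h : isSmall x y = true) {i j : ℕ} (hi : i ∈ x)
    (hj : j ∈ y) : 2 ^ i * 3 ^ j ≤ 15552 := by
  obtain ⟨s, rfl⟩ := hi
  obtain ⟨t, rfl⟩ := hj
  rw [isSmall, Bool.cond_false_right, Bool.and_eq_true, Nat.beq_eq, Nat.ble_eq] at h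
  have ⟨hx, hy⟩ := Nat.add_eq_zero_iff.1 h.1
  simpa only [hx, hy, Nat.mul_zero, Nat.add_zero] using h.2

/-- Splits a box along the periods modulo `M.m`, omitting the small boxes; each part is preceded by
the only residue modulo `M.m` of a `C` for which it has a solution. -/
def children (M : Modulus) (c : Box) : List (ℕ × Box) → List (ℕ × Box) :=
  forPieces (lucasNat · % M.m) 0 M.T c.n fun n u ↦
    forPieces (2 ^ · % M.m) M.k M.o c.x fun x a ↦
      forPieces (3 ^ · % M.m) M.j M.q c.y fun y b acc ↦
        bif isSmall x y then acc
        else force ((a * b + (M.m - u)) % M.m) fun r ↦ (r, ⟨n, x, y⟩) :: acc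

theorem residue_eq {m u a b C : ℕ} (hm : 0 < m) (h : u + C = a * b) :
    (a % m * (b % m) + (m - u % m)) % m = C % m := by
  change _ ≡ C [MOD m]
  refine Nat.ModEq.add_right_cancel' (u % m) ?_
  calc a % m * (b % m) + (m - u % m) + u % m
      = a % m * (b % m) + m := by have := (Nat.mod_lt u hm).le; omega
    _ ≡ a * b + 0 [MOD m] :=
      ((Nat.mod_modEq a m).mul (Nat.mod_modEq b m)).add (Nat.modEq_zero_iff_dvd.2 dvd_rfl)
    _ = C + u := by rw [← h]; ring
    _ ≡ C + u % m [MOD m] := (Nat.mod_modEq u m).symm.add_left C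

theorem exists_mem_children {M : Modulus} (hM : M.IsValid) {C : ℕ} (hC : 15552 < C) {c : Box}
    (hc : c.HasSolution C) : ∃ c', (C % M.m, c') ∈ children M c [] ∧ c'.HasSolution C := by
  obtain ⟨n, hn, x, hx, y, hy, heq⟩ := hc
  obtain ⟨⟨hm, hT, ho, hq⟩, ⟨hlucas₀, hlucas₁⟩, htwo, hthree⟩ := hM
  have prepends (n u x a y b) (acc : List (ℕ × Box)) : acc ⊆ bif isSmall x y then acc
      else force ((a * b + (M.m - u)) % M.m) fun r ↦ (r, ⟨n, x, y⟩) :: acc := by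
    cases isSmall x y
    · simp
    · exact fun _ h ↦ h
  suffices ∃ t : ℕ × Box, (t.1 = C % M.m ∧ t.2.HasSolution C) ∧
      ∀ acc : List (ℕ × Box), t ∈ children M c acc by
    obtain ⟨⟨_, c'⟩, ⟨rfl, hc'⟩, hmem⟩ := this
    exact ⟨c', hmem [], hc'⟩
  refine exists_mem_forPieces (eventuallyPeriodic_lucasNat_mod hlucas₀ hlucas₁) hT hn
    (fun n u ↦ subset_forPieces (fun x a ↦ subset_forPieces (prepends n u x a) _ _ _ _) _ _ _ _) ?_
  intro pn hpn
  refine exists_mem_forPieces (eventuallyPeriodic_pow_mod htwo) ho hx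
    (fun x a ↦ subset_forPieces (prepends pn _ x a) _ _ _ _) ?_
  intro px hpx
  refine exists_mem_forPieces (eventuallyPeriodic_pow_mod hthree) hq hy (prepends pn _ px _) ?_
  intro py hpy
  have large : isSmall px py = false := by
    by_contra h
    have := le_of_isSmall (Bool.eq_true_of_not_eq_false h) hpx hpy
    omega
  refine ⟨(_, ⟨pn, px, py⟩), ⟨residue_eq hm heq, n, hpn, x, hpx, y, hpy, heq⟩, fun acc ↦ ?_⟩
  simp [large]

/-- The boxes of `l` that come with the residue `r`. -/
def withResidue (r : ℕ) (l : List (ℕ × Box)) : List Box :=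
  foldRight (fun t acc ↦ t.rec fun s c ↦ bif s.beq r then c :: acc else acc) [] l

theorem mem_withResidue {r : ℕ} {c : Box} {l : List (ℕ × Box)} (h : (r, c) ∈ l) :
    c ∈ withResidue r l := by
  refine mem_foldRight (fun t acc ↦ ?_) h fun acc ↦ ?_
  · cases h : t.1.beq r <;> simp [h]
  · simp

/-- A search showing that, unless `C` is small, `c` and `d` do not both have a solution for `C`:
they are split along the moduli, and only parts with a common residue of `C` are kept. -/
def refuted (moduli : List Modulus) : Box → Box → Bool :=
  foldRight (fun M ih c d ↦ all (children M c []) fun t ↦ t.rec fun r c' ↦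
    all (withResidue r (children M d [])) (ih c')) (fun _ _ ↦ false) moduli

theorem le_of_refuted {moduli : List Modulus} (hmoduli : ∀ M ∈ moduli, M.IsValid) {c d : Box}
    (h : refuted moduli c d = true) {C : ℕ} (hc : c.HasSolution C) (hd : d.HasSolution C) :
    C ≤ 15552 := by
  by_contra! hC
  induction moduli generalizing c d with
  | nil => exact Bool.false_ne_true h
  | cons M moduli ih =>
    obtain ⟨hM, hmoduli⟩ := List.forall_mem_cons.1 hmoduli
    obtain ⟨c', hcmem, hc'⟩ := exists_mem_children hM hC hc
    obtain ⟨d', hdmem, hd'⟩ := exists_mem_children hM hC hd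
    exact ih hmoduli (apply_of_all (apply_of_all h hcmem) (mem_withResidue hdmem)) hc' hd'

/-- Moduli refuting the pairs of an even-indexed and an odd-indexed solution, found by a greedy
search. -/
def moduli : List Modulus := [
  ⟨2, 3, 1, 1, 0, 1⟩, ⟨4, 6, 2, 1, 0, 2⟩, ⟨8, 12, 3, 1, 0, 2⟩, ⟨5, 4, 0, 4, 0, 4⟩,
  ⟨16, 24, 4, 1, 0, 4⟩, ⟨3, 8, 0, 2, 1, 1⟩, ⟨9, 24, 0, 6, 2, 1⟩, ⟨41, 40, 0, 20, 0, 8⟩,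
  ⟨61, 60, 0, 60, 0, 10⟩, ⟨11, 10, 0, 10, 0, 5⟩, ⟨31, 30, 0, 5, 0, 30⟩, ⟨7, 16, 0, 3, 0, 6⟩,
  ⟨241, 240, 0, 24, 0, 120⟩, ⟨32, 48, 5, 1, 0, 8⟩, ⟨27, 72, 0, 18, 3, 1⟩, ⟨181, 90, 0, 180, 0, 45⟩,
  ⟨19, 18, 0, 18, 0, 18⟩, ⟨271, 270, 0, 135, 0, 30⟩, ⟨81, 216, 0, 54, 4, 1⟩,
  ⟨6481, 3240, 0, 810, 0, 24⟩, ⟨243, 648, 0, 162, 5, 1⟩, ⟨19441, 324, 0, 4860, 0, 54⟩,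
  ⟨3889, 3888, 0, 648, 0, 81⟩, ⟨729, 1944, 0, 486, 6, 1⟩, ⟨8641, 720, 0, 4320, 0, 2160⟩,
  ⟨10369, 10368, 0, 1296, 0, 5184⟩, ⟨23041, 11520, 0, 480, 0, 11520⟩, ⟨1024, 1536, 10, 1, 0, 256⟩,
  ⟨15361, 7680, 0, 3840, 0, 640⟩]

theorem moduli_isValid : ∀ M ∈ moduli, M.IsValid := by
  decide +kernel

theorem refuted_moduli :
    refuted moduli ⟨⟨0, 2⟩, ⟨0, 1⟩, ⟨0, 1⟩⟩ ⟨⟨1, 2⟩, ⟨0, 1⟩, ⟨0, 1⟩⟩ = true := by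
  decide +kernel

theorem le_of_mixed_parity {C n x y m u v : ℕ} (hn : Even n) (hm : Odd m)
    (hnC : lucas n + C = 2 ^ x * 3 ^ y) (hmC : lucas m + C = 2 ^ u * 3 ^ v) : C ≤ 15552 := by
  obtain ⟨i, rfl⟩ := hn
  obtain ⟨j, rfl⟩ := hm
  rw [lucas_eq_lucasNat] at hnC hmC
  have mem_all (a : ℕ) : a ∈ Progression.mk 0 1 := ⟨a, by simp⟩
  exact le_of_refuted moduli_isValid refuted_moduli
    ⟨i + i, ⟨i, by simp; ring⟩, x, mem_all x, y, mem_all y, by exact_mod_cast hnC⟩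
    ⟨2 * j + 1, ⟨j, by simp; ring⟩, u, mem_all u, v, mem_all v, by exact_mod_cast hmC⟩

end Boxes

section Scan

/-- The absolute values of the exceptional `c`. -/
def exceptional : List ℕ := [133, 97, 61, 52, 25, 21, 20, 17, 14, 9, 7, 6, 5, 3, 2, 1]

/-- Whether `f k` holds for all `k < n`. -/
def allBelow (n : ℕ) (f : ℕ → Bool) : Bool :=
  n.rec true fun k ih ↦ bif f k then ih else false

theorem apply_of_allBelow {n : ℕ} {f : ℕ → Bool} (h : allBelow n f = true) {k : ℕ} (hk : k < n) :
    f k = true := by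
  induction n with
  | zero => omega
  | succ n ih =>
    change (bif f n then allBelow n f else false) = true at h
    rw [Bool.cond_false_right, Bool.and_eq_true] at h
    rcases Nat.lt_succ_iff_lt_or_eq.1 hk with hk | rfl
    exacts [ih h.2 hk, h.1]

/-- The list `[L_{n-1}, …, L_0]`. -/
def lucasValues (n : ℕ) : List ℕ :=
  n.rec [] fun k ih ↦ force (lucasNat k) fun a ↦ a :: ih

theorem lucasNat_mem_lucasValues {k n : ℕ} (h : k < n) : lucasNat k ∈ lucasValues n := by
  induction n with
  | zero => omega
  | succ n ih =>
    change _ ∈ force (lucasNat n) fun a ↦ a :: lucasValues n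
    rw [force_eq, List.mem_cons]
    rcases Nat.lt_succ_iff_lt_or_eq.1 h with h | rfl
    exacts [.inr (ih h), .inl rfl]

theorem two_pow_mul_three_pow_dvd {x y W : ℕ} (h : 2 ^ x * 3 ^ y ≤ W) :
    2 ^ x * 3 ^ y ∣ 6 ^ W.log2 := by
  have hW : W ≠ 0 := by
    have : 0 < 2 ^ x * 3 ^ y := by positivity
    omega
  have hx : 2 ^ x ≤ W := (Nat.le_mul_of_pos_right _ (by positivity)).trans h
  have hy : 2 ^ y ≤ W :=
    (Nat.pow_le_pow_left (by norm_num : 2 ≤ 3) y).trans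
      ((Nat.le_mul_of_pos_left _ (by positivity)).trans h)
  rw [show 6 = 2 * 3 from rfl, Nat.mul_pow]
  exact Nat.mul_dvd_mul (Nat.pow_dvd_pow 2 ((Nat.le_log2 hW).2 hx))
    (Nat.pow_dvd_pow 3 ((Nat.le_log2 hW).2 hy))

/-- Unless `C` is exceptional, `b + C` divides `D` for at most one `b` in `l`. -/
def atMostOne (D C : ℕ) (l : List ℕ) : Bool :=
  all l fun b ↦ bif (D % (b + C)).beq 0 then
    all l fun b' ↦ bif (D % (b' + C)).beq 0 then b.beq b' || exceptional.contains C else true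
  else true

theorem mem_exceptional_of_atMostOne {D C : ℕ} {l : List ℕ} (h : atMostOne D C l = true)
    {b b' : ℕ} (hb : b ∈ l) (hb' : b' ∈ l) (hne : b ≠ b') (hdvd : b + C ∣ D)
    (hdvd' : b' + C ∣ D) : C ∈ exceptional := by
  have h := apply_of_all h hb
  rw [Nat.mod_eq_zero_of_dvd hdvd] at h
  have h := apply_of_all h hb'
  rw [Nat.mod_eq_zero_of_dvd hdvd'] at h
  simpa [hne] using h

/-- Tests `atMostOne` for all `C > 0` such that `a + C ≤ W` has the form `2 ^ x * 3 ^ y`. -/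
def windowTest (W a : ℕ) (l : List ℕ) : Bool :=
  force (6 ^ W.log2) fun D ↦
  allBelow (W.log2 + 1) fun y ↦ force (3 ^ y) fun t ↦
  force (a / t).log2 fun lo ↦
  allBelow ((W / t).log2 + 1 - lo) fun k ↦
  force (2 ^ (lo + k) * t) fun N ↦
  bif N.ble a then true else bif N.ble W then force (N - a) fun C ↦ atMostOne D C l else true

theorem atMostOne_of_windowTest {W a : ℕ} {l : List ℕ} (h : windowTest W a l = true)
    {x y C : ℕ} (hC : 0 < C) (haC : a + C = 2 ^ x * 3 ^ y) (hW : a + C ≤ W) :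
    atMostOne (6 ^ W.log2) C l = true := by
  have h3 : 0 < 3 ^ y := by positivity
  have hWy : W / 3 ^ y ≠ 0 := by
    have : 2 ^ x ≤ W / 3 ^ y := (Nat.le_div_iff_mul_le h3).2 (haC ▸ hW)
    have : 0 < 2 ^ x := by positivity
    omega
  have hy : y ≤ W.log2 := by
    refine (Nat.le_log2 (by omega)).2 ((Nat.pow_le_pow_left (by norm_num : 2 ≤ 3) y).trans ?_)
    exact (haC ▸ Nat.le_mul_of_pos_left _ (by positivity) : 3 ^ y ≤ a + C).trans hW
  have hlo : (a / 3 ^ y).log2 ≤ x := by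
    rcases eq_or_ne (a / 3 ^ y) 0 with h0 | h0
    · simp [h0]
    · refine Nat.lt_succ_iff.1 ((Nat.log2_lt h0).2 ((Nat.div_lt_iff_lt_mul h3).2 ?_))
      calc a < 2 ^ x * 3 ^ y := by omega
        _ ≤ 2 ^ (x + 1) * 3 ^ y := by gcongr <;> omega
  have hhi : x ≤ (W / 3 ^ y).log2 :=
    (Nat.le_log2 hWy).2 ((Nat.le_div_iff_mul_le h3).2 (haC ▸ hW))
  simp only [windowTest, force_eq] at h
  have h := apply_of_allBelow (apply_of_allBelow h (Nat.lt_succ_of_le hy))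
    (k := x - (a / 3 ^ y).log2) (by omega)
  have hnle : (a + C).ble a = false := by
    rw [Bool.eq_false_iff, ne_eq, Nat.ble_eq]
    omega
  rwa [Nat.add_sub_cancel' hlo, ← haC, hnle, Nat.ble_eq_true_of_le hW, Nat.add_sub_cancel_left]
    at h

theorem allBelow_windowTest : allBelow 112 (fun n ↦ force (lucasNat n) fun a ↦
    windowTest (a + 144 * n ^ 4 + 15552) a (lucasValues n)) = true := by
  decide +kernel

end Scan

section Solutions

/-- `n` is the index of a solution of `L_n - 2 ^ x * 3 ^ y = -C`. Since `n` and `C` determine the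
exponents, solutions are counted by their indices. -/
def IsSolutionIndex (C n : ℕ) : Prop :=
  ∃ x y : ℕ, lucas n + C = 2 ^ x * 3 ^ y

theorem fst_ne_fst {c : ℤ} {s t : ℕ × ℕ × ℕ} (hst : s ≠ t)
    (hs : lucas s.1 - 2 ^ s.2.1 * 3 ^ s.2.2 = c) (ht : lucas t.1 - 2 ^ t.2.1 * 3 ^ t.2.2 = c) :
    s.1 ≠ t.1 := by
  intro h
  have hpow : 2 ^ s.2.1 * 3 ^ s.2.2 = 2 ^ t.2.1 * 3 ^ t.2.2 := by
    rw [← ht, h] at hs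
    exact_mod_cast sub_right_injective hs
  obtain ⟨hx, hy⟩ := two_pow_mul_three_pow_inj hpow
  exact hst (Prod.ext h (Prod.ext hx hy))

theorem le_of_same_parity {C k l n : ℕ} (hkl : k < l) (hln : l < n) (hpar : k % 2 = l % 2)
    (hpar' : l % 2 = n % 2) (hk : IsSolutionIndex C k) (hl : IsSolutionIndex C l)
    (hn : IsSolutionIndex C n) : C ≤ 144 * n ^ 4 := by
  obtain ⟨x, y, hk⟩ := hk
  obtain ⟨u, v, hl⟩ := hl
  obtain ⟨w, z, hn⟩ := hn
  have hle {a b m : ℕ} (hm : lucas m + C = 2 ^ a * 3 ^ b) (ha : 2 ^ a ≤ 16 * n ^ 2)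
      (hb : 3 ^ b ≤ 9 * n ^ 2) : C ≤ 144 * n ^ 4 := by
    have hlt : (C : ℤ) ≤ 2 ^ a * 3 ^ b := by linarith [lucas_pos m]
    calc C ≤ 2 ^ a * 3 ^ b := by exact_mod_cast hlt
      _ ≤ 16 * n ^ 2 * (9 * n ^ 2) := Nat.mul_le_mul ha hb
      _ = 144 * n ^ 4 := by ring
  have ⟨h2kl, h3kl⟩ := small_of_same_parity hkl hln.le hpar hk hl
  have ⟨h2kn, h3kn⟩ := small_of_same_parity (hkl.trans hln) le_rfl (hpar.trans hpar') hk hn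
  have ⟨h2ln, h3ln⟩ := small_of_same_parity hln le_rfl hpar' hl hn
  -- At most one index has a large power of `2` and at most one a large power of `3`.
  have hk := hle hk
  have hl := hle hl
  have hn := hle hn
  grind

theorem le_of_parity_ne {C m n : ℕ} (hmn : m % 2 ≠ n % 2) (hm : IsSolutionIndex C m)
    (hn : IsSolutionIndex C n) : C ≤ 15552 := by
  obtain ⟨x, y, hm⟩ := hm
  obtain ⟨u, v, hn⟩ := hn
  rcases Nat.even_or_odd m with hm' | hm' <;> rcases Nat.even_or_odd n with hn' | hn'
  · exact absurd ((Nat.even_iff.1 hm').trans (Nat.even_iff.1 hn').symm) hmn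
  · exact le_of_mixed_parity hm' hn' hm hn
  · exact le_of_mixed_parity hn' hm' hn hm
  · exact absurd ((Nat.odd_iff.1 hm').trans (Nat.odd_iff.1 hn').symm) hmn

theorem le_of_three_indices {C k l n : ℕ} (hkl : k < l) (hln : l < n)
    (hk : IsSolutionIndex C k) (hl : IsSolutionIndex C l) (hn : IsSolutionIndex C n) :
    C ≤ 144 * n ^ 4 + 15552 := by
  have hmixed {i j : ℕ} (hi : IsSolutionIndex C i) (hj : IsSolutionIndex C j)
      (hij : i % 2 ≠ j % 2) : C ≤ 144 * n ^ 4 + 15552 :=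
    (le_of_parity_ne hij hi hj).trans (Nat.le_add_left _ _)
  by_cases hpar : k % 2 = l % 2
  · by_cases hpar' : l % 2 = n % 2
    · exact (le_of_same_parity hkl hln hpar hpar' hk hl hn).trans (Nat.le_add_right _ _)
    · exact hmixed hl hn hpar'
  · exact hmixed hk hl hpar

theorem mem_exceptional_of_lt {C k l n : ℕ} (hC : 0 < C) (hCn : C ≤ 144 * n ^ 4 + 15552)
    (hn112 : n < 112) (hkl : k < l) (hln : l < n) (hk : IsSolutionIndex C k)
    (hl : IsSolutionIndex C l) (hn : IsSolutionIndex C n) : C ∈ exceptional := by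
  obtain ⟨x, y, hn⟩ := hn
  rw [lucas_eq_lucasNat] at hn
  have hscan := apply_of_allBelow allBelow_windowTest hn112
  rw [force_eq] at hscan
  have hone := atMostOne_of_windowTest hscan hC (by exact_mod_cast hn) (by omega)
  have hdvd {m : ℕ} (hmn : m < n) (hm : IsSolutionIndex C m) :
      lucasNat m + C ∣ 6 ^ (lucasNat n + 144 * n ^ 4 + 15552).log2 := by
    obtain ⟨u, v, hm⟩ := hm
    have hlt := lucas_lt_lucas (by omega) hmn
    rw [lucas_eq_lucasNat, lucas_eq_lucasNat] at hlt
    rw [lucas_eq_lucasNat] at hm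
    have hm : lucasNat m + C = 2 ^ u * 3 ^ v := by exact_mod_cast hm
    rw [hm]
    exact two_pow_mul_three_pow_dvd (by omega)
  refine mem_exceptional_of_atMostOne hone (lucasNat_mem_lucasValues (hkl.trans hln))
    (lucasNat_mem_lucasValues hln) ?_ (hdvd (hkl.trans hln) hk) (hdvd hln hl)
  exact fun h ↦ hkl.ne (lucas_injective (by rw [lucas_eq_lucasNat, lucas_eq_lucasNat, h]))

theorem mem_exceptional {C k l n : ℕ} (hC : 0 < C) (hkl : k < l) (hln : l < n)
    (hk : IsSolutionIndex C k) (hl : IsSolutionIndex C l) (hn : IsSolutionIndex C n) :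
    C ∈ exceptional := by
  have hCn := le_of_three_indices hkl hln hk hl hn
  have ⟨x, y, hxy⟩ := hn
  have hCn' : (C : ℤ) ≤ 144 * n ^ 4 + 15552 := by exact_mod_cast hCn
  have hn112 : n < 112 := lt_of_lucas_window (x := x) (y := y) (by omega) (by omega)
  exact mem_exceptional_of_lt hC hCn hn112 hkl hln hk hl hn

theorem mem_exceptional_of_ne {C k l n : ℕ} (hC : 0 < C) (hkl : k ≠ l) (hkn : k ≠ n) (hln : l ≠ n)
    (hk : IsSolutionIndex C k) (hl : IsSolutionIndex C l) (hn : IsSolutionIndex C n) :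
    C ∈ exceptional := by
  rcases hkl.lt_or_gt with hkl | hkl <;> rcases hkn.lt_or_gt with hkn | hkn <;>
    rcases hln.lt_or_gt with hln | hln
  · exact mem_exceptional hC hkl hln hk hl hn
  · exact mem_exceptional hC hkn hln hk hn hl
  · omega
  · exact mem_exceptional hC hkn hkl hn hk hl
  · exact mem_exceptional hC hkl hkn hl hk hn
  · omega
  · exact mem_exceptional hC hln hkn hl hn hk
  · exact mem_exceptional hC hln hkl hn hl hk

theorem mem_exceptional_iff {C : ℕ} : C ∈ exceptional ↔ (-C : ℤ) ∈ ({-133, -97, -61, -52, -25, -21,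
    -20, -17, -14, -9, -7, -6, -5, -3, -2, -1} : Set ℤ) := by
  simp only [exceptional, Set.mem_insert_iff, Set.mem_singleton_iff, List.mem_cons,
    List.not_mem_nil, or_false]
  omega

theorem exists_three_solutions {C : ℕ} (hC : C ∈ exceptional) :
    ∃ s₁ s₂ s₃ : ℕ × ℕ × ℕ, s₁ ≠ s₂ ∧ s₁ ≠ s₃ ∧ s₂ ≠ s₃ ∧
      lucas s₁.1 - 2 ^ s₁.2.1 * 3 ^ s₁.2.2 = -C ∧
      lucas s₂.1 - 2 ^ s₂.2.1 * 3 ^ s₂.2.2 = -C ∧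
      lucas s₃.1 - 2 ^ s₃.2.1 * 3 ^ s₃.2.2 = -C := by
  simp only [exceptional, List.mem_cons, List.not_mem_nil, or_false] at hC
  rcases hC with rfl | rfl | rfl | rfl | rfl | rfl | rfl | rfl | rfl | rfl | rfl | rfl | rfl | rfl |
    rfl | rfl
  · exact ⟨(5, 4, 2), (7, 1, 4), (10, 8, 0), by decide⟩
  · exact ⟨(5, 2, 3), (8, 4, 2), (16, 8, 2), by decide⟩
  · exact ⟨(2, 6, 0), (5, 3, 2), (8, 2, 3), by decide⟩
  · exact ⟨(0, 1, 3), (7, 0, 4), (9, 7, 0), by decide⟩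
  · exact ⟨(0, 0, 3), (4, 5, 0), (5, 2, 2), by decide⟩
  · exact ⟨(2, 3, 1), (5, 5, 0), (10, 4, 2), by decide⟩
  · exact ⟨(3, 3, 1), (4, 0, 3), (9, 5, 1), by decide⟩
  · exact ⟨(1, 1, 2), (4, 3, 1), (8, 6, 0), by decide⟩
  · exact ⟨(0, 4, 0), (3, 1, 2), (6, 5, 0), by decide⟩
  · exact ⟨(2, 2, 1), (4, 4, 0), (6, 0, 3), by decide⟩
  · exact ⟨(0, 0, 2), (1, 3, 0), (5, 1, 2), by decide⟩
  · exact ⟨(0, 3, 0), (2, 0, 2), (6, 3, 1), by decide⟩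
  · exact ⟨(1, 1, 1), (2, 3, 0), (3, 0, 2), by decide⟩
  · exact ⟨(1, 2, 0), (2, 1, 1), (7, 5, 0), by decide⟩
  · exact ⟨(0, 2, 0), (1, 0, 1), (3, 1, 1), by decide⟩
  · exact ⟨(0, 0, 1), (1, 1, 0), (2, 2, 0), by decide⟩

end Solutions

end LucasPillai

theorem lucas_pillai_neg (c : ℤ) (hc : c < 0) :
    (∃ s₁ s₂ s₃ : ℕ × ℕ × ℕ,
        s₁ ≠ s₂ ∧ s₁ ≠ s₃ ∧ s₂ ≠ s₃ ∧
        lucas s₁.1 - 2 ^ s₁.2.1 * 3 ^ s₁.2.2 = c ∧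
        lucas s₂.1 - 2 ^ s₂.2.1 * 3 ^ s₂.2.2 = c ∧
        lucas s₃.1 - 2 ^ s₃.2.1 * 3 ^ s₃.2.2 = c) ↔
      c ∈ ({-133, -97, -61, -52, -25, -21, -20, -17, -14, -9, -7, -6, -5, -3,
        -2, -1} : Set ℤ) := by
  obtain ⟨C, rfl⟩ : ∃ C : ℕ, c = -C := ⟨c.natAbs, by omega⟩
  rw [← LucasPillai.mem_exceptional_iff]
  constructor
  · rintro ⟨s₁, s₂, s₃, h₁₂, h₁₃, h₂₃, h₁, h₂, h₃⟩
    have index {s : ℕ × ℕ × ℕ} (hs : lucas s.1 - 2 ^ s.2.1 * 3 ^ s.2.2 = -C) :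
        LucasPillai.IsSolutionIndex C s.1 := ⟨s.2.1, s.2.2, by linarith⟩
    exact LucasPillai.mem_exceptional_of_ne (by omega) (LucasPillai.fst_ne_fst h₁₂ h₁ h₂)
      (LucasPillai.fst_ne_fst h₁₃ h₁ h₃) (LucasPillai.fst_ne_fst h₂₃ h₂ h₃)
      (index h₁) (index h₂) (index h₃)
  · exact LucasPillai.exists_three_solutions
end

section
/- Let Δ be an integer with Δ > 10^80, and suppose that nonnegative integers x, y, x₁, y₁ satisfy 2^x·3^y − 2^{x₁}·3^{y₁} = Δ. Then 2^x·3^y < Δ · (log Δ)^{60·log log Δ}. -/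
/-!
The integrals of `P(x) / x ^ (10 * n + 1)` over `[-9, -8]` and `[-12, -9]`, where `P` is a product
of powers of `x + 8`, `x + 9`, `x + 10` and `x + 12`, become after clearing denominators small
errors of approximations to `log (9 / 8)` and `log (4 / 3)` with a common denominator. The parity
of the order of vanishing of `P` at `-8` prescribes the signs of both errors, so for every linear
form `s * log (9 / 8) + t * log (4 / 3)` with `s * t ≤ 0` one can make the errors pull in the
direction that forces a certain integer to be positive. Hence positive values of
`a * log 2 + b * log 3` are at least a fixed negative power of `max |a| |b|`. Applied to
`log (2 ^ x * 3 ^ y / (2 ^ x₁ * 3 ^ y₁))` this bounds `X = 2 ^ x * 3 ^ y` by `Δ` times a fixed power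
of `log X`, which for large `Δ` is stronger than the claim.
-/

section LcmUpto

theorem log_le_log_add_factorization_choose {p k m : ℕ} (hp : p.Prime) (hm : 0 < m)
    (hkm : k ≤ m) : p.log (m + k) ≤ p.log m + ((m + k).choose k).factorization p := by
  by_cases hlog : p.log (m + k) ≤ p.log m
  · exact le_add_right hlog
  push Not at hlog
  have hlog_le : p.log (m + k) ≤ p.log m + 1 := by
    rw [← Nat.log_mul_base hp.one_lt hm.ne']
    exact Nat.log_mono_right (by nlinarith [hp.two_le])
  have hcarry : 1 ≤ ((m + k).choose k).factorization p := by
    rw [Nat.factorization_choose' hp (Nat.lt_succ_self _)]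
    have hlt : m < p ^ p.log (m + k) := Nat.lt_pow_of_log_lt hp.one_lt hlog
    have hle : p ^ p.log (m + k) ≤ m + k := Nat.pow_log_le_self p (by omega)
    refine Finset.card_pos.mpr ⟨p.log (m + k), ?_⟩
    rw [Finset.mem_filter, Finset.mem_Ico, Nat.mod_eq_of_lt hlt,
      Nat.mod_eq_of_lt (hkm.trans_lt hlt)]
    omega
  omega

theorem lcmUpto_add_dvd {k m : ℕ} (hm : 0 < m) (hkm : k ≤ m) :
    (m + k).lcmUpto ∣ m.lcmUpto * (m + k).choose k := by
  have hc : (m + k).choose k ≠ 0 := (Nat.choose_pos (Nat.le_add_left k m)).ne'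
  rw [← Nat.factorization_prime_le_iff_dvd (Nat.lcmUpto_ne_zero _)
    (mul_ne_zero (Nat.lcmUpto_ne_zero _) hc)]
  intro p hp
  rw [Nat.factorization_mul (Nat.lcmUpto_ne_zero _) hc, Finsupp.add_apply,
    Nat.factorization_lcmUpto _ hp, Nat.factorization_lcmUpto _ hp]
  exact log_le_log_add_factorization_choose hp hm hkm

theorem lcmUpto_le_four_pow (n : ℕ) : n.lcmUpto ≤ 4 ^ n := by
  induction n using Nat.strong_induction_on with
  | _ n ih =>
    obtain hn | hn := lt_or_ge n 2
    · interval_cases n <;> decide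
    obtain ⟨m, k, rfl, hkm, hmk⟩ : ∃ m k, n = m + k ∧ k ≤ m ∧ m ≤ k + 1 :=
      ⟨n - n / 2, n / 2, by omega, by omega, by omega⟩
    have hchoose : (m + k).choose k ≤ 4 ^ k :=
      (Nat.choose_le_choose k (by omega)).trans (Nat.choose_middle_le_pow k)
    calc (m + k).lcmUpto
        ≤ m.lcmUpto * (m + k).choose k :=
          Nat.le_of_dvd (Nat.mul_pos m.lcmUpto_pos (Nat.choose_pos (by omega)))
            (lcmUpto_add_dvd (by omega) hkm)
      _ ≤ 4 ^ m * 4 ^ k := Nat.mul_le_mul (ih m (by omega)) hchoose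
      _ = 4 ^ (m + k) := (pow_add 4 m k).symm

theorem intCast_dvd_lcmUpto {z : ℤ} {n : ℕ} (hz : z ≠ 0) (hzn : z.natAbs ≤ n) :
    z ∣ n.lcmUpto := by
  rw [← Int.natAbs_dvd, Int.natCast_dvd_natCast]
  exact Finset.dvd_lcm (f := id) (Finset.mem_Icc.mpr ⟨Int.natAbs_pos.mpr hz, hzn⟩)

end LcmUpto

section Coefficients

open Polynomial

theorem coeff_mul_pos_of_coeff_pos {p q : ℕ[X]} {a b : ℕ} (hp : ∀ k ≤ a, 0 < p.coeff k)
    (hq : ∀ k ≤ b, 0 < q.coeff k) : ∀ k ≤ a + b, 0 < (p * q).coeff k := by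
  intro k hk
  rw [coeff_mul]
  exact Finset.sum_pos' (fun _ _ ↦ Nat.zero_le _) ⟨(min k a, k - min k a),
    Finset.HasAntidiagonal.mem_antidiagonal.mpr (Nat.add_sub_cancel' (min_le_left k a)),
    Nat.mul_pos (hp _ (by omega)) (hq _ (by omega))⟩

theorem coeff_X_add_C_pow_pos {a : ℕ} (ha : 0 < a) (m : ℕ) :
    ∀ k ≤ m, 0 < ((X + C a : ℕ[X]) ^ m).coeff k := by
  intro k hk
  rw [coeff_X_add_C_pow]
  exact Nat.mul_pos (pow_pos ha _) (Nat.choose_pos hk)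

theorem coeff_le_eval_one (p : ℕ[X]) (k : ℕ) : p.coeff k ≤ p.eval 1 := by
  rw [eval_eq_sum, sum_def]
  simp only [one_pow, mul_one]
  by_cases hk : k ∈ p.support
  · exact Finset.single_le_sum (fun _ _ ↦ Nat.zero_le _) hk
  · rw [notMem_support_iff.mp hk]
    exact Nat.zero_le _

theorem C_pow_dvd_X_add_C_pow_comp {R : Type*} [CommSemiring R] {a b c : R} (ha : c ∣ a)
    (hb : c ∣ b) (m : ℕ) : C (c ^ m) ∣ ((X + C b) ^ m).comp (C a * X) := by
  rw [C_pow, pow_comp, add_comp, X_comp, C_comp]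
  exact pow_dvd_pow_of_dvd (dvd_add ((map_dvd C ha).mul_right X) (map_dvd C hb)) m

end Coefficients

section LaurentPrimitive

open Polynomial

/-- The antiderivative of `x ↦ x ^ (m - 1)` on each component of `ℝ \ {0}`, logarithmic for
`m = 0`. -/
noncomputable def zpowPrimitive (m : ℤ) (x : ℝ) : ℝ :=
  if m = 0 then Real.log x else x ^ m / m

/-- The antiderivative of the Laurent polynomial `x ↦ P(x) / x ^ (e + 1)`. On the negative
half-line its logarithmic term is `log |x|`, which is the value of `Real.log` there. -/
noncomputable def laurentPrimitive (P : ℝ[X]) (e : ℕ) (x : ℝ) : ℝ :=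
  ∑ k ∈ P.support, P.coeff k * zpowPrimitive (k - e) x

theorem hasDerivAt_zpowPrimitive (m : ℤ) {x : ℝ} (hx : x ≠ 0) :
    HasDerivAt (zpowPrimitive m) (x ^ (m - 1)) x := by
  unfold zpowPrimitive
  split_ifs with hm
  · simpa [hm] using Real.hasDerivAt_log hx
  · simpa [hm] using (hasDerivAt_zpow m x (.inl hx)).div_const (m : ℝ)

theorem hasDerivAt_laurentPrimitive (P : ℝ[X]) (e : ℕ) {x : ℝ} (hx : x ≠ 0) :
    HasDerivAt (laurentPrimitive P e) (P.eval x / x ^ (e + 1)) x := by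
  refine (HasDerivAt.fun_sum fun (k : ℕ) _ ↦
    (hasDerivAt_zpowPrimitive (k - e) hx).const_mul (P.coeff k)).congr_deriv ?_
  rw [eval_eq_sum, sum_def, Finset.sum_div]
  refine Finset.sum_congr rfl fun k _ ↦ ?_
  rw [show (k : ℤ) - e - 1 = k - (e + 1 : ℕ) by push_cast; ring, zpow_sub₀ hx, zpow_natCast,
    zpow_natCast, mul_div_assoc]

theorem mul_laurentPrimitive_sub_mem_range {P : ℝ[X]} {e D : ℕ} {a : ℝ}
    (hP : ∀ k : ℕ, P.coeff k * a ^ (k - e : ℤ) ∈ (Int.castRingHom ℝ).range)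
    (hD : ∀ k ∈ P.support, k ≠ e → (k - e : ℤ) ∣ D) :
    D * laurentPrimitive P e a - D * P.coeff e * Real.log a ∈ (Int.castRingHom ℝ).range := by
  have hlog : D * P.coeff e * Real.log a =
      ∑ k ∈ P.support, if k = e then D * P.coeff e * Real.log a else 0 := by
    rw [Finset.sum_ite_eq']
    split_ifs with he
    · rfl
    · rw [notMem_support_iff.mp he, mul_zero, zero_mul]
  rw [hlog, laurentPrimitive, Finset.mul_sum, ← Finset.sum_sub_distrib]
  refine sum_mem fun k hk ↦ ?_
  obtain rfl | hke := eq_or_ne k e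
  · simp [zpowPrimitive, mul_assoc]
  have hke' : (k - e : ℤ) ≠ 0 := by omega
  obtain ⟨d, hd⟩ := hD k hk hke
  have hterm : (D : ℝ) * (P.coeff k * zpowPrimitive (k - e) a) =
      d * (P.coeff k * a ^ (k - e : ℤ)) := by
    have hd' : (D : ℝ) = ((k - e : ℤ) : ℝ) * d := by exact_mod_cast hd
    have : ((k - e : ℤ) : ℝ) ≠ 0 := by exact_mod_cast hke'
    rw [zpowPrimitive, if_neg hke', hd']
    field_simp
  rw [if_neg hke, sub_zero, hterm]
  exact mul_mem ⟨d, rfl⟩ (hP k)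

theorem intCast_mul_zpow_sub_mem_range {a c : ℤ} {k e : ℕ} (ha : a ≠ 0)
    (h : a ^ e ∣ c * a ^ k) : (c * a ^ (k - e : ℤ) : ℝ) ∈ (Int.castRingHom ℝ).range := by
  obtain ⟨g, hg⟩ := h
  have ha' : (a : ℝ) ≠ 0 := by exact_mod_cast ha
  refine ⟨g, ?_⟩
  rw [zpow_sub₀ ha', zpow_natCast, zpow_natCast, ← mul_div_assoc, eq_div_iff (pow_ne_zero _ ha'),
    mul_comm, eq_intCast]
  exact_mod_cast hg.symm

end LaurentPrimitive

section PadeKernel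

/-- The function whose `2 * n`-th power governs the size of the Padé remainders. -/
noncomputable def padeKernel (x : ℝ) : ℝ :=
  (x + 8) ^ 2 * (x + 9) ^ 3 * (x + 10) * (x + 12) ^ 4 / x ^ 5

-- On each unit segment `[i, i + 1]`, homogenizing in `w = t - i` and `z = i + 1 - t` (so that
-- `w + z = 1`) makes all coefficients of the difference of the two sides nonnegative.
theorem mul_abs_sub_pow_le_pow {t : ℝ} (ht : t ∈ Set.Icc 8 12) :
    1800 * (|t - 8| ^ 2 * |t - 9| ^ 3 * |t - 10| * |t - 12| ^ 4) ≤ t ^ 5 := by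
  have on_eight_nine {w z : ℝ} (hw : 0 ≤ w) (hz : 0 ≤ z) :
      1800 * (w ^ 2 * z ^ 3 * (w + 2 * z) * (3 * w + 4 * z) ^ 4) ≤
        (9 * w + 8 * z) ^ 5 * (w + z) ^ 5 := by
    rw [← sub_nonneg]; ring_nf; positivity
  have on_nine_ten {w z : ℝ} (hw : 0 ≤ w) (hz : 0 ≤ z) :
      1800 * ((2 * w + z) ^ 2 * w ^ 3 * z * (2 * w + 3 * z) ^ 4) ≤
        (10 * w + 9 * z) ^ 5 * (w + z) ^ 5 := by
    rw [← sub_nonneg]; ring_nf; positivity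
  have on_ten_eleven {w z : ℝ} (hw : 0 ≤ w) (hz : 0 ≤ z) :
      1800 * ((3 * w + 2 * z) ^ 2 * (2 * w + z) ^ 3 * w * (w + 2 * z) ^ 4) ≤
        (11 * w + 10 * z) ^ 5 * (w + z) ^ 5 := by
    rw [← sub_nonneg]; ring_nf; positivity
  have on_eleven_twelve {w z : ℝ} (hw : 0 ≤ w) (hz : 0 ≤ z) :
      1800 * ((4 * w + 3 * z) ^ 2 * (3 * w + 2 * z) ^ 3 * (2 * w + z) * z ^ 4) ≤
        (12 * w + 11 * z) ^ 5 * (w + z) ^ 5 := by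
    rw [← sub_nonneg]; ring_nf; positivity
  obtain ⟨h₈, h₁₂⟩ := ht
  rw [abs_of_nonneg (sub_nonneg.mpr h₈), abs_of_nonpos (sub_nonpos.mpr h₁₂)]
  rcases le_total t 9 with h₉ | h₉
  · rw [abs_of_nonpos (by linarith), abs_of_nonpos (by linarith)]
    convert on_eight_nine (sub_nonneg.mpr h₈) (sub_nonneg.mpr h₉) using 1 <;> ring
  rw [abs_of_nonneg (sub_nonneg.mpr h₉)]
  rcases le_total t 10 with h₁₀ | h₁₀
  · rw [abs_of_nonpos (sub_nonpos.mpr h₁₀)]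
    convert on_nine_ten (sub_nonneg.mpr h₉) (sub_nonneg.mpr h₁₀) using 1 <;> ring
  rw [abs_of_nonneg (sub_nonneg.mpr h₁₀)]
  rcases le_total t 11 with h₁₁ | h₁₁
  · convert on_ten_eleven (sub_nonneg.mpr h₁₀) (sub_nonneg.mpr h₁₁) using 1 <;> ring
  · convert on_eleven_twelve (sub_nonneg.mpr h₁₁) (sub_nonneg.mpr h₁₂) using 1 <;> ring

theorem abs_padeKernel_le {x : ℝ} (hx : x ∈ Set.Icc (-12) (-8)) :
    |padeKernel x| ≤ 1 / 1800 := by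
  have hbound := mul_abs_sub_pow_le_pow (t := -x) ⟨by linarith [hx.2], by linarith [hx.1]⟩
  have habs (c : ℝ) : |x + c| = |-x - c| := by rw [← abs_neg, neg_add']
  rw [padeKernel, abs_div, abs_pow, abs_of_neg (by linarith [hx.2] : x < 0),
    div_le_iff₀ (pow_pos (by linarith [hx.2]) 5)]
  simp only [abs_mul, abs_pow, habs]
  linarith

end PadeKernel

section PadeApproximation

open Polynomial

/-- The numerator of the Laurent polynomial `x ↦ padeNumerator n δ / x ^ (10 * n + 1)` whose
integrals over `[-9, -8]` and `[-12, -9]` approximate multiples of `log (9 / 8)` and `log (4 / 3)`.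
The exponents make the `k`-th coefficient times `a ^ k` divisible by `a ^ (10 * n)` for
`a = 8, 9, 12`; the parity `δ` controls the signs of the integrals. -/
noncomputable def padeNumerator (n δ : ℕ) : ℕ[X] :=
  (X + C 8) ^ (4 * n + δ) * (X + C 9) ^ (6 * n + 1) * (X + C 10) ^ (2 * n) *
    (X + C 12) ^ (8 * n)

/-- The common denominator `q` of the simultaneous approximations to `log (9 / 8)` and
`log (4 / 3)`. -/
noncomputable def padeDenominator (n δ : ℕ) : ℕ :=
  (10 * n + 2).lcmUpto * (padeNumerator n δ).coeff (10 * n)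

/-- The error `q * log (v / u) - p` of the approximation to `log (v / u)` with denominator
`q = padeDenominator n δ` and some integer `p`, for `u, v ∈ {8, 9, 12}`. -/
noncomputable def padeRemainder (n δ : ℕ) (u v : ℝ) : ℝ :=
  (10 * n + 2).lcmUpto *
    (laurentPrimitive ((padeNumerator n δ).map (Nat.castRingHom ℝ)) (10 * n) (-v) -
      laurentPrimitive ((padeNumerator n δ).map (Nat.castRingHom ℝ)) (10 * n) (-u))

variable {n δ : ℕ}

theorem natDegree_padeNumerator_le : (padeNumerator n δ).natDegree ≤ 20 * n + δ + 1 := by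
  unfold padeNumerator
  compute_degree
  omega

theorem coeff_padeNumerator_pos : 0 < (padeNumerator n δ).coeff (10 * n) :=
  coeff_mul_pos_of_coeff_pos (coeff_mul_pos_of_coeff_pos (coeff_mul_pos_of_coeff_pos
    (coeff_X_add_C_pow_pos (by norm_num) _) (coeff_X_add_C_pow_pos (by norm_num) _))
    (coeff_X_add_C_pow_pos (by norm_num) _)) (coeff_X_add_C_pow_pos (by norm_num) _) _ (by omega)

theorem coeff_padeNumerator_le (hδ : δ ≤ 1) (k : ℕ) :
    (padeNumerator n δ).coeff k ≤ 90 * (9 ^ 4 * 10 ^ 6 * 11 ^ 2 * 13 ^ 8) ^ n := by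
  calc (padeNumerator n δ).coeff k
      ≤ (padeNumerator n δ).eval 1 := coeff_le_eval_one _ k
    _ = 9 ^ δ * (10 * (9 ^ 4 * 10 ^ 6 * 11 ^ 2 * 13 ^ 8) ^ n) := by
      simp only [padeNumerator, eval_mul, eval_pow, eval_add, eval_X, eval_C, mul_pow, ← pow_mul,
        Nat.reduceAdd]
      ring
    _ ≤ 9 ^ 1 * (10 * (9 ^ 4 * 10 ^ 6 * 11 ^ 2 * 13 ^ 8) ^ n) := by gcongr; norm_num
    _ = 90 * (9 ^ 4 * 10 ^ 6 * 11 ^ 2 * 13 ^ 8) ^ n := by ring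

theorem padeDenominator_pos : 0 < padeDenominator n δ :=
  Nat.mul_pos (Nat.lcmUpto_pos _) coeff_padeNumerator_pos

theorem padeDenominator_le (hδ : δ ≤ 1) : padeDenominator n δ ≤ 10 ^ (27 * n + 4) := by
  calc padeDenominator n δ
      ≤ 4 ^ (10 * n + 2) * (90 * (9 ^ 4 * 10 ^ 6 * 11 ^ 2 * 13 ^ 8) ^ n) :=
        Nat.mul_le_mul (lcmUpto_le_four_pow _) (coeff_padeNumerator_le hδ _)
    _ = 4 ^ 2 * 90 * (4 ^ 10 * (9 ^ 4 * 10 ^ 6 * 11 ^ 2 * 13 ^ 8)) ^ n := by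
      rw [pow_add, pow_mul, mul_comm (_ ^ n), mul_mul_mul_comm, ← mul_pow]
    _ ≤ 10 ^ 4 * (10 ^ 27) ^ n := by gcongr <;> norm_num
    _ = 10 ^ (27 * n + 4) := by rw [← pow_mul]; ring

theorem gcd_pow_dvd_coeff_padeNumerator_mul_pow (n δ a k : ℕ) :
    a.gcd 8 ^ (4 * n + δ) * a.gcd 9 ^ (6 * n + 1) * a.gcd 10 ^ (2 * n) * a.gcd 12 ^ (8 * n) ∣
      (padeNumerator n δ).coeff k * a ^ k := by
  rw [← comp_C_mul_X_coeff, padeNumerator]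
  simp only [mul_comp]
  refine C_dvd_iff_dvd_coeff _ _ |>.mp ?_ k
  simp only [C_mul]
  have hdvd (b m : ℕ) : C (a.gcd b ^ m) ∣ ((X + C b) ^ m).comp (C a * X) :=
    C_pow_dvd_X_add_C_pow_comp (Nat.gcd_dvd_left a b) (Nat.gcd_dvd_right a b) m
  exact mul_dvd_mul (mul_dvd_mul (mul_dvd_mul (hdvd 8 _) (hdvd 9 _)) (hdvd 10 _)) (hdvd 12 _)

theorem pow_dvd_coeff_padeNumerator_mul_pow {a : ℕ} (ha : a ∈ ({8, 9, 12} : Set ℕ)) (k : ℕ) :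
    a ^ (10 * n) ∣ (padeNumerator n δ).coeff k * a ^ k := by
  refine dvd_trans ?_ (gcd_pow_dvd_coeff_padeNumerator_mul_pow n δ a k)
  obtain rfl | rfl | rfl := ha
  · calc 8 ^ (10 * n) = 8 ^ (4 * n) * 1 ^ (6 * n + 1) * 2 ^ (2 * n) * 4 ^ (8 * n) := by
          simp only [one_pow, mul_one, pow_mul, ← mul_pow, Nat.reducePow, Nat.reduceMul]
      _ ∣ _ := by gcongr <;> simp
  · calc 9 ^ (10 * n) = 1 ^ (4 * n + δ) * 9 ^ (6 * n) * 1 ^ (2 * n) * 3 ^ (8 * n) := by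
          simp only [one_pow, one_mul, mul_one, pow_mul, ← mul_pow, Nat.reducePow, Nat.reduceMul]
      _ ∣ _ := by gcongr <;> norm_num
  · calc 12 ^ (10 * n) = 4 ^ (2 * n) * 3 ^ (2 * n) * 1 ^ (2 * n) * 12 ^ (8 * n) := by
          simp only [one_pow, mul_one, pow_mul, ← mul_pow, Nat.reducePow, Nat.reduceMul]
      _ ∣ _ := by gcongr <;> norm_num <;> omega

theorem mul_laurentPrimitive_padeNumerator_sub_mem_range {a : ℕ}
    (ha : a ∈ ({8, 9, 12} : Set ℕ)) (hδ : δ ≤ 1) :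
    (10 * n + 2).lcmUpto *
        laurentPrimitive ((padeNumerator n δ).map (Nat.castRingHom ℝ)) (10 * n) (-a) -
      padeDenominator n δ * Real.log a ∈ (Int.castRingHom ℝ).range := by
  have ha₀ : -(a : ℤ) ≠ 0 := by obtain rfl | rfl | rfl := ha <;> norm_num
  have hcoeff (k : ℕ) : ((padeNumerator n δ).map (Nat.castRingHom ℝ)).coeff k *
      (-a : ℝ) ^ (k - (10 * n : ℕ) : ℤ) ∈ (Int.castRingHom ℝ).range := by
    have hdvd : (-a : ℤ) ^ (10 * n) ∣ (padeNumerator n δ).coeff k * (-a : ℤ) ^ k :=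
      Int.natAbs_dvd_natAbs.mp (by
        simpa [Int.natAbs_mul, Int.natAbs_pow] using pow_dvd_coeff_padeNumerator_mul_pow ha k)
    simpa using intCast_mul_zpow_sub_mem_range ha₀ hdvd
  have hdvd_lcm (k : ℕ) (hk : k ∈ ((padeNumerator n δ).map (Nat.castRingHom ℝ)).support)
      (hkn : k ≠ 10 * n) : (k - (10 * n : ℕ) : ℤ) ∣ (10 * n + 2).lcmUpto := by
    have hk_le : k ≤ 20 * n + δ + 1 :=
      (le_natDegree_of_mem_supp k hk).trans (natDegree_map_le.trans natDegree_padeNumerator_le)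
    exact intCast_dvd_lcmUpto (by omega) (by omega)
  have hmem := mul_laurentPrimitive_sub_mem_range hcoeff hdvd_lcm
  rwa [coeff_map, eq_natCast, Real.log_neg_eq_log, ← Nat.cast_mul] at hmem

theorem padeDenominator_mul_log_sub_padeRemainder_mem_range {u v : ℕ}
    (hu : u ∈ ({8, 9, 12} : Set ℕ)) (hv : v ∈ ({8, 9, 12} : Set ℕ)) (hδ : δ ≤ 1) :
    padeDenominator n δ * Real.log (v / u) - padeRemainder n δ u v ∈
      (Int.castRingHom ℝ).range := by
  have ne_zero {a : ℕ} (ha : a ∈ ({8, 9, 12} : Set ℕ)) : (a : ℝ) ≠ 0 := by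
    obtain rfl | rfl | rfl := ha <;> norm_num
  convert sub_mem (mul_laurentPrimitive_padeNumerator_sub_mem_range (n := n) hu hδ)
    (mul_laurentPrimitive_padeNumerator_sub_mem_range (n := n) hv hδ) using 1
  rw [Real.log_div (ne_zero hv) (ne_zero hu), padeRemainder]
  ring

theorem eval_padeNumerator_div_pow {x : ℝ} (hx : x ≠ 0) :
    ((padeNumerator n δ).map (Nat.castRingHom ℝ)).eval x / x ^ (10 * n + 1) =
      padeKernel x ^ (2 * n) * ((x + 8) ^ δ * ((x + 9) / x)) := by
  simp only [padeNumerator, padeKernel, Polynomial.map_mul, Polynomial.map_pow,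
    Polynomial.map_add, map_X, Polynomial.map_ofNat, eval_mul, eval_pow, eval_add, eval_X,
    eval_ofNat, map_ofNat, div_pow, mul_pow, ← pow_mul]
  field_simp
  ring

theorem exists_padeRemainder_eq {u v : ℝ} (hu : 0 < u) (huv : u < v) :
    ∃ x ∈ Set.Ioo (-v) (-u), padeRemainder n δ u v =
      (10 * n + 2).lcmUpto * (v - u) * padeKernel x ^ (2 * n) *
        ((x + 8) ^ δ * ((x + 9) / -x)) := by
  have hderiv (x : ℝ) (hx : x ≤ -u) := hasDerivAt_laurentPrimitive
    ((padeNumerator n δ).map (Nat.castRingHom ℝ)) (10 * n) (hx.trans_lt (neg_lt_zero.mpr hu)).ne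
  obtain ⟨x, hx, hslope⟩ := exists_hasDerivAt_eq_slope _ _ (neg_lt_neg huv)
    (fun x hx ↦ (hderiv x hx.2).continuousAt.continuousWithinAt) (fun x hx ↦ hderiv x hx.2.le)
  refine ⟨x, hx, ?_⟩
  rw [eval_padeNumerator_div_pow (by linarith [hx.2]), eq_div_iff (by linarith)] at hslope
  rw [padeRemainder, ← neg_sub (laurentPrimitive _ _ (-u)), ← hslope]
  ring

theorem abs_padeRemainder_le {u v : ℝ} (hu : 8 ≤ u) (huv : u < v) (hv : v ≤ 12) (hδ : δ ≤ 1) :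
    |padeRemainder n δ u v| ≤ 16 / 3 ^ n * (v - u) := by
  obtain ⟨x, hx, heq⟩ := exists_padeRemainder_eq (n := n) (δ := δ) (by linarith : 0 < u) huv
  have hx_mem : x ∈ Set.Icc (-12) (-8) := ⟨by linarith [hx.1], by linarith [hx.2]⟩
  have hfactor : |(x + 8) ^ δ * ((x + 9) / -x)| ≤ 1 := by
    rw [← mul_div_assoc, abs_div, abs_of_pos (by linarith [hx_mem.2] : 0 < -x),
      div_le_one (by linarith [hx_mem.2]), abs_le]
    interval_cases δ <;> constructor <;> nlinarith [hx_mem.1, hx_mem.2]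
  have hlcm : ((10 * n + 2).lcmUpto : ℝ) ≤ 4 ^ (10 * n + 2) := by
    exact_mod_cast lcmUpto_le_four_pow (10 * n + 2)
  calc |padeRemainder n δ u v|
      = (10 * n + 2).lcmUpto * (v - u) * |padeKernel x| ^ (2 * n) *
          |(x + 8) ^ δ * ((x + 9) / -x)| := by
        rw [heq, abs_mul, abs_mul, abs_mul, abs_pow, Nat.abs_cast, abs_of_pos (sub_pos.mpr huv)]
    _ ≤ 4 ^ (10 * n + 2) * (v - u) * (1 / 1800) ^ (2 * n) * 1 := by
        have := sub_nonneg.mpr huv.le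
        have := abs_padeKernel_le hx_mem
        gcongr
    _ = 16 * (4 ^ 10 * (1 / 1800) ^ 2) ^ n * (v - u) := by
        rw [pow_add, pow_mul, pow_mul, mul_pow]
        ring
    _ ≤ 16 * (1 / 3) ^ n * (v - u) := by
        have := sub_nonneg.mpr huv.le
        have hratio : (4 ^ 10 * (1 / 1800) ^ 2 : ℝ) ≤ 1 / 3 := by norm_num
        gcongr
    _ = 16 / 3 ^ n * (v - u) := by rw [one_div, inv_pow, div_eq_mul_inv]

theorem neg_one_pow_mul_padeRemainder_nonneg : 0 ≤ (-1) ^ δ * padeRemainder n δ 8 9 := by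
  obtain ⟨x, hx, heq⟩ := exists_padeRemainder_eq (n := n) (δ := δ) (u := 8) (v := 9)
    (by norm_num) (by norm_num)
  have h₈ : 0 ≤ -(x + 8) := by linarith [hx.2]
  have h₉ : 0 ≤ (x + 9) / -x := div_nonneg (by linarith [hx.1]) (by linarith [hx.2])
  have hker := (even_two_mul n).pow_nonneg (padeKernel x)
  calc 0 ≤ (10 * n + 2).lcmUpto * (9 - 8) * padeKernel x ^ (2 * n) *
        ((-(x + 8)) ^ δ * ((x + 9) / -x)) := by positivity
    _ = (-1) ^ δ * padeRemainder n δ 8 9 := by rw [heq, neg_pow (x + 8)]; ring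

theorem neg_one_pow_mul_padeRemainder_nonpos : (-1) ^ δ * padeRemainder n δ 9 12 ≤ 0 := by
  obtain ⟨x, hx, heq⟩ := exists_padeRemainder_eq (n := n) (δ := δ) (u := 9) (v := 12)
    (by norm_num) (by norm_num)
  have h₈ : 0 ≤ -(x + 8) := by linarith [hx.2]
  have h₉ : 0 ≤ -(x + 9) / -x := div_nonneg (by linarith [hx.2]) (by linarith [hx.2])
  have hker := (even_two_mul n).pow_nonneg (padeKernel x)
  refine neg_nonneg.mp ?_
  calc 0 ≤ (10 * n + 2).lcmUpto * (12 - 9) * padeKernel x ^ (2 * n) *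
        ((-(x + 8)) ^ δ * (-(x + 9) / -x)) := by positivity
    _ = -((-1) ^ δ * padeRemainder n δ 9 12) := by rw [heq, neg_pow (x + 8)]; ring

end PadeApproximation

section LinearForms

open Real

theorem exists_mul_padeRemainder_nonpos (n : ℕ) {s t : ℤ} (hst : s * t ≤ 0) :
    ∃ δ ≤ 1, s * padeRemainder n δ 8 9 ≤ 0 ∧ t * padeRemainder n δ 9 12 ≤ 0 := by
  have h₈ (δ : ℕ) := neg_one_pow_mul_padeRemainder_nonneg (n := n) (δ := δ)
  have h₁₂ (δ : ℕ) := neg_one_pow_mul_padeRemainder_nonpos (n := n) (δ := δ)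
  obtain ⟨hs, ht⟩ | ⟨hs, ht⟩ := mul_nonpos_iff.mp hst
  · refine ⟨1, le_rfl, mul_nonpos_of_nonneg_of_nonpos (by exact_mod_cast hs) ?_,
      mul_nonpos_of_nonpos_of_nonneg (by exact_mod_cast ht) ?_⟩
    · linarith [h₈ 1]
    · linarith [h₁₂ 1]
  · refine ⟨0, zero_le_one, mul_nonpos_of_nonpos_of_nonneg (by exact_mod_cast hs) ?_,
      mul_nonpos_of_nonneg_of_nonpos (by exact_mod_cast ht) ?_⟩
    · linarith [h₈ 0]
    · linarith [h₁₂ 0]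

-- For the right `δ` the integer `q * (s * log (9 / 8) + t * log (4 / 3)) - s * r₈ - t * r₁₂` is
-- positive by signs alone, so no nonvanishing determinant is needed.
theorem one_le_add_mul_log_nine_eighths_add (n : ℕ) {s t : ℤ} (hst : s * t ≤ 0)
    (hpos : 0 < s * log (9 / 8) + t * log (4 / 3)) :
    1 ≤ 16 / 3 ^ n * (|(s : ℝ)| + 3 * |(t : ℝ)|) +
      10 ^ (27 * n + 4) * (s * log (9 / 8) + t * log (4 / 3)) := by
  obtain ⟨δ, hδ, hs, ht⟩ := exists_mul_padeRemainder_nonpos n hst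
  set r₈ := padeRemainder n δ 8 9
  set r₁₂ := padeRemainder n δ 9 12
  have hq : (0 : ℝ) < padeDenominator n δ := by exact_mod_cast padeDenominator_pos
  have hq_le : (padeDenominator n δ : ℝ) ≤ 10 ^ (27 * n + 4) := by
    exact_mod_cast padeDenominator_le hδ
  obtain ⟨p₈, hp₈⟩ := padeDenominator_mul_log_sub_padeRemainder_mem_range (n := n) (u := 8)
    (v := 9) (by simp) (by simp) hδ
  obtain ⟨p₁₂, hp₁₂⟩ := padeDenominator_mul_log_sub_padeRemainder_mem_range (n := n) (u := 9)
    (v := 12) (by simp) (by simp) hδ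
  norm_num only [eq_intCast, Nat.cast_ofNat] at hp₈ hp₁₂
  have hint : ((s * p₈ + t * p₁₂ : ℤ) : ℝ) =
      padeDenominator n δ * (s * log (9 / 8) + t * log (4 / 3)) - s * r₈ - t * r₁₂ := by
    push_cast
    rw [hp₈, hp₁₂]
    ring
  have hint_pos : 0 < s * p₈ + t * p₁₂ := by
    rw [← Int.cast_pos (R := ℝ), hint]
    linarith [mul_pos hq hpos]
  have hr₈ : -(s * r₈) ≤ |(s : ℝ)| * (16 / 3 ^ n * (9 - 8)) := by
    rw [← abs_of_nonpos hs, abs_mul]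
    gcongr
    exact abs_padeRemainder_le (by norm_num) (by norm_num) (by norm_num) hδ
  have hr₁₂ : -(t * r₁₂) ≤ |(t : ℝ)| * (16 / 3 ^ n * (12 - 9)) := by
    rw [← abs_of_nonpos ht, abs_mul]
    gcongr
    exact abs_padeRemainder_le (by norm_num) (by norm_num) (by norm_num) hδ
  calc (1 : ℝ) ≤ (s * p₈ + t * p₁₂ : ℤ) := by exact_mod_cast hint_pos
    _ = padeDenominator n δ * (s * log (9 / 8) + t * log (4 / 3)) + -(s * r₈) + -(t * r₁₂) := by
      rw [hint]; ring
    _ ≤ 10 ^ (27 * n + 4) * (s * log (9 / 8) + t * log (4 / 3)) +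
          |(s : ℝ)| * (16 / 3 ^ n * (9 - 8)) + |(t : ℝ)| * (16 / 3 ^ n * (12 - 9)) := by gcongr
    _ = _ := by ring

theorem one_third_le_mul_log_nine_eighths_add {s t : ℤ} (hst : 0 < s * t)
    (hpos : 0 < s * log (9 / 8) + t * log (4 / 3)) :
    1 / 3 ≤ s * log (9 / 8) + t * log (4 / 3) := by
  have h₉ : 0 < log (9 / 8) := log_pos (by norm_num)
  have h₄ : 0 < log (4 / 3) := log_pos (by norm_num)
  obtain ⟨hs, ht⟩ | ⟨hs, ht⟩ := mul_pos_iff.mp hst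
  · have hs' : (1 : ℝ) ≤ s := by exact_mod_cast hs
    have ht' : (1 : ℝ) ≤ t := by exact_mod_cast ht
    calc (1 / 3 : ℝ) = 1 - (3 / 2)⁻¹ := by norm_num
      _ ≤ log (3 / 2) := one_sub_inv_le_log_of_pos (by norm_num)
      _ = 1 * log (9 / 8) + 1 * log (4 / 3) := by
        rw [one_mul, one_mul, ← log_mul (by norm_num) (by norm_num)]
        norm_num
      _ ≤ s * log (9 / 8) + t * log (4 / 3) := by gcongr
  · have hs' : (s : ℝ) < 0 := by exact_mod_cast hs
    have ht' : (t : ℝ) < 0 := by exact_mod_cast ht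
    linarith [mul_neg_of_neg_of_pos hs' h₉, mul_neg_of_neg_of_pos ht' h₄]

theorem one_le_mul_log_nine_eighths_add {s t : ℤ} {B : ℝ} (hB : 1 ≤ B)
    (hst : |(s : ℝ)| + 3 * |(t : ℝ)| ≤ B)
    (hpos : 0 < s * log (9 / 8) + t * log (4 / 3)) :
    1 ≤ 2 * 10 ^ 4 * (96 * B) ^ 57 * (s * log (9 / 8) + t * log (4 / 3)) := by
  set Λ := s * log (9 / 8) + t * log (4 / 3)
  obtain h_neg | h_pos := le_or_gt (s * t) 0
  · obtain ⟨n, hn_le, hn_lt⟩ := exists_nat_pow_near (by linarith : 1 ≤ 32 * B)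
      (by norm_num : (1 : ℝ) < 3)
    have hmain := one_le_add_mul_log_nine_eighths_add (n + 1) h_neg hpos
    have hsmall : 16 / 3 ^ (n + 1) * (|(s : ℝ)| + 3 * |(t : ℝ)|) ≤ 1 / 2 := by
      rw [div_mul_eq_mul_div, div_le_iff₀ (by positivity)]
      linarith
    have hlarge : (10 : ℝ) ^ (27 * (n + 1) + 4) ≤ 10 ^ 4 * (96 * B) ^ 57 :=
      calc (10 : ℝ) ^ (27 * (n + 1) + 4) = 10 ^ 4 * (10 ^ 27) ^ (n + 1) := by
            rw [pow_add, pow_mul, mul_comm]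
        _ ≤ 10 ^ 4 * (3 ^ 57) ^ (n + 1) := by gcongr 10 ^ 4 * ?_ ^ (n + 1); norm_num
        _ = 10 ^ 4 * (3 * 3 ^ n) ^ 57 := by rw [← pow_mul, mul_comm 57, pow_mul, pow_succ' 3 n]
        _ ≤ 10 ^ 4 * (96 * B) ^ 57 := by
            gcongr 10 ^ 4 * ?_ ^ 57
            linarith
    nlinarith [mul_le_mul_of_nonneg_right hlarge hpos.le]
  · have hΛ_ge := one_third_le_mul_log_nine_eighths_add h_pos hpos
    have hpow : 1 ≤ (96 * B) ^ 57 := one_le_pow₀ (by linarith)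
    nlinarith

theorem one_le_mul_log_two_add_mul_log_three {a b : ℤ} {H : ℝ} (ha : |(a : ℝ)| ≤ H)
    (hb : |(b : ℝ)| ≤ H) (hpos : 0 < a * log 2 + b * log 3) :
    1 ≤ 10 ^ 189 * H ^ 57 * (a * log 2 + b * log 3) := by
  have hH : 1 ≤ H := by
    by_contra! hH
    have eq_zero {m : ℤ} (hm : |(m : ℝ)| ≤ H) : m = 0 :=
      Int.abs_lt_one_iff.mp (by exact_mod_cast hm.trans_lt hH)
    simp [eq_zero ha, eq_zero hb] at hpos
  have hchange : ((a + 2 * b : ℤ) : ℝ) * log (9 / 8) + (2 * a + 3 * b : ℤ) * log (4 / 3) =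
      a * log 2 + b * log 3 := by
    rw [log_div (by norm_num) (by norm_num), log_div (by norm_num) (by norm_num),
      show (9 : ℝ) = 3 ^ 2 by norm_num, show (8 : ℝ) = 2 ^ 3 by norm_num,
      show (4 : ℝ) = 2 ^ 2 by norm_num, log_pow, log_pow, log_pow]
    push_cast
    ring
  have hheight : |((a + 2 * b : ℤ) : ℝ)| + 3 * |((2 * a + 3 * b : ℤ) : ℝ)| ≤ 18 * H := by
    push_cast
    have h₁ := abs_add_le (a : ℝ) (2 * b)
    have h₂ := abs_add_le (2 * a : ℝ) (3 * b)
    simp only [abs_mul, Nat.abs_ofNat] at h₁ h₂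
    linarith
  have hmain := one_le_mul_log_nine_eighths_add (by linarith) hheight (hchange ▸ hpos)
  rw [hchange] at hmain
  calc 1 ≤ 2 * 10 ^ 4 * (96 * (18 * H)) ^ 57 * (a * log 2 + b * log 3) := hmain
    _ = 2 * 10 ^ 4 * 1728 ^ 57 * H ^ 57 * (a * log 2 + b * log 3) := by ring
    _ ≤ 10 ^ 189 * H ^ 57 * (a * log 2 + b * log 3) := by gcongr; norm_num

theorem log_two_pow_mul_three_pow (x y : ℕ) :
    log (2 ^ x * 3 ^ y) = x * log 2 + y * log 3 := by
  rw [log_mul (by positivity) (by positivity), log_pow, log_pow]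

theorem natCast_le_log_two_pow_mul_three_pow (x y : ℕ) :
    (x : ℝ) ≤ 3 / 2 * log (2 ^ x * 3 ^ y) ∧ (y : ℝ) ≤ 3 / 2 * log (2 ^ x * 3 ^ y) := by
  rw [log_two_pow_mul_three_pow]
  have hx : (x : ℝ) * (2 / 3) ≤ x * log 2 := by gcongr; linarith [log_two_gt_d9]
  have hy : (y : ℝ) * (2 / 3) ≤ y * log 3 := by gcongr; linarith [log_three_gt_d9]
  constructor <;> linarith [x.cast_nonneg (α := ℝ), y.cast_nonneg (α := ℝ)]

theorem le_two_mul_mul_sub_of_one_le_mul_log_div {X Y M : ℝ} (hY : 0 < Y) (hYX : Y < X)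
    (hM : 1 ≤ M) (hlog : 1 ≤ M * log (X / Y)) : X ≤ 2 * M * (X - Y) := by
  have hX : 0 < X := hY.trans hYX
  have hY_le : Y ≤ M * (X - Y) :=
    calc Y = Y * 1 := (mul_one Y).symm
      _ ≤ Y * (M * (X / Y - 1)) := by
        gcongr
        exact hlog.trans (by gcongr; exact log_le_sub_one_of_pos (by positivity))
      _ = M * (X - Y) := by field_simp
  linarith [mul_le_mul_of_nonneg_right hM (sub_pos.mpr hYX).le]

theorem two_pow_mul_three_pow_le_mul_sub {x y x₁ y₁ : ℕ}
    (hlt : (2 : ℝ) ^ x₁ * 3 ^ y₁ < 2 ^ x * 3 ^ y) :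
    (2 : ℝ) ^ x * 3 ^ y ≤
      10 ^ 200 * log (2 ^ x * 3 ^ y) ^ 57 * (2 ^ x * 3 ^ y - 2 ^ x₁ * 3 ^ y₁) := by
  have hx := natCast_le_log_two_pow_mul_three_pow x y
  have hx₁ := natCast_le_log_two_pow_mul_three_pow x₁ y₁
  have hlog : log (2 ^ x * 3 ^ y / (2 ^ x₁ * 3 ^ y₁)) =
      (x - x₁ : ℤ) * log 2 + (y - y₁ : ℤ) * log 3 := by
    rw [log_div (by positivity) (by positivity), log_two_pow_mul_three_pow,
      log_two_pow_mul_three_pow]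
    push_cast
    ring
  have hX : (2 : ℝ) ≤ 2 ^ x * 3 ^ y := by
    have hlt' : 2 ^ x₁ * 3 ^ y₁ < 2 ^ x * 3 ^ y := by exact_mod_cast hlt
    have hpos : 0 < 2 ^ x₁ * 3 ^ y₁ := by positivity
    exact_mod_cast (by omega : 2 ≤ 2 ^ x * 3 ^ y)
  set X : ℝ := 2 ^ x * 3 ^ y
  set Y : ℝ := 2 ^ x₁ * 3 ^ y₁
  have hY : 0 < Y := by positivity
  have hYX : log Y ≤ log X := log_le_log hY hlt.le
  have abs_sub_le {m m₁ : ℕ} (hm : (m : ℝ) ≤ 3 / 2 * log X) (hm₁ : (m₁ : ℝ) ≤ 3 / 2 * log Y) :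
      |((m - m₁ : ℤ) : ℝ)| ≤ 3 / 2 * log X := by
    push_cast
    exact abs_sub_le_of_nonneg_of_le m.cast_nonneg hm m₁.cast_nonneg (by linarith)
  have hmain := one_le_mul_log_two_add_mul_log_three (abs_sub_le hx.1 hx₁.1)
    (abs_sub_le hx.2 hx₁.2) (hlog ▸ log_pos ((one_lt_div hY).mpr hlt))
  rw [← hlog] at hmain
  have hlogX : 1 ≤ 3 / 2 * log X := by
    linarith [log_le_log zero_lt_two hX, log_two_gt_d9]
  have hM : 1 ≤ 10 ^ 189 * (3 / 2 * log X) ^ 57 :=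
    one_le_mul_of_one_le_of_one_le (by norm_num) (one_le_pow₀ hlogX)
  calc X ≤ 2 * (10 ^ 189 * (3 / 2 * log X) ^ 57) * (X - Y) :=
        le_two_mul_mul_sub_of_one_le_mul_log_div hY hlt hM hmain
    _ = 2 * 10 ^ 189 * (3 / 2) ^ 57 * log X ^ 57 * (X - Y) := by rw [mul_pow]; ring
    _ ≤ 10 ^ 200 * log X ^ 57 * (X - Y) := by
      have hlogX₀ : 0 ≤ log X := by linarith
      exact mul_le_mul_of_nonneg_right
        (mul_le_mul_of_nonneg_right (by norm_num) (pow_nonneg hlogX₀ 57)) (sub_nonneg.mpr hlt.le)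

theorem log_div_sub_le_log_log {x y x₁ y₁ : ℕ}
    (hlt : (2 : ℝ) ^ x₁ * 3 ^ y₁ < 2 ^ x * 3 ^ y) :
    log (2 ^ x * 3 ^ y / (2 ^ x * 3 ^ y - 2 ^ x₁ * 3 ^ y₁)) ≤
      200 * log 10 + 57 * log (log (2 ^ x * 3 ^ y)) := by
  have hgap := two_pow_mul_three_pow_le_mul_sub hlt
  have hsub := sub_pos.mpr hlt
  have hX : 1 < (2 : ℝ) ^ x * 3 ^ y :=
    (one_le_mul_of_one_le_of_one_le (one_le_pow₀ (by norm_num))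
      (one_le_pow₀ (by norm_num))).trans_lt hlt
  have hlogX := log_pos hX
  calc log (2 ^ x * 3 ^ y / (2 ^ x * 3 ^ y - 2 ^ x₁ * 3 ^ y₁))
      ≤ log (10 ^ 200 * log (2 ^ x * 3 ^ y) ^ 57) :=
        log_le_log (by positivity) ((div_le_iff₀ hsub).mpr hgap)
    _ = 200 * log 10 + 57 * log (log (2 ^ x * 3 ^ y)) := by
        rw [log_mul (by positivity) (by positivity), log_pow, log_pow]
        norm_num

end LinearForms

section Logarithms

open Real

theorem log_ten_mem_Ioo : log 10 ∈ Set.Ioo (2.3 : ℝ) 2.303 := by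
  rw [log_ten_eq]
  constructor <;> linarith [log_two_gt_d9, log_two_lt_d9, log_five_gt_d9, log_five_lt_d9]

theorem five_le_log_of_log_ten_le {L : ℝ} (hL : 80 * log 10 ≤ L) : 5 ≤ log L := by
  have hexp : exp 5 ≤ 149 :=
    calc exp 5 = exp 1 ^ 5 := by rw [← exp_nat_mul]; norm_num
      _ ≤ 2.7182818286 ^ 5 := by gcongr; exact exp_one_lt_d9.le
      _ ≤ 149 := by norm_num
  rw [le_log_iff_exp_le] <;> linarith [log_ten_mem_Ioo.1]

theorem lt_mul_log_sq_of_le_add_log {L U : ℝ} (hL : 5 ≤ log L) (hL₀ : 0 < L)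
    (hU : U ≤ 200 * log 10 + 57 * log (L + U)) : U < 60 * log L ^ 2 := by
  by_contra! hcon
  have hU_ge : 1500 ≤ U := by nlinarith
  have hL_ge : 2 ≤ L := by linarith [log_le_sub_one_of_pos hL₀]
  have hadd : log (L + U) ≤ log L + log U := by
    rw [← log_mul hL₀.ne' (by linarith)]
    exact log_le_log (by linarith) (by nlinarith)
  have hlogU : log U ≤ 3 * log 10 - 1 + U / 1000 := by
    have htangent := log_le_sub_one_of_pos (by linarith : 0 < U / 10 ^ 3)
    rw [log_div (by linarith) (by norm_num), log_pow] at htangent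
    norm_num at htangent
    linarith
  nlinarith [log_ten_mem_Ioo.2]

end Logarithms

theorem s_unit_gap_bound (Δ : ℤ) (hΔ : (10 : ℤ) ^ 80 < Δ) (x y x₁ y₁ : ℕ)
    (h : (2 : ℤ) ^ x * 3 ^ y - 2 ^ x₁ * 3 ^ y₁ = Δ) :
    (2 : ℝ) ^ x * 3 ^ y <
      (Δ : ℝ) * Real.log Δ ^ (60 * Real.log (Real.log Δ)) := by
  have hsub : (2 : ℝ) ^ x * 3 ^ y - 2 ^ x₁ * 3 ^ y₁ = Δ := by exact_mod_cast h
  have hΔ' : (10 : ℝ) ^ 80 < Δ := by exact_mod_cast hΔ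
  have hΔ₀ : (0 : ℝ) < Δ := lt_trans (by positivity) hΔ'
  have hL : 80 * Real.log 10 ≤ Real.log Δ := by
    simpa [Real.log_pow] using Real.log_le_log (by positivity) hΔ'.le
  have hL₀ : 0 < Real.log Δ := by linarith [log_ten_mem_Ioo.1]
  have hgap := log_div_sub_le_log_log (sub_pos.mp (hsub ▸ hΔ₀))
  rw [hsub] at hgap
  set X : ℝ := 2 ^ x * 3 ^ y
  have hX : 0 < X := by positivity
  have hlogX : Real.log X = Real.log Δ + Real.log (X / Δ) := by
    rw [Real.log_div hX.ne' hΔ₀.ne', add_sub_cancel]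
  have hratio := lt_mul_log_sq_of_le_add_log (five_le_log_of_log_ten_le hL) hL₀ (hlogX ▸ hgap)
  rw [Real.log_lt_iff_lt_exp (by positivity), div_lt_iff₀' hΔ₀] at hratio
  rwa [Real.rpow_def_of_pos hL₀, mul_left_comm, ← sq]
end
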